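/- arXiv:1503.06982 — 7 statements merged into one kernel-verified Lean document; each statement's English description precedes it below -/
import Mathlib

section
/- Let d1, d2 be natural numbers, n1 the number of monomials in one variable of degree at most d1, and n2 the number of monomials in two variables of total degree at most d2. Let Z1(x) denote the column vector of all monomials x^i with 0 ≤ i ≤ d1, and Z2(x,ξ) the column vector of all monomials x^i ξ^j with i + j ≤ d2. Let U be a symmetric real matrix of size (n1 + 2n2) × (n1 + 2n2) with blocks U11 (n1×n1), U12, U13 (n1×n2), U22, U23, U32, U33 (n2×n2), U21 = U12ᵀ, U31 = U13ᵀ, U23 = U32ᵀ, and suppose ε1 > 0 and U − diag(ε1·I_{n1}, 0, 0) is positive semidefinite. Define M(x) = Z1(x)ᵀ U11 Z1(x) and K1(x,ξ) = Z1(x)ᵀ U12 Z2(x,ξ) + Z2(ξ,x)ᵀ U31 Z1(ξ) + ∫₀^ξ Z2(η,x)ᵀ U33 Z2(η,ξ) dη + ∫_ξ^x Z2(η,x)ᵀ U32 Z2(η,ξ) dη + ∫_x^1 Z2(η,x)ᵀ U22 Z2(η,ξ) dη, and set K2(x,ξ) = K1(ξ,x). Then for every continuous function z : [0,1] → ℝ,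 the operator P defined by (Pz)(x) = M(x)z(x) + ∫₀^x K1(x,ξ)z(ξ)dξ + ∫_x^1 K2(x,ξ)z(ξ)dξ satisfies ∫₀¹ (Pz)(x) z(x) dx ≥ ε1 ∫₀¹ z(x)² dx. -/
open MeasureTheory

noncomputable section

/-- Column vector of all monomials `x^i` with `0 ≤ i ≤ d1`. -/
def Z1vec (d1 : ℕ) (x : ℝ) : Fin (d1 + 1) → ℝ := fun i => x ^ (i : ℕ)

/-- Index type for monomials `x^i ξ^j` with `i + j ≤ d2`. -/
def I2idx (d2 : ℕ) : Type :=
  {p : Fin (d2 + 1) × Fin (d2 + 1) // (p.1 : ℕ) + (p.2 : ℕ) ≤ d2}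

instance (d2 : ℕ) : Fintype (I2idx d2) := by unfold I2idx; infer_instance
instance (d2 : ℕ) : DecidableEq (I2idx d2) := by unfold I2idx; infer_instance

/-- Column vector of all monomials `x^i ξ^j` with `i + j ≤ d2`. -/
def Z2vec (d2 : ℕ) (x ξ : ℝ) : I2idx d2 → ℝ :=
  fun p => x ^ (p.1.1 : ℕ) * ξ ^ (p.1.2 : ℕ)

open intervalIntegral in
@[fun_prop]
lemma cont_pint {X : Type*} [TopologicalSpace X] [FirstCountableTopology X] (f : X → ℝ → ℝ)
    (a b : X → ℝ)
    (hf : Continuous (fun p : X × ℝ => f p.1 p.2)) (ha : Continuous a) (hb : Continuous b) :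
    Continuous (fun x => ∫ t in (a x)..(b x), f x t) := by
  have h1 : ∀ x, ∫ t in (a x)..(b x), f x t
      = (∫ t in (0:ℝ)..(b x), f x t) - ∫ t in (0:ℝ)..(a x), f x t := by
    intro x
    have hc : Continuous (f x) := by
      have := hf.comp (Continuous.prodMk_right x)
      exact this
    rw [integral_interval_sub_left] <;> exact hc.intervalIntegrable _ _
  simp_rw [h1]
  exact (continuous_parametric_intervalIntegral_of_continuous hf hb).sub
    (continuous_parametric_intervalIntegral_of_continuous hf ha)

lemma rect_swap (f : ℝ → ℝ → ℝ) (hf : Continuous (fun p : ℝ × ℝ => f p.1 p.2)) (a b c d : ℝ) :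
    ∫ x in a..b, ∫ y in c..d, f x y = ∫ y in c..d, ∫ x in a..b, f x y := by
  apply MeasureTheory.intervalIntegral_intervalIntegral_swap
  have : IntegrableOn (Function.uncurry f) (Set.uIcc a b ×ˢ Set.uIcc c d) :=
    ContinuousOn.integrableOn_compact (isCompact_uIcc.prod isCompact_uIcc)
      (Continuous.continuousOn hf)
  exact this.mono_set (Set.prod_mono Set.uIoc_subset_uIcc Set.uIoc_subset_uIcc)

lemma tri_swap (f : ℝ → ℝ → ℝ) (hf : Continuous (fun p : ℝ × ℝ => f p.1 p.2)) (a b : ℝ)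
    (hab : a ≤ b) :
    ∫ x in a..b, ∫ y in a..x, f x y = ∫ y in a..b, ∫ x in y..b, f x y := by
  have hm : MeasurableSet {p : ℝ × ℝ | p.2 ≤ p.1} :=
    measurableSet_le measurable_snd measurable_fst
  have key := MeasureTheory.intervalIntegral_intervalIntegral_swap
    (F := fun x y => Set.indicator {p : ℝ × ℝ | p.2 ≤ p.1} (fun p => f p.1 p.2) (x, y))
    (a := a) (b := b) (c := a) (d := b) (by
      have : IntegrableOn (fun p : ℝ × ℝ => f p.1 p.2) (Set.uIcc a b ×ˢ Set.uIcc a b) :=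
        ContinuousOn.integrableOn_compact (isCompact_uIcc.prod isCompact_uIcc)
          (Continuous.continuousOn hf)
      have h2 := this.mono_set (Set.prod_mono Set.uIoc_subset_uIcc Set.uIoc_subset_uIcc)
      exact Integrable.indicator h2 hm)
  have e1 : ∫ x in a..b, ∫ y in a..x, f x y = ∫ x in a..b, ∫ y in a..b,
      Set.indicator {p : ℝ × ℝ | p.2 ≤ p.1} (fun p => f p.1 p.2) (x, y) := by
    apply intervalIntegral.integral_congr
    intro x hx
    rw [Set.uIcc_of_le hab] at hx
    exact (intervalIntegral.integral_indicator (f := f x) hx).symm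
  have e2 : ∫ y in a..b, ∫ x in y..b, f x y = ∫ y in a..b, ∫ x in a..b,
      Set.indicator {p : ℝ × ℝ | p.2 ≤ p.1} (fun p => f p.1 p.2) (x, y) := by
    rw [intervalIntegral.integral_of_le hab, intervalIntegral.integral_of_le hab]
    apply setIntegral_congr_fun measurableSet_Ioc
    intro y hy
    show _ = ∫ x in a..b, Set.indicator (Set.Ici y) (fun x => f x y) x
    have hs : Set.Ioc a b ∩ Set.Ici y = Set.Icc y b := by
      ext t; simp only [Set.mem_inter_iff, Set.mem_Ioc, Set.mem_Ici, Set.mem_Icc]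
      constructor
      · rintro ⟨⟨_, h⟩, h'⟩; exact ⟨h', h⟩
      · rintro ⟨h, h'⟩; exact ⟨⟨hy.1.trans_le h, h'⟩, h⟩
    rw [intervalIntegral.integral_of_le hab, setIntegral_indicator measurableSet_Ici, hs,
      integral_Icc_eq_integral_Ioc, ← intervalIntegral.integral_of_le hy.2]
  rw [e1, e2, key]

/-- symmetric square = twice the triangle -/
lemma sym_sq (f : ℝ → ℝ → ℝ) (hf : Continuous (fun p : ℝ × ℝ => f p.1 p.2))
    (hs : ∀ x y, f x y = f y x) (a b : ℝ) (hab : a ≤ b) :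
    ∫ x in a..b, ∫ y in a..b, f x y = 2 * ∫ x in a..b, ∫ y in a..x, f x y := by
  have h1 : ∀ x, ∫ y in a..b, f x y = (∫ y in a..x, f x y) + ∫ y in x..b, f x y := by
    intro x
    have hc : Continuous (f x) := hf.comp (Continuous.prodMk_right x)
    rw [intervalIntegral.integral_add_adjacent_intervals] <;> exact hc.intervalIntegrable _ _
  simp_rw [h1]
  rw [intervalIntegral.integral_add]
  · have := tri_swap f hf a b hab
    rw [two_mul]; congr 1
    rw [this]
    simp_rw [fun x y => hs y x]
  · exact Continuous.intervalIntegrable (by fun_prop) _ _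
  · exact Continuous.intervalIntegrable (by fun_prop) _ _

lemma T33 (w : ℝ × ℝ × ℝ → ℝ) (hw : Continuous w) (hs : ∀ e x y, w (e, x, y) = w (e, y, x)) :
    2 * ∫ x in (0:ℝ)..1, ∫ y in (0:ℝ)..x, ∫ e in (0:ℝ)..y, w (e, x, y)
      = ∫ e in (0:ℝ)..1, ∫ x in e..1, ∫ y in e..1, w (e, x, y) := by
  have h1 : ∫ e in (0:ℝ)..1, ∫ x in e..1, ∫ y in e..1, w (e, x, y)
      = ∫ e in (0:ℝ)..1, 2 * ∫ x in e..1, ∫ y in e..x, w (e, x, y) := by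
    apply intervalIntegral.integral_congr
    intro e he
    rw [Set.uIcc_of_le zero_le_one] at he
    exact sym_sq (fun x y => w (e, x, y)) (by fun_prop) (hs e) e 1 he.2
  rw [h1, intervalIntegral.integral_const_mul]
  congr 1
  rw [← tri_swap (fun x e => ∫ y in e..x, w (e, x, y)) (by fun_prop) 0 1 zero_le_one]
  apply intervalIntegral.integral_congr
  intro x hx
  rw [Set.uIcc_of_le zero_le_one] at hx
  exact tri_swap (fun y e => w (e, x, y)) (by fun_prop) 0 x hx.1

lemma T22 (w : ℝ × ℝ × ℝ → ℝ) (hw : Continuous w) (hs : ∀ e x y, w (e, x, y) = w (e, y, x)) :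
    2 * ∫ x in (0:ℝ)..1, ∫ y in (0:ℝ)..x, ∫ e in x..(1:ℝ), w (e, x, y)
      = ∫ e in (0:ℝ)..1, ∫ x in (0:ℝ)..e, ∫ y in (0:ℝ)..e, w (e, x, y) := by
  have h1 : ∫ e in (0:ℝ)..1, ∫ x in (0:ℝ)..e, ∫ y in (0:ℝ)..e, w (e, x, y)
      = ∫ e in (0:ℝ)..1, 2 * ∫ x in (0:ℝ)..e, ∫ y in (0:ℝ)..x, w (e, x, y) := by
    apply intervalIntegral.integral_congr
    intro e he
    rw [Set.uIcc_of_le zero_le_one] at he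
    exact sym_sq (fun x y => w (e, x, y)) (by fun_prop) (hs e) 0 e he.1
  rw [h1, intervalIntegral.integral_const_mul]
  congr 1
  rw [tri_swap (fun e x => ∫ y in (0:ℝ)..x, w (e, x, y)) (by fun_prop) 0 1 zero_le_one]
  apply intervalIntegral.integral_congr
  intro x hx
  exact rect_swap (fun y e => w (e, x, y)) (by fun_prop) 0 x x 1

lemma T32 (w : ℝ × ℝ × ℝ → ℝ) (hw : Continuous w) :
    ∫ x in (0:ℝ)..1, ∫ y in (0:ℝ)..x, ∫ e in y..x, w (e, x, y)
      = ∫ e in (0:ℝ)..1, ∫ x in e..(1:ℝ), ∫ y in (0:ℝ)..e, w (e, x, y) := by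
  rw [← tri_swap (fun x e => ∫ y in (0:ℝ)..e, w (e, x, y)) (by fun_prop) 0 1 zero_le_one]
  apply intervalIntegral.integral_congr
  intro x hx
  rw [Set.uIcc_of_le zero_le_one] at hx
  exact (tri_swap (fun e y => w (e, x, y)) (by fun_prop) 0 x hx.1).symm

lemma core (m : ℝ → ℝ) (hm : Continuous m) (b12 b31 : ℝ × ℝ → ℝ) (h12 : Continuous b12)
    (h31 : Continuous b31) (w33 w32 w22 : ℝ × ℝ × ℝ → ℝ) (c33 : Continuous w33)
    (c32 : Continuous w32) (c22 : Continuous w22)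
    (s33 : ∀ e x y, w33 (e, x, y) = w33 (e, y, x))
    (s22 : ∀ e x y, w22 (e, x, y) = w22 (e, y, x))
    (k : ℝ → ℝ → ℝ) (hk : ∀ x y, k x y = b12 (x, y) + b31 (y, x)
      + (∫ e in (0:ℝ)..y, w33 (e, x, y)) + (∫ e in y..x, w32 (e, x, y))
      + ∫ e in x..(1:ℝ), w22 (e, x, y)) :
    ∫ x in (0:ℝ)..1, (m x + (∫ y in (0:ℝ)..x, k x y) + ∫ y in x..(1:ℝ), k y x)
    = ∫ e in (0:ℝ)..1, (m e + 2 * (∫ y in (0:ℝ)..e, b12 (e, y)) + 2 * (∫ x in e..(1:ℝ), b31 (e, x))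
      + (∫ x in e..(1:ℝ), ∫ y in e..(1:ℝ), w33 (e, x, y))
      + 2 * (∫ x in e..(1:ℝ), ∫ y in (0:ℝ)..e, w32 (e, x, y))
      + ∫ x in (0:ℝ)..e, ∫ y in (0:ℝ)..e, w22 (e, x, y)) := by
  have ck : Continuous (fun p : ℝ × ℝ => k p.1 p.2) := by
    simp_rw [hk]; fun_prop
  have ii : ∀ (f : ℝ → ℝ) (a b : ℝ), Continuous f → IntervalIntegrable f volume a b :=
    fun f a b h => h.intervalIntegrable a b
  have hsw := tri_swap k ck 0 1 zero_le_one
  rw [intervalIntegral.integral_add (ii _ _ _ (by fun_prop)) (ii _ _ _ (by fun_prop)),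
    intervalIntegral.integral_add (ii _ _ _ (by fun_prop)) (ii _ _ _ (by fun_prop)), ← hsw]
  have e1 : ∫ x in (0:ℝ)..1, ∫ y in (0:ℝ)..x, k x y =
      (∫ x in (0:ℝ)..1, ∫ y in (0:ℝ)..x, b12 (x, y))
      + (∫ x in (0:ℝ)..1, ∫ y in (0:ℝ)..x, b31 (y, x))
      + (∫ x in (0:ℝ)..1, ∫ y in (0:ℝ)..x, ∫ e in (0:ℝ)..y, w33 (e, x, y))
      + (∫ x in (0:ℝ)..1, ∫ y in (0:ℝ)..x, ∫ e in y..x, w32 (e, x, y))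
      + (∫ x in (0:ℝ)..1, ∫ y in (0:ℝ)..x, ∫ e in x..(1:ℝ), w22 (e, x, y)) := by
    simp_rw [hk]
    rw [← intervalIntegral.integral_add (ii _ _ _ (by fun_prop)) (ii _ _ _ (by fun_prop)),
      ← intervalIntegral.integral_add (ii _ _ _ (by fun_prop)) (ii _ _ _ (by fun_prop)),
      ← intervalIntegral.integral_add (ii _ _ _ (by fun_prop)) (ii _ _ _ (by fun_prop)),
      ← intervalIntegral.integral_add (ii _ _ _ (by fun_prop)) (ii _ _ _ (by fun_prop))]
    congr 1
    funext x
    rw [intervalIntegral.integral_add (ii _ _ _ (by fun_prop)) (ii _ _ _ (by fun_prop)),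
      intervalIntegral.integral_add (ii _ _ _ (by fun_prop)) (ii _ _ _ (by fun_prop)),
      intervalIntegral.integral_add (ii _ _ _ (by fun_prop)) (ii _ _ _ (by fun_prop)),
      intervalIntegral.integral_add (ii _ _ _ (by fun_prop)) (ii _ _ _ (by fun_prop))]
  have e2 := tri_swap (fun x y => b31 (y, x)) (by fun_prop) 0 1 zero_le_one
  have e3 := T33 w33 c33 s33
  have e4 := T32 w32 c32
  have e5 := T22 w22 c22 s22
  rw [intervalIntegral.integral_add (ii _ _ _ (by fun_prop)) (ii _ _ _ (by fun_prop)),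
      intervalIntegral.integral_add (ii _ _ _ (by fun_prop)) (ii _ _ _ (by fun_prop)),
      intervalIntegral.integral_add (ii _ _ _ (by fun_prop)) (ii _ _ _ (by fun_prop)),
      intervalIntegral.integral_add (ii _ _ _ (by fun_prop)) (ii _ _ _ (by fun_prop)),
      intervalIntegral.integral_add (ii _ _ _ (by fun_prop)) (ii _ _ _ (by fun_prop)),
      intervalIntegral.integral_const_mul, intervalIntegral.integral_const_mul,
      intervalIntegral.integral_const_mul, ← e3, ← e4, ← e5, ← e2, e1]
  ring

lemma bilin {ι κ : Type*} [Fintype ι] [Fintype κ] (f : ι → ℝ → ℝ) (g : κ → ℝ → ℝ)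
    (A : ι → κ → ℝ) (z : ℝ → ℝ) (hf : ∀ i, Continuous (f i)) (hg : ∀ i, Continuous (g i))
    (hz : Continuous z) (a b c d : ℝ) :
    ∫ x in a..b, ∫ y in c..d, (∑ i, ∑ j, f i x * A i j * g j y) * z x * z y
      = ∑ i, ∑ j, (∫ x in a..b, f i x * z x) * A i j * (∫ y in c..d, g j y * z y) := by
  have h1 : ∀ x, ∫ y in c..d, (∑ i, ∑ j, f i x * A i j * g j y) * z x * z y
      = ∑ i, ∑ j, (f i x * z x) * (A i j * (∫ y in c..d, g j y * z y)) := by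
    intro x
    have : ∀ y, (∑ i, ∑ j, f i x * A i j * g j y) * z x * z y
        = ∑ i, ∑ j, (f i x * z x * A i j) * (g j y * z y) := by
      intro y
      simp_rw [Finset.sum_mul]
      refine Finset.sum_congr rfl fun i _ => Finset.sum_congr rfl fun j _ => by ring
    simp_rw [this]
    rw [intervalIntegral.integral_finsetSum
      (fun i _ => Continuous.intervalIntegrable (by fun_prop) _ _)]
    refine Finset.sum_congr rfl fun i _ => ?_
    rw [intervalIntegral.integral_finsetSum
      (fun i _ => Continuous.intervalIntegrable (by fun_prop) _ _)]
    refine Finset.sum_congr rfl fun j _ => ?_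
    rw [intervalIntegral.integral_const_mul]; ring
  simp_rw [h1]
  rw [intervalIntegral.integral_finsetSum
      (fun i _ => Continuous.intervalIntegrable (by fun_prop) _ _)]
  refine Finset.sum_congr rfl fun i _ => ?_
  rw [intervalIntegral.integral_finsetSum
      (fun i _ => Continuous.intervalIntegrable (by fun_prop) _ _)]
  refine Finset.sum_congr rfl fun j _ => ?_
  rw [intervalIntegral.integral_mul_const]; ring

lemma bilin1 {ι κ : Type*} [Fintype ι] [Fintype κ] (f : ι → ℝ) (g : κ → ℝ → ℝ)
    (A : ι → κ → ℝ) (z : ℝ → ℝ) (hg : ∀ i, Continuous (g i))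
    (hz : Continuous z) (t c d : ℝ) :
    ∫ y in c..d, (∑ i, ∑ j, f i * A i j * g j y) * t * z y
      = ∑ i, ∑ j, (f i * t) * A i j * (∫ y in c..d, g j y * z y) := by
  have : ∀ y, (∑ i, ∑ j, f i * A i j * g j y) * t * z y
      = ∑ i, ∑ j, (f i * t * A i j) * (g j y * z y) := by
    intro y
    simp_rw [Finset.sum_mul]
    refine Finset.sum_congr rfl fun i _ => Finset.sum_congr rfl fun j _ => by ring
  simp_rw [this]
  rw [intervalIntegral.integral_finsetSum
    (fun i _ => Continuous.intervalIntegrable (by fun_prop) _ _)]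
  refine Finset.sum_congr rfl fun i _ => ?_
  rw [intervalIntegral.integral_finsetSum
    (fun i _ => Continuous.intervalIntegrable (by fun_prop) _ _)]
  refine Finset.sum_congr rfl fun j _ => ?_
  rw [intervalIntegral.integral_const_mul]

@[fun_prop]
lemma Z1c {X : Type*} [TopologicalSpace X] (d : ℕ) (i) (f : X → ℝ) (hf : Continuous f) :
    Continuous (fun x => Z1vec d (f x) i) := by unfold Z1vec; fun_prop

@[fun_prop]
lemma Z2c {X : Type*} [TopologicalSpace X] (d : ℕ) (i) (f g : X → ℝ) (hf : Continuous f)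
    (hg : Continuous g) :
    Continuous (fun x => Z2vec d (f x) (g x) i) := by unfold Z2vec; fun_prop

/-- The quadratic form inequality. -/
lemma quad (d1 d2 : ℕ) (ε1 : ℝ)
    (U : Matrix (Fin (d1 + 1) ⊕ I2idx d2 ⊕ I2idx d2)
                (Fin (d1 + 1) ⊕ I2idx d2 ⊕ I2idx d2) ℝ)
    (hUsymm : U.IsSymm)
    (D : Matrix (Fin (d1 + 1) ⊕ I2idx d2 ⊕ I2idx d2)
                (Fin (d1 + 1) ⊕ I2idx d2 ⊕ I2idx d2) ℝ)
    (hD : ∀ a b, D (Sum.inl a) (Sum.inl b) = if a = b then ε1 else 0)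
    (hD1 : ∀ a b, D (Sum.inl a) (Sum.inr b) = 0) (hD2 : ∀ a b, D (Sum.inr a) b = 0)
    (hUpsd : (U - D).PosSemidef)
    (u1 : Fin (d1 + 1) → ℝ) (u2 u3 : I2idx d2 → ℝ) :
    ε1 * ∑ i, u1 i ^ 2 ≤ (∑ i, ∑ j, u1 i * U (Sum.inl i) (Sum.inl j) * u1 j)
      + 2 * (∑ i, ∑ j, u1 i * U (Sum.inl i) (Sum.inr (Sum.inl j)) * u2 j)
      + 2 * (∑ i, ∑ j, u1 i * U (Sum.inr (Sum.inr j)) (Sum.inl i) * u3 j)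
      + (∑ i, ∑ j, u3 i * U (Sum.inr (Sum.inr i)) (Sum.inr (Sum.inr j)) * u3 j)
      + 2 * (∑ i, ∑ j, u3 i * U (Sum.inr (Sum.inr i)) (Sum.inr (Sum.inl j)) * u2 j)
      + (∑ i, ∑ j, u2 i * U (Sum.inr (Sum.inl i)) (Sum.inr (Sum.inl j)) * u2 j) := by
  have h := hUpsd.dotProduct_mulVec_nonneg (Sum.elim u1 (Sum.elim u2 u3))
  simp only [dotProduct, Matrix.mulVec, Fintype.sum_sum_type, Finset.mul_sum, mul_add,
    Finset.sum_add_distrib, Matrix.sub_apply, hD, hD1, hD2, Sum.elim_inl, Sum.elim_inr,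
    star_trivial, Pi.star_apply, Finset.sum_const_zero, add_zero, sub_mul, mul_sub, Finset.sum_sub_distrib, ite_mul,
    zero_mul, mul_ite, mul_zero, Finset.sum_ite_eq, Finset.mem_univ, if_true, ← mul_assoc] at h
  have a1 : (∑ i, ∑ j, u2 i * U (Sum.inr (Sum.inl i)) (Sum.inl j) * u1 j)
      = ∑ i, ∑ j, u1 i * U (Sum.inl i) (Sum.inr (Sum.inl j)) * u2 j := by
    rw [Finset.sum_comm]
    refine Finset.sum_congr rfl fun i _ => Finset.sum_congr rfl fun j _ => ?_
    rw [hUsymm.apply]; ring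
  have a2 : (∑ i, ∑ j, u3 i * U (Sum.inr (Sum.inr i)) (Sum.inl j) * u1 j)
      = ∑ i, ∑ j, u1 i * U (Sum.inr (Sum.inr j)) (Sum.inl i) * u3 j := by
    rw [Finset.sum_comm]
    refine Finset.sum_congr rfl fun i _ => Finset.sum_congr rfl fun j _ => ?_
    ring
  have a3 : (∑ i, ∑ j, u1 i * U (Sum.inl i) (Sum.inr (Sum.inr j)) * u3 j)
      = ∑ i, ∑ j, u1 i * U (Sum.inr (Sum.inr j)) (Sum.inl i) * u3 j := by
    refine Finset.sum_congr rfl fun i _ => Finset.sum_congr rfl fun j _ => ?_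
    rw [hUsymm.apply]
  have a4 : (∑ i, ∑ j, u2 i * U (Sum.inr (Sum.inl i)) (Sum.inr (Sum.inr j)) * u3 j)
      = ∑ i, ∑ j, u3 i * U (Sum.inr (Sum.inr i)) (Sum.inr (Sum.inl j)) * u2 j := by
    rw [Finset.sum_comm]
    refine Finset.sum_congr rfl fun i _ => Finset.sum_congr rfl fun j _ => ?_
    rw [hUsymm.apply]; ring
  have a5 : ε1 * ∑ i, u1 i ^ 2 = ∑ i, u1 i * ε1 * u1 i := by
    rw [Finset.mul_sum]
    refine Finset.sum_congr rfl fun i _ => ?_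
    ring
  rw [a1, a2, a3, a4] at h
  rw [a5]
  linarith

/-- If `U - diag(ε1 I, 0, 0) ⪰ 0` with `U` symmetric, then the semi-separable
kernel operator built from `M`, `K1`, `K2` as in Theorem 1 of the paper
satisfies `⟨P z, z⟩ ≥ ε1 ‖z‖²` for continuous `z`. -/
theorem semiseparable_operator_lower_bound
    (d1 d2 : ℕ) (ε1 : ℝ) (hε1 : 0 < ε1)
    (U : Matrix (Fin (d1 + 1) ⊕ I2idx d2 ⊕ I2idx d2)
                (Fin (d1 + 1) ⊕ I2idx d2 ⊕ I2idx d2) ℝ)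
    (hUsymm : U.IsSymm)
    (hUpsd : (U - Matrix.of (fun i j : Fin (d1 + 1) ⊕ I2idx d2 ⊕ I2idx d2 =>
        match i, j with
        | Sum.inl a, Sum.inl b => if a = b then ε1 else (0 : ℝ)
        | _, _ => (0 : ℝ))).PosSemidef)
    (M : ℝ → ℝ) (K1 K2 : ℝ → ℝ → ℝ)
    (hM : ∀ x : ℝ, M x = ∑ i, ∑ j,
        Z1vec d1 x i * U (Sum.inl i) (Sum.inl j) * Z1vec d1 x j)
    (hK1 : ∀ x ξ : ℝ, K1 x ξ =
        (∑ i, ∑ p, Z1vec d1 x i * U (Sum.inl i) (Sum.inr (Sum.inl p)) * Z2vec d2 x ξ p)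
      + (∑ p, ∑ i, Z2vec d2 ξ x p * U (Sum.inr (Sum.inr p)) (Sum.inl i) * Z1vec d1 ξ i)
      + (∫ η in (0:ℝ)..ξ, ∑ p, ∑ q,
          Z2vec d2 η x p * U (Sum.inr (Sum.inr p)) (Sum.inr (Sum.inr q)) * Z2vec d2 η ξ q)
      + (∫ η in ξ..x, ∑ p, ∑ q,
          Z2vec d2 η x p * U (Sum.inr (Sum.inr p)) (Sum.inr (Sum.inl q)) * Z2vec d2 η ξ q)
      + (∫ η in x..(1:ℝ), ∑ p, ∑ q,
          Z2vec d2 η x p * U (Sum.inr (Sum.inl p)) (Sum.inr (Sum.inl q)) * Z2vec d2 η ξ q))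
    (hK2 : ∀ x ξ : ℝ, K2 x ξ = K1 ξ x)
    (z : ℝ → ℝ) (hz : Continuous z) :
    ε1 * (∫ x in (0:ℝ)..1, (z x) ^ 2) ≤
      ∫ x in (0:ℝ)..1,
        (M x * z x + (∫ ξ in (0:ℝ)..x, K1 x ξ * z ξ)
          + ∫ ξ in x..(1:ℝ), K2 x ξ * z ξ) * z x := by
  have ii : ∀ (f : ℝ → ℝ) (a b : ℝ), Continuous f → IntervalIntegrable f volume a b :=
    fun f a b h => h.intervalIntegrable a b
  have hMc : Continuous M := by
    rw [funext hM]; fun_prop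
  have symq : ∀ (A : I2idx d2 → I2idx d2 → ℝ), (∀ i j, A i j = A j i) → ∀ e x y,
      (∑ p, ∑ q, Z2vec d2 e x p * A p q * Z2vec d2 e y q) * z x * z y
      = (∑ p, ∑ q, Z2vec d2 e y p * A p q * Z2vec d2 e x q) * z y * z x := by
    intro A hA e x y
    rw [Finset.sum_comm, mul_assoc, mul_assoc, mul_comm (z x)]
    congr 1
    refine Finset.sum_congr rfl fun i _ => Finset.sum_congr rfl fun j _ => ?_
    rw [hA]; ring
  have hcore := core (fun x => M x * z x ^ 2) (by fun_prop)
    (fun v => (∑ i, ∑ p, Z1vec d1 v.1 i * U (Sum.inl i) (Sum.inr (Sum.inl p))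
      * Z2vec d2 v.1 v.2 p) * z v.1 * z v.2)
    (fun v => (∑ i, ∑ p, Z1vec d1 v.1 i * U (Sum.inr (Sum.inr p)) (Sum.inl i)
      * Z2vec d2 v.1 v.2 p) * z v.1 * z v.2) (by fun_prop) (by fun_prop)
    (fun v => (∑ p, ∑ q, Z2vec d2 v.1 v.2.1 p * U (Sum.inr (Sum.inr p)) (Sum.inr (Sum.inr q))
      * Z2vec d2 v.1 v.2.2 q) * z v.2.1 * z v.2.2)
    (fun v => (∑ p, ∑ q, Z2vec d2 v.1 v.2.1 p * U (Sum.inr (Sum.inr p)) (Sum.inr (Sum.inl q))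
      * Z2vec d2 v.1 v.2.2 q) * z v.2.1 * z v.2.2)
    (fun v => (∑ p, ∑ q, Z2vec d2 v.1 v.2.1 p * U (Sum.inr (Sum.inl p)) (Sum.inr (Sum.inl q))
      * Z2vec d2 v.1 v.2.2 q) * z v.2.1 * z v.2.2)
    (by fun_prop) (by fun_prop) (by fun_prop)
    (symq _ fun i j => hUsymm.apply _ _) (symq _ fun i j => hUsymm.apply _ _)
    (fun x y => K1 x y * z x * z y) (by
      intro x y
      simp only [hK1, intervalIntegral.integral_mul_const, add_mul]
      congr 3
      congr 1
      rw [Finset.sum_comm, mul_assoc, mul_assoc, mul_comm (z x)]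
      congr 1
      refine Finset.sum_congr rfl fun i _ => Finset.sum_congr rfl fun j _ => ?_
      ring)
  have hlhs : ∫ x in (0:ℝ)..1,
        (M x * z x + (∫ ξ in (0:ℝ)..x, K1 x ξ * z ξ)
          + ∫ ξ in x..(1:ℝ), K2 x ξ * z ξ) * z x
      = ∫ x in (0:ℝ)..1, (M x * z x ^ 2 + (∫ y in (0:ℝ)..x, K1 x y * z x * z y)
          + ∫ y in x..(1:ℝ), K1 y x * z y * z x) := by
    congr 1
    funext x
    rw [add_mul, add_mul, ← intervalIntegral.integral_mul_const,
      ← intervalIntegral.integral_mul_const]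
    congr 1
    · congr 1
      · ring
      · congr 1; funext y; ring
    · congr 1; funext y; rw [hK2]
  rw [hlhs, hcore, ← intervalIntegral.integral_const_mul]
  apply intervalIntegral.integral_mono_on zero_le_one (ii _ _ _ (by fun_prop))
    (ii _ _ _ (by fun_prop))
  intro e _
  have q := quad d1 d2 ε1 U hUsymm _ (fun _ _ => rfl) (fun _ _ => rfl)
    (fun _ _ => rfl) hUpsd (fun i => Z1vec d1 e i * z e)
    (fun p => ∫ y in (0:ℝ)..e, Z2vec d2 e y p * z y)
    (fun p => ∫ y in e..(1:ℝ), Z2vec d2 e y p * z y)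
  have hb : ∀ (A : I2idx d2 → I2idx d2 → ℝ) (a b c d : ℝ), _ := fun A a b c d =>
    bilin (fun p x => Z2vec d2 e x p) (fun p x => Z2vec d2 e x p) A z
    (by intro i; fun_prop) (by intro i; fun_prop) hz a b c d
  have hb1 : ∀ (A : Fin (d1 + 1) → I2idx d2 → ℝ) (c d : ℝ), _ := fun A c d =>
    bilin1 (Z1vec d1 e) (fun p x => Z2vec d2 e x p) A z
    (by intro i; fun_prop) hz (z e) c d
  have hm1 : M e * z e ^ 2 = ∑ i, ∑ j, (Z1vec d1 e i * z e) * U (Sum.inl i) (Sum.inl j)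
      * (Z1vec d1 e j * z e) := by
    rw [hM]
    simp_rw [Finset.sum_mul]
    refine Finset.sum_congr rfl fun i _ => Finset.sum_congr rfl fun j _ => ?_
    ring
  have h0 : z e ^ 2 ≤ ∑ i, (Z1vec d1 e i * z e) ^ 2 := by
    have := Finset.single_le_sum (f := fun i => (Z1vec d1 e i * z e) ^ 2)
      (fun i _ => sq_nonneg _) (Finset.mem_univ (0 : Fin (d1 + 1)))
    simpa [Z1vec] using this
  have h0' := mul_le_mul_of_nonneg_left h0 hε1.le
  refine h0'.trans (q.trans (le_of_eq ?_))
  simp only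
  rw [hm1]
  congr 1
  · congr 1
    · congr 1
      · congr 1
        · congr 2
          exact (hb1 (fun i p => U (Sum.inl i) (Sum.inr (Sum.inl p))) 0 e).symm
        · congr 1
          exact (hb1 (fun i p => U (Sum.inr (Sum.inr p)) (Sum.inl i)) e 1).symm
      · exact (hb (fun p q => U (Sum.inr (Sum.inr p)) (Sum.inr (Sum.inr q))) e 1 e 1).symm
    · congr 1
      exact (hb (fun p q => U (Sum.inr (Sum.inr p)) (Sum.inr (Sum.inl q))) e 1 0 e).symm
  · exact (hb (fun p q => U (Sum.inr (Sum.inl p)) (Sum.inr (Sum.inl q))) 0 e 0 e).symm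

end
end

section
/- Let d1, d2 be natural numbers, Z1(x) the column vector of all monomials x^i with 0 ≤ i ≤ d1, and Z2(x,ξ) the column vector of all monomials x^i ξ^j with i + j ≤ d2. Let U be a symmetric positive semidefinite real matrix with blocks U11, U12, U13, U22, U23, U32, U33 (with U21 = U12ᵀ, U31 = U13ᵀ, U23 = U32ᵀ), and define M(x) = Z1(x)ᵀ U11 Z1(x), K1(x,ξ) = Z1(x)ᵀ U12 Z2(x,ξ) + Z2(ξ,x)ᵀ U31 Z1(ξ) + ∫₀^ξ Z2(η,x)ᵀ U33 Z2(η,ξ) dη + ∫_ξ^x Z2(η,x)ᵀ U32 Z2(η,ξ) dη + ∫_x^1 Z2(η,x)ᵀ U22 Z2(η,ξ) dη, and K2(x,ξ) = K1(ξ,x). Set θ1 = sup over x ∈ [0,1] of Z1(x)ᵀZ1(x), θ2 = sup over (x,ξ) ∈ [0,1]² of |∫₀^ξ Z2(η,x)ᵀZ2(η,ξ)dη + ∫_x^1 Z2(η,x)ᵀZ2(η,ξ)dη|, and let λmax(U) be the largest eigenvalue of U. Then for every continuous z : [0,1] → ℝ, the operator P defined by (Pz)(x) = M(x)z(x) + ∫₀^x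 K1(x,ξ)z(ξ)dξ + ∫_x^1 K2(x,ξ)z(ξ)dξ satisfies ∫₀¹ (Pz)(x) z(x) dx ≤ (θ1 + θ2)·λmax(U)·∫₀¹ z(x)² dx. -/
open MeasureTheory

noncomputable section

section helpers
open intervalIntegral

lemma aux_cpi {X : Type*} [TopologicalSpace X] {f : X → ℝ → ℝ}
    (hf : Continuous fun p : X × ℝ => f p.1 p.2) {a b : X → ℝ}
    (ha : Continuous a) (hb : Continuous b) :
    Continuous fun x => ∫ t in (a x)..(b x), f x t := by
  have h : ∀ x, ∫ t in (a x)..(b x), f x t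
      = (∫ t in (0:ℝ)..(b x), f x t) - ∫ t in (0:ℝ)..(a x), f x t := by
    intro x
    have hc : Continuous (f x) := hf.comp (Continuous.prodMk_right x)
    rw [integral_interval_sub_left (hc.intervalIntegrable _ _) (hc.intervalIntegrable _ _)]
  simp_rw [h]
  exact (continuous_parametric_intervalIntegral_of_continuous hf hb).sub
    (continuous_parametric_intervalIntegral_of_continuous hf ha)

lemma aux_rect {f : ℝ → ℝ → ℝ} (hf : Continuous fun p : ℝ × ℝ => f p.1 p.2) (a b c d : ℝ) :
    ∫ x in a..b, ∫ y in c..d, f x y = ∫ y in c..d, ∫ x in a..b, f x y := by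
  apply intervalIntegral_intervalIntegral_swap
  have : IntegrableOn f.uncurry (Set.uIcc a b ×ˢ Set.uIcc c d) :=
    ContinuousOn.integrableOn_compact (isCompact_uIcc.prod isCompact_uIcc) hf.continuousOn
  exact this.mono_set (Set.prod_mono Set.uIoc_subset_uIcc Set.uIoc_subset_uIcc)

lemma aux_tri {f : ℝ → ℝ → ℝ} (hf : Continuous fun p : ℝ × ℝ => f p.1 p.2) {a b : ℝ}
    (hab : a ≤ b) :
    ∫ x in a..b, ∫ y in a..x, f x y = ∫ y in a..b, ∫ x in y..b, f x y := by
  have hI : IntegrableOn f.uncurry (Set.Icc a b ×ˢ Set.Icc a b) :=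
    ContinuousOn.integrableOn_compact (isCompact_Icc.prod isCompact_Icc) hf.continuousOn
  have hI2 : IntegrableOn f.uncurry (Set.Ioc a b ×ˢ Set.Ioc a b) :=
    hI.mono_set (Set.prod_mono Set.Ioc_subset_Icc_self Set.Ioc_subset_Icc_self)
  have hS : MeasurableSet {p : ℝ × ℝ | p.2 ≤ p.1} := measurableSet_le measurable_snd measurable_fst
  have hI3 := Integrable.indicator (μ := volume.restrict (Set.Ioc a b ×ˢ Set.Ioc a b)) hI2 hS
  have hI4 : Integrable (Function.uncurry fun x y => Set.indicator {p : ℝ × ℝ | p.2 ≤ p.1} f.uncurry (x, y))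
      ((volume.restrict (Set.Ioc a b)).prod (volume.restrict (Set.Ioc a b))) := by
    rw [Measure.prod_restrict]
    exact hI3
  have key := integral_integral_swap hI4
  rw [integral_of_le hab, integral_of_le hab]
  convert key using 1
  · apply setIntegral_congr_fun measurableSet_Ioc
    intro x hx
    have : (fun y => Set.indicator {p : ℝ × ℝ | p.2 ≤ p.1} f.uncurry (x, y))
      = Set.indicator (Set.Iic x) (f x) := by
      ext y; simp [Set.indicator, Function.uncurry]
    simp only [this]
    rw [setIntegral_indicator measurableSet_Iic, integral_of_le hx.1.le]
    congr 2
    ext y; simp only [Set.mem_Ioc, Set.mem_inter_iff, Set.mem_Iic]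
    exact ⟨fun h => ⟨⟨h.1, h.2.trans hx.2⟩, h.2⟩, fun h => ⟨h.1.1, h.2⟩⟩
  · apply setIntegral_congr_fun measurableSet_Ioc
    intro y hy
    have : (fun x => Set.indicator {p : ℝ × ℝ | p.2 ≤ p.1} f.uncurry (x, y))
      = Set.indicator (Set.Ici y) (fun x => f x y) := by
      ext x; simp [Set.indicator, Function.uncurry]
    simp only [this]
    rw [setIntegral_indicator measurableSet_Ici, integral_of_le hy.2, ← integral_Icc_eq_integral_Ioc]
    congr 2
    ext x; simp only [Set.mem_Ioc, Set.mem_Icc, Set.mem_inter_iff, Set.mem_Ici]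
    exact ⟨fun h => ⟨⟨hy.1.trans_le h.1, h.2⟩, h.1⟩, fun h => ⟨h.2, h.1.2⟩⟩

/-- symmetric kernel: square is twice the triangle -/
lemma aux_sym {f : ℝ → ℝ → ℝ} (hf : Continuous fun p : ℝ × ℝ => f p.1 p.2) {a b : ℝ}
    (hab : a ≤ b) (hs : ∀ x y, f x y = f y x) :
    ∫ x in a..b, ∫ y in a..b, f x y = 2 * ∫ x in a..b, ∫ y in a..x, f x y := by
  have hc : ∀ x, Continuous (f x) := fun x => hf.comp (Continuous.prodMk_right x)
  have h : ∀ x, ∫ y in a..b, f x y = (∫ y in a..x, f x y) + ∫ y in x..b, f x y := by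
    intro x
    rw [integral_add_adjacent_intervals ((hc x).intervalIntegrable _ _)
      ((hc x).intervalIntegrable _ _)]
  simp_rw [h]
  rw [intervalIntegral.integral_add, two_mul]
  · congr 1
    rw [aux_tri hf hab]
    simp_rw [hs]
  · exact (aux_cpi hf continuous_const continuous_id).intervalIntegrable _ _
  · exact (aux_cpi hf continuous_id continuous_const).intervalIntegrable _ _

lemma aux_bil {ι κ : Type*} [Fintype ι] [Fintype κ] (U : ι → κ → ℝ) {A : ι → ℝ → ℝ}
    {B : κ → ℝ → ℝ} (hA : ∀ i, Continuous (A i)) (hB : ∀ i, Continuous (B i)) (a b c d : ℝ) :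
    ∑ i, ∑ j, (∫ x in a..b, A i x) * U i j * (∫ y in c..d, B j y)
      = ∫ x in a..b, ∫ y in c..d, ∑ i, ∑ j, A i x * U i j * B j y := by
  have h1 : ∀ x, ∫ y in c..d, ∑ i, ∑ j, A i x * U i j * B j y
      = ∑ i, ∑ j, A i x * U i j * ∫ y in c..d, B j y := by
    intro x
    rw [intervalIntegral.integral_finsetSum]
    · refine Finset.sum_congr rfl fun i _ => ?_
      rw [intervalIntegral.integral_finsetSum]
      · simp_rw [intervalIntegral.integral_const_mul]
      · intro j _
        exact ((hB j).const_mul _).intervalIntegrable _ _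
    · intro i _
      exact (continuous_finsetSum _ fun j _ => (hB j).const_mul _).intervalIntegrable _ _
  simp_rw [h1]
  rw [intervalIntegral.integral_finsetSum]
  · refine Finset.sum_congr rfl fun i _ => ?_
    rw [intervalIntegral.integral_finsetSum]
    · simp_rw [intervalIntegral.integral_mul_const]
    · intro j _
      exact (((hA i).mul_const _).mul_const _).intervalIntegrable _ _
  · intro i _
    exact (continuous_finsetSum _ fun j _ => ((hA i).mul_const _).mul_const _).intervalIntegrable _ _

lemma aux_ray {n : Type*} [Fintype n] [DecidableEq n] (U : Matrix n n ℝ) (hU : U.IsHermitian)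
    (w : n → ℝ) :
    ∑ i, ∑ j, w i * U i j * w j ≤ (⨆ i, hU.eigenvalues i) * ∑ i, w i * w i := by
  set lam := ⨆ i, hU.eigenvalues i with hlam
  have hH : (algebraMap ℝ (Matrix n n ℝ) lam - U).IsHermitian := by
    refine Matrix.IsHermitian.sub ?_ hU
    rw [Matrix.algebraMap_eq_diagonal]
    exact Matrix.isHermitian_diagonal _
  have hP : (algebraMap ℝ (Matrix n n ℝ) lam - U).PosSemidef := by
    rw [hH.posSemidef_iff_eigenvalues_nonneg]
    intro i
    have := hH.eigenvalues_mem_spectrum_real i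
    rw [← spectrum.singleton_sub_eq, hU.spectrum_real_eq_range_eigenvalues] at this
    obtain ⟨a, ha, b, ⟨j, rfl⟩, h⟩ := Set.mem_sub.1 this
    rw [Set.mem_singleton_iff] at ha
    have hle : hU.eigenvalues j ≤ lam := le_ciSup (Set.finite_range _).bddAbove j
    simp only [Pi.zero_apply]
    rw [← h, ha]
    linarith
  have h := hP.re_dotProduct_nonneg w
  simp only [Matrix.sub_mulVec, dotProduct_sub, Matrix.algebraMap_eq_diagonal] at h
  simp only [star_trivial, map_sub, RCLike.re_to_real] at h
  have e1 : w ⬝ᵥ U.mulVec w = ∑ i, ∑ j, w i * U i j * w j := by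
    simp [dotProduct, Matrix.mulVec, Finset.mul_sum, mul_assoc]
  have e2 : w ⬝ᵥ (Matrix.diagonal ((algebraMap ℝ (n → ℝ)) lam)).mulVec w = lam * ∑ i, w i * w i := by
    simp only [dotProduct, Matrix.mulVec_diagonal, Finset.mul_sum]
    refine Finset.sum_congr rfl fun i _ => ?_
    simp
    ring
  linarith


lemma aux_c3 {X : Type*} [TopologicalSpace X] {g : ℝ → ℝ → ℝ → ℝ}
    (hg : Continuous fun p : ℝ × ℝ × ℝ => g p.1 p.2.1 p.2.2) {a b c : X → ℝ}
    (ha : Continuous a) (hb : Continuous b) (hc : Continuous c) :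
    Continuous fun x => g (a x) (b x) (c x) :=
  hg.comp (ha.prodMk (hb.prodMk hc))

lemma aux_c2 {X : Type*} [TopologicalSpace X] {g : ℝ → ℝ → ℝ}
    (hg : Continuous fun p : ℝ × ℝ => g p.1 p.2) {a b : X → ℝ}
    (ha : Continuous a) (hb : Continuous b) :
    Continuous fun x => g (a x) (b x) :=
  hg.comp (ha.prodMk hb)

lemma aux_t3 {g : ℝ → ℝ → ℝ → ℝ} (hg : Continuous fun p : ℝ × ℝ × ℝ => g p.1 p.2.1 p.2.2) :
    ∫ x in (0:ℝ)..1, ∫ ξ in (0:ℝ)..x, ∫ η in (0:ℝ)..ξ, g η x ξ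
      = ∫ η in (0:ℝ)..1, ∫ x in η..1, ∫ ξ in η..x, g η x ξ := by
  rw [← aux_tri (f := fun x η => ∫ ξ in η..x, g η x ξ) _ zero_le_one]
  · refine integral_congr fun x hx => ?_
    rw [Set.uIcc_of_le zero_le_one] at hx
    exact aux_tri (f := fun ξ η => g η x ξ)
      (aux_c3 hg (by fun_prop) (by fun_prop) (by fun_prop)) hx.1
  · exact aux_cpi (X := ℝ × ℝ) (f := fun p ξ => g p.2 p.1 ξ) (a := fun p => p.2)
      (b := fun p => p.1) (aux_c3 hg (by fun_prop) (by fun_prop) (by fun_prop))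
      (by fun_prop) (by fun_prop)

lemma aux_t4 {g : ℝ → ℝ → ℝ → ℝ} (hg : Continuous fun p : ℝ × ℝ × ℝ => g p.1 p.2.1 p.2.2) :
    ∫ x in (0:ℝ)..1, ∫ ξ in (0:ℝ)..x, ∫ η in ξ..x, g η x ξ
      = ∫ η in (0:ℝ)..1, ∫ x in η..1, ∫ ξ in (0:ℝ)..η, g η x ξ := by
  rw [← aux_tri (f := fun x η => ∫ ξ in (0:ℝ)..η, g η x ξ) _ zero_le_one]
  · refine integral_congr fun x hx => ?_
    rw [Set.uIcc_of_le zero_le_one] at hx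
    exact (aux_tri (f := fun η ξ => g η x ξ)
      (aux_c3 hg (by fun_prop) (by fun_prop) (by fun_prop)) hx.1).symm
  · exact aux_cpi (X := ℝ × ℝ) (f := fun p ξ => g p.2 p.1 ξ) (a := fun p => 0)
      (b := fun p => p.2) (aux_c3 hg (by fun_prop) (by fun_prop) (by fun_prop))
      (by fun_prop) (by fun_prop)

lemma aux_t5 {g : ℝ → ℝ → ℝ → ℝ} (hg : Continuous fun p : ℝ × ℝ × ℝ => g p.1 p.2.1 p.2.2) :
    ∫ x in (0:ℝ)..1, ∫ ξ in (0:ℝ)..x, ∫ η in x..1, g η x ξ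
      = ∫ η in (0:ℝ)..1, ∫ x in (0:ℝ)..η, ∫ ξ in (0:ℝ)..x, g η x ξ := by
  rw [aux_tri (f := fun η x => ∫ ξ in (0:ℝ)..x, g η x ξ) _ zero_le_one]
  · refine integral_congr fun x hx => ?_
    exact aux_rect (f := fun ξ η => g η x ξ)
      (aux_c3 hg (by fun_prop) (by fun_prop) (by fun_prop)) _ _ _ _
  · exact aux_cpi (X := ℝ × ℝ) (f := fun p ξ => g p.1 p.2 ξ) (a := fun p => 0)
      (b := fun p => p.2) (aux_c3 hg (by fun_prop) (by fun_prop) (by fun_prop))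
      (by fun_prop) (by fun_prop)

/-- the stacked vector -/
def auxW {ι κ : Type*} (A : ι → ℝ → ℝ) (B : κ → ℝ → ℝ → ℝ) (η : ℝ) : ι ⊕ κ ⊕ κ → ℝ :=
  Sum.elim (fun i => A i η) (Sum.elim (fun p => ∫ x in (0:ℝ)..η, B p η x)
    (fun p => ∫ x in η..1, B p η x))

/-- the kernel, with `z` absorbed -/
def auxK {ι κ : Type*} [Fintype ι] [Fintype κ] (U : Matrix (ι ⊕ κ ⊕ κ) (ι ⊕ κ ⊕ κ) ℝ)
    (A : ι → ℝ → ℝ) (B : κ → ℝ → ℝ → ℝ) (x ξ : ℝ) : ℝ :=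
    (∑ i, ∑ p, A i x * U (Sum.inl i) (Sum.inr (Sum.inl p)) * B p x ξ)
      + (∑ p, ∑ i, B p ξ x * U (Sum.inr (Sum.inr p)) (Sum.inl i) * A i ξ)
      + (∫ η in (0:ℝ)..ξ, ∑ p, ∑ q,
          B p η x * U (Sum.inr (Sum.inr p)) (Sum.inr (Sum.inr q)) * B q η ξ)
      + (∫ η in ξ..x, ∑ p, ∑ q,
          B p η x * U (Sum.inr (Sum.inr p)) (Sum.inr (Sum.inl q)) * B q η ξ)
      + (∫ η in x..(1:ℝ), ∑ p, ∑ q,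
          B p η x * U (Sum.inr (Sum.inl p)) (Sum.inr (Sum.inl q)) * B q η ξ)

lemma aux_g {κ κ' : Type*} [Fintype κ] [Fintype κ'] (U : κ → κ' → ℝ)
    {B : κ → ℝ → ℝ → ℝ} {B' : κ' → ℝ → ℝ → ℝ}
    (hB : ∀ p, Continuous fun q : ℝ × ℝ => B p q.1 q.2)
    (hB' : ∀ p, Continuous fun q : ℝ × ℝ => B' p q.1 q.2) :
    Continuous fun t : ℝ × ℝ × ℝ => ∑ p, ∑ q, B p t.1 t.2.1 * U p q * B' q t.1 t.2.2 := by
  refine continuous_finsetSum _ fun p _ => continuous_finsetSum _ fun q _ => ?_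
  exact ((aux_c2 (hB p) (by fun_prop) (by fun_prop)).mul_const _).mul
    (aux_c2 (hB' q) (by fun_prop) (by fun_prop))

lemma aux_W_cont {ι κ : Type*} {A : ι → ℝ → ℝ} {B : κ → ℝ → ℝ → ℝ} (hA : ∀ i, Continuous (A i))
    (hB : ∀ p, Continuous fun q : ℝ × ℝ => B p q.1 q.2) (s : ι ⊕ κ ⊕ κ) :
    Continuous fun η => auxW A B η s := by
  rcases s with i | p | p
  · exact hA i
  · exact aux_cpi (hB p) continuous_const continuous_id
  · exact aux_cpi (hB p) continuous_id continuous_const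

section main
variable {ι κ : Type*} [Fintype ι] [Fintype κ] (U : Matrix (ι ⊕ κ ⊕ κ) (ι ⊕ κ ⊕ κ) ℝ)
    {A : ι → ℝ → ℝ} {B : κ → ℝ → ℝ → ℝ}

lemma aux_k1_cont (hA : ∀ i, Continuous (A i))
    (hB : ∀ p, Continuous fun q : ℝ × ℝ => B p q.1 q.2) (V : ι → κ → ℝ) :
    Continuous fun t : ℝ × ℝ => ∑ i, ∑ p, A i t.1 * V i p * B p t.1 t.2 := by
  refine continuous_finsetSum _ fun i _ => continuous_finsetSum _ fun p _ => ?_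
  exact (((hA i).comp continuous_fst).mul_const _).mul (hB p)

lemma aux_k2_cont (hA : ∀ i, Continuous (A i))
    (hB : ∀ p, Continuous fun q : ℝ × ℝ => B p q.1 q.2) (V : κ → ι → ℝ) :
    Continuous fun t : ℝ × ℝ => ∑ p, ∑ i, B p t.2 t.1 * V p i * A i t.2 := by
  refine continuous_finsetSum _ fun p _ => continuous_finsetSum _ fun i _ => ?_
  exact ((aux_c2 (hB p) (by fun_prop) (by fun_prop)).mul_const _).mul
    ((hA i).comp continuous_snd)

lemma aux_k3_cont {g : ℝ → ℝ → ℝ → ℝ} (hg : Continuous fun p : ℝ × ℝ × ℝ => g p.1 p.2.1 p.2.2)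
    {a b : ℝ × ℝ → ℝ} (ha : Continuous a) (hb : Continuous b) :
    Continuous fun t : ℝ × ℝ => ∫ η in (a t)..(b t), g η t.1 t.2 :=
  aux_cpi (f := fun t η => g η t.1 t.2)
    (aux_c3 hg (by fun_prop) (by fun_prop) (by fun_prop)) ha hb

lemma aux_K_cont (hA : ∀ i, Continuous (A i))
    (hB : ∀ p, Continuous fun q : ℝ × ℝ => B p q.1 q.2) :
    Continuous fun t : ℝ × ℝ => auxK U A B t.1 t.2 := by
  unfold auxK
  refine ((((aux_k1_cont hA hB _).add (aux_k2_cont hA hB _)).add ?_).add ?_).add ?_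
  · exact aux_k3_cont (g := fun η x ξ => ∑ p, ∑ q,
          B p η x * U (Sum.inr (Sum.inr p)) (Sum.inr (Sum.inr q)) * B q η ξ)
      (a := fun t => 0) (b := fun t => t.2) (aux_g _ hB hB)
      (by fun_prop) (by fun_prop)
  · exact aux_k3_cont (g := fun η x ξ => ∑ p, ∑ q,
          B p η x * U (Sum.inr (Sum.inr p)) (Sum.inr (Sum.inl q)) * B q η ξ)
      (a := fun t => t.2) (b := fun t => t.1) (aux_g _ hB hB)
      (by fun_prop) (by fun_prop)
  · exact aux_k3_cont (g := fun η x ξ => ∑ p, ∑ q,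
          B p η x * U (Sum.inr (Sum.inl p)) (Sum.inr (Sum.inl q)) * B q η ξ)
      (a := fun t => t.1) (b := fun t => 1) (aux_g _ hB hB)
      (by fun_prop) (by fun_prop)

lemma aux_add5 {f1 f2 f3 f4 f5 : ℝ → ℝ} (h1 : Continuous f1) (h2 : Continuous f2)
    (h3 : Continuous f3) (h4 : Continuous f4) (h5 : Continuous f5) (a b : ℝ) :
    ∫ x in a..b, (f1 x + f2 x + f3 x + f4 x + f5 x) = (∫ x in a..b, f1 x) + (∫ x in a..b, f2 x)
      + (∫ x in a..b, f3 x) + (∫ x in a..b, f4 x) + (∫ x in a..b, f5 x) := by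
  rw [intervalIntegral.integral_add, intervalIntegral.integral_add, intervalIntegral.integral_add,
    intervalIntegral.integral_add]
  all_goals exact Continuous.intervalIntegrable (by fun_prop) _ _

lemma aux_sw {α β : Type*} [Fintype α] [Fintype β] (a : α → ℝ) (b : β → ℝ) (V : α → β → ℝ)
    (V' : β → α → ℝ) (h : ∀ i j, V i j = V' j i) :
    ∑ i, ∑ j, a i * V i j * b j = ∑ j, ∑ i, b j * V' j i * a i := by
  rw [Finset.sum_comm]
  refine Finset.sum_congr rfl fun p _ => Finset.sum_congr rfl fun q _ => ?_
  rw [h]; ring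

lemma aux_main (hU : ∀ s t, U s t = U t s) (hA : ∀ i, Continuous (A i))
    (hB : ∀ p, Continuous fun q : ℝ × ℝ => B p q.1 q.2) :
    (∫ x in (0:ℝ)..1, ∑ i, ∑ j, A i x * U (Sum.inl i) (Sum.inl j) * A j x)
      + 2 * ∫ x in (0:ℝ)..1, ∫ ξ in (0:ℝ)..x, auxK U A B x ξ
    = ∫ η in (0:ℝ)..1, ∑ s, ∑ t, auxW A B η s * U s t * auxW A B η t := by
  set g33 : ℝ → ℝ → ℝ → ℝ := fun η x ξ => ∑ p, ∑ q,
          B p η x * U (Sum.inr (Sum.inr p)) (Sum.inr (Sum.inr q)) * B q η ξ with hg33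
  set g32 : ℝ → ℝ → ℝ → ℝ := fun η x ξ => ∑ p, ∑ q,
          B p η x * U (Sum.inr (Sum.inr p)) (Sum.inr (Sum.inl q)) * B q η ξ with hg32
  set g22 : ℝ → ℝ → ℝ → ℝ := fun η x ξ => ∑ p, ∑ q,
          B p η x * U (Sum.inr (Sum.inl p)) (Sum.inr (Sum.inl q)) * B q η ξ with hg22
  set k1 : ℝ → ℝ → ℝ := fun x ξ => ∑ i, ∑ p,
    A i x * U (Sum.inl i) (Sum.inr (Sum.inl p)) * B p x ξ with hk1
  set k2 : ℝ → ℝ → ℝ := fun x ξ => ∑ p, ∑ i,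
    B p ξ x * U (Sum.inr (Sum.inr p)) (Sum.inl i) * A i ξ with hk2
  have c33 : Continuous fun p : ℝ × ℝ × ℝ => g33 p.1 p.2.1 p.2.2 := aux_g _ hB hB
  have c32 : Continuous fun p : ℝ × ℝ × ℝ => g32 p.1 p.2.1 p.2.2 := aux_g _ hB hB
  have c22 : Continuous fun p : ℝ × ℝ × ℝ => g22 p.1 p.2.1 p.2.2 := aux_g _ hB hB
  have ck1 : Continuous fun p : ℝ × ℝ => k1 p.1 p.2 := aux_k1_cont hA hB _
  have ck2 : Continuous fun p : ℝ × ℝ => k2 p.1 p.2 := aux_k2_cont hA hB _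
  have cB : ∀ p η, Continuous (B p η) := fun p η => (hB p).comp (Continuous.prodMk_right η)
  have hK : ∀ x ξ, auxK U A B x ξ = k1 x ξ + k2 x ξ + (∫ η in (0:ℝ)..ξ, g33 η x ξ)
      + (∫ η in ξ..x, g32 η x ξ) + (∫ η in x..1, g22 η x ξ) := fun x ξ => rfl
  have d3 : Continuous fun t : ℝ × ℝ => ∫ η in (0:ℝ)..t.2, g33 η t.1 t.2 :=
    aux_k3_cont c33 (by fun_prop) (by fun_prop)
  have d4 : Continuous fun t : ℝ × ℝ => ∫ η in t.2..t.1, g32 η t.1 t.2 :=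
    aux_k3_cont c32 (by fun_prop) (by fun_prop)
  have d5 : Continuous fun t : ℝ × ℝ => ∫ η in t.1..1, g22 η t.1 t.2 :=
    aux_k3_cont c22 (by fun_prop) (by fun_prop)
  have hl : ∀ {f : ℝ → ℝ → ℝ}, (Continuous fun p : ℝ × ℝ => f p.1 p.2) → ∀ x, Continuous (f x) :=
    fun hf x => hf.comp (Continuous.prodMk_right x)
  have hL : ∫ x in (0:ℝ)..1, ∫ ξ in (0:ℝ)..x, auxK U A B x ξ
      = (∫ x in (0:ℝ)..1, ∫ ξ in (0:ℝ)..x, k1 x ξ)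
        + (∫ η in (0:ℝ)..1, ∫ x in η..1, k2 x η)
        + (∫ η in (0:ℝ)..1, ∫ x in η..1, ∫ ξ in η..x, g33 η x ξ)
        + (∫ η in (0:ℝ)..1, ∫ x in η..1, ∫ ξ in (0:ℝ)..η, g32 η x ξ)
        + (∫ η in (0:ℝ)..1, ∫ x in (0:ℝ)..η, ∫ ξ in (0:ℝ)..x, g22 η x ξ) := by
    rw [← aux_t3 c33, ← aux_t4 c32, ← aux_t5 c22, ← aux_tri ck2 zero_le_one]
    have h : ∀ x, ∫ ξ in (0:ℝ)..x, auxK U A B x ξ = (∫ ξ in (0:ℝ)..x, k1 x ξ)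
        + (∫ ξ in (0:ℝ)..x, k2 x ξ) + (∫ ξ in (0:ℝ)..x, ∫ η in (0:ℝ)..ξ, g33 η x ξ)
        + (∫ ξ in (0:ℝ)..x, ∫ η in ξ..x, g32 η x ξ)
        + (∫ ξ in (0:ℝ)..x, ∫ η in x..1, g22 η x ξ) := by
      intro x
      simp_rw [hK]
      exact aux_add5 (hl ck1 x) (hl ck2 x)
        (hl (f := fun x ξ => ∫ η in (0:ℝ)..ξ, g33 η x ξ) d3 x)
        (hl (f := fun x ξ => ∫ η in ξ..x, g32 η x ξ) d4 x)
        (hl (f := fun x ξ => ∫ η in x..1, g22 η x ξ) d5 x) _ _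
    simp_rw [h]
    exact aux_add5 (aux_cpi ck1 (by fun_prop) (by fun_prop))
      (aux_cpi ck2 (by fun_prop) (by fun_prop))
      (aux_cpi (f := fun x ξ => ∫ η in (0:ℝ)..ξ, g33 η x ξ) d3 (by fun_prop) (by fun_prop))
      (aux_cpi (f := fun x ξ => ∫ η in ξ..x, g32 η x ξ) d4 (by fun_prop) (by fun_prop))
      (aux_cpi (f := fun x ξ => ∫ η in x..1, g22 η x ξ) d5 (by fun_prop) (by fun_prop)) _ _
  have e1 : Continuous fun x => ∫ ξ in (0:ℝ)..x, k1 x ξ := aux_cpi ck1 (by fun_prop) (by fun_prop)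
  have e2 : Continuous fun η => ∫ x in η..1, k2 x η :=
    aux_cpi (f := fun η x => k2 x η) (aux_c2 ck2 (by fun_prop) (by fun_prop))
      (by fun_prop) (by fun_prop)
  have e3 : Continuous fun η => ∫ x in η..1, ∫ ξ in η..x, g33 η x ξ := by
    refine aux_cpi (f := fun η x => ∫ ξ in η..x, g33 η x ξ) ?_ (by fun_prop) (by fun_prop)
    exact aux_cpi (X := ℝ × ℝ) (f := fun p ξ => g33 p.1 p.2 ξ) (a := fun p => p.1)
      (b := fun p => p.2) (aux_c3 c33 (by fun_prop) (by fun_prop) (by fun_prop))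
      (by fun_prop) (by fun_prop)
  have e4 : Continuous fun η => ∫ x in η..1, ∫ ξ in (0:ℝ)..η, g32 η x ξ := by
    refine aux_cpi (f := fun η x => ∫ ξ in (0:ℝ)..η, g32 η x ξ) ?_ (by fun_prop) (by fun_prop)
    exact aux_cpi (X := ℝ × ℝ) (f := fun p ξ => g32 p.1 p.2 ξ) (a := fun p => 0)
      (b := fun p => p.1) (aux_c3 c32 (by fun_prop) (by fun_prop) (by fun_prop))
      (by fun_prop) (by fun_prop)
  have e5 : Continuous fun η => ∫ x in (0:ℝ)..η, ∫ ξ in (0:ℝ)..x, g22 η x ξ := by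
    refine aux_cpi (f := fun η x => ∫ ξ in (0:ℝ)..x, g22 η x ξ) ?_ (by fun_prop) (by fun_prop)
    exact aux_cpi (X := ℝ × ℝ) (f := fun p ξ => g22 p.1 p.2 ξ) (a := fun p => 0)
      (b := fun p => p.2) (aux_c3 c22 (by fun_prop) (by fun_prop) (by fun_prop))
      (by fun_prop) (by fun_prop)
  have e0 : Continuous fun x => ∑ i, ∑ j, A i x * U (Sum.inl i) (Sum.inl j) * A j x := by
    fun_prop
  have hR : ∀ η ∈ Set.uIcc (0:ℝ) 1, ∑ s, ∑ t, auxW A B η s * U s t * auxW A B η t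
      = (∑ i, ∑ j, A i η * U (Sum.inl i) (Sum.inl j) * A j η)
        + 2 * ((∫ ξ in (0:ℝ)..η, k1 η ξ) + (∫ x in η..1, k2 x η)
          + (∫ x in η..1, ∫ ξ in η..x, g33 η x ξ)
          + (∫ x in η..1, ∫ ξ in (0:ℝ)..η, g32 η x ξ)
          + (∫ x in (0:ℝ)..η, ∫ ξ in (0:ℝ)..x, g22 η x ξ)) := by
    intro η hη
    rw [Set.uIcc_of_le zero_le_one] at hη
    have r1 : ∫ ξ in (0:ℝ)..η, k1 η ξ = ∑ i, ∑ p,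
        A i η * U (Sum.inl i) (Sum.inr (Sum.inl p)) * ∫ ξ in (0:ℝ)..η, B p η ξ := by
      rw [hk1, intervalIntegral.integral_finsetSum]
      · refine Finset.sum_congr rfl fun i _ => ?_
        rw [intervalIntegral.integral_finsetSum]
        · simp_rw [intervalIntegral.integral_const_mul]
        · intro j _
          exact ((cB j η).const_mul _).intervalIntegrable _ _
      · intro i _
        exact (continuous_finsetSum _ fun j _ => (cB j η).const_mul _).intervalIntegrable _ _
    have r2 : ∫ x in η..1, k2 x η = ∑ p, ∑ i,
        (∫ x in η..1, B p η x) * U (Sum.inr (Sum.inr p)) (Sum.inl i) * A i η := by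
      rw [hk2, intervalIntegral.integral_finsetSum]
      · refine Finset.sum_congr rfl fun i _ => ?_
        rw [intervalIntegral.integral_finsetSum]
        · simp_rw [intervalIntegral.integral_mul_const]
        · intro j _
          exact (((cB i η).mul_const _).mul_const _).intervalIntegrable _ _
      · intro i _
        exact (continuous_finsetSum _ fun j _ =>
          ((cB i η).mul_const _).mul_const _).intervalIntegrable _ _
    have r4 : ∫ x in η..1, ∫ ξ in (0:ℝ)..η, g32 η x ξ = ∑ p, ∑ q,
        (∫ x in η..1, B p η x) * U (Sum.inr (Sum.inr p)) (Sum.inr (Sum.inl q))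
          * ∫ x in (0:ℝ)..η, B q η x :=
      (aux_bil _ (fun p => cB p η) (fun p => cB p η) _ _ _ _).symm
    have r3 : 2 * ∫ x in η..1, ∫ ξ in η..x, g33 η x ξ = ∑ p, ∑ q,
        (∫ x in η..1, B p η x) * U (Sum.inr (Sum.inr p)) (Sum.inr (Sum.inr q))
          * ∫ x in η..1, B q η x := by
      rw [aux_bil (fun p q => U (Sum.inr (Sum.inr p)) (Sum.inr (Sum.inr q)))
        (fun p => cB p η) (fun p => cB p η), ← aux_sym _ hη.2]
      · intro x y
        simp only [hg33]
        rw [Finset.sum_comm]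
        refine Finset.sum_congr rfl fun p _ => Finset.sum_congr rfl fun q _ => ?_
        rw [hU]; ring
      · exact aux_c3 c33 (by fun_prop) (by fun_prop) (by fun_prop)
    have r5 : 2 * ∫ x in (0:ℝ)..η, ∫ ξ in (0:ℝ)..x, g22 η x ξ = ∑ p, ∑ q,
        (∫ x in (0:ℝ)..η, B p η x) * U (Sum.inr (Sum.inl p)) (Sum.inr (Sum.inl q))
          * ∫ x in (0:ℝ)..η, B q η x := by
      rw [aux_bil (fun p q => U (Sum.inr (Sum.inl p)) (Sum.inr (Sum.inl q)))
        (fun p => cB p η) (fun p => cB p η), ← aux_sym _ hη.1]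
      · intro x y
        simp only [hg22]
        rw [Finset.sum_comm]
        refine Finset.sum_congr rfl fun p _ => Finset.sum_congr rfl fun q _ => ?_
        rw [hU]; ring
      · exact aux_c3 c22 (by fun_prop) (by fun_prop) (by fun_prop)
    rw [mul_add, mul_add, mul_add, mul_add, r1, r2, r3, r4, r5]
    simp only [Fintype.sum_sum_type, auxW, Sum.elim_inl, Sum.elim_inr, Finset.sum_add_distrib]
    have s1 := aux_sw (fun p => ∫ x in (0:ℝ)..η, B p η x) (fun i => A i η)
      (fun p i => U (Sum.inr (Sum.inl p)) (Sum.inl i))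
      (fun i p => U (Sum.inl i) (Sum.inr (Sum.inl p))) (fun _ _ => hU _ _)
    have s2 := aux_sw (fun i => A i η) (fun p => ∫ x in η..1, B p η x)
      (fun i p => U (Sum.inl i) (Sum.inr (Sum.inr p)))
      (fun p i => U (Sum.inr (Sum.inr p)) (Sum.inl i)) (fun _ _ => hU _ _)
    have s3 := aux_sw (fun p => ∫ x in (0:ℝ)..η, B p η x) (fun p => ∫ x in η..1, B p η x)
      (fun i p => U (Sum.inr (Sum.inl i)) (Sum.inr (Sum.inr p)))
      (fun p i => U (Sum.inr (Sum.inr p)) (Sum.inr (Sum.inl i))) (fun _ _ => hU _ _)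
    linarith
  rw [integral_congr hR, intervalIntegral.integral_add (e0.intervalIntegrable _ _)
    (Continuous.intervalIntegrable (by fun_prop) _ _),
    intervalIntegral.integral_const_mul, aux_add5 e1 e2 e3 e4 e5, hL]

end main

lemma aux_sup {f : ℝ → ℝ} {C : ℝ} (hC : ∀ x ∈ Set.Icc (0:ℝ) 1, f x ≤ C) (h0 : 0 ≤ C) :
    (∀ x ∈ Set.Icc (0:ℝ) 1, f x ≤ ⨆ x ∈ Set.Icc (0:ℝ) 1, f x) ∧
      (⨆ x ∈ Set.Icc (0:ℝ) 1, f x) ≤ C := by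
  have hb : ∀ x, (⨆ (_ : x ∈ Set.Icc (0:ℝ) 1), f x) ≤ C := by
    intro x
    by_cases hx : x ∈ Set.Icc (0:ℝ) 1
    · rw [ciSup_pos hx]; exact hC x hx
    · have : IsEmpty (x ∈ Set.Icc (0:ℝ) 1) := ⟨hx⟩
      rw [Real.iSup_of_isEmpty]; exact h0
  refine ⟨fun x hx => ?_, ciSup_le hb⟩
  have := le_ciSup (f := fun x => ⨆ (_ : x ∈ Set.Icc (0:ℝ) 1), f x)
    ⟨C, by rintro _ ⟨y, rfl⟩; exact hb y⟩ x
  rw [ciSup_pos hx] at this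
  exact this

end helpers

/-- If `U ⪰ 0` is symmetric, then the semi-separable kernel operator built from
`M`, `K1`, `K2` as in Theorem 1 of the paper satisfies
`⟨P z, z⟩ ≤ (θ1 + θ2) λmax(U) ‖z‖²` for continuous `z`. -/
theorem semiseparable_operator_upper_bound
    (d1 d2 : ℕ)
    (U : Matrix (Fin (d1 + 1) ⊕ I2idx d2 ⊕ I2idx d2)
                (Fin (d1 + 1) ⊕ I2idx d2 ⊕ I2idx d2) ℝ)
    (hUpsd : U.PosSemidef)
    (M : ℝ → ℝ) (K1 K2 : ℝ → ℝ → ℝ)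
    (hM : ∀ x : ℝ, M x = ∑ i, ∑ j,
        Z1vec d1 x i * U (Sum.inl i) (Sum.inl j) * Z1vec d1 x j)
    (hK1 : ∀ x ξ : ℝ, K1 x ξ =
        (∑ i, ∑ p, Z1vec d1 x i * U (Sum.inl i) (Sum.inr (Sum.inl p)) * Z2vec d2 x ξ p)
      + (∑ p, ∑ i, Z2vec d2 ξ x p * U (Sum.inr (Sum.inr p)) (Sum.inl i) * Z1vec d1 ξ i)
      + (∫ η in (0:ℝ)..ξ, ∑ p, ∑ q,
          Z2vec d2 η x p * U (Sum.inr (Sum.inr p)) (Sum.inr (Sum.inr q)) * Z2vec d2 η ξ q)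
      + (∫ η in ξ..x, ∑ p, ∑ q,
          Z2vec d2 η x p * U (Sum.inr (Sum.inr p)) (Sum.inr (Sum.inl q)) * Z2vec d2 η ξ q)
      + (∫ η in x..(1:ℝ), ∑ p, ∑ q,
          Z2vec d2 η x p * U (Sum.inr (Sum.inl p)) (Sum.inr (Sum.inl q)) * Z2vec d2 η ξ q))
    (hK2 : ∀ x ξ : ℝ, K2 x ξ = K1 ξ x)
    (θ1 θ2 lam : ℝ)
    (hθ1 : θ1 = ⨆ x ∈ Set.Icc (0:ℝ) 1, ∑ i, Z1vec d1 x i * Z1vec d1 x i)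
    (hθ2 : θ2 = ⨆ x ∈ Set.Icc (0:ℝ) 1, ⨆ ξ ∈ Set.Icc (0:ℝ) 1,
        |(∫ η in (0:ℝ)..ξ, ∑ p, Z2vec d2 η x p * Z2vec d2 η ξ p)
          + ∫ η in x..(1:ℝ), ∑ p, Z2vec d2 η x p * Z2vec d2 η ξ p|)
    (hlam : lam = ⨆ i, hUpsd.1.eigenvalues i)
    (z : ℝ → ℝ) (hz : Continuous z) :
    (∫ x in (0:ℝ)..1,
        (M x * z x + (∫ ξ in (0:ℝ)..x, K1 x ξ * z ξ)
          + ∫ ξ in x..(1:ℝ), K2 x ξ * z ξ) * z x)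
      ≤ (θ1 + θ2) * lam * ∫ x in (0:ℝ)..1, (z x) ^ 2 := by
  have cZ1 : ∀ i, Continuous fun x => Z1vec d1 x i := by
    intro i; unfold Z1vec; fun_prop
  have cZ2 : ∀ p, Continuous fun q : ℝ × ℝ => Z2vec d2 q.1 q.2 p := by
    intro i; unfold Z2vec; fun_prop
  set A : Fin (d1 + 1) → ℝ → ℝ := fun i x => Z1vec d1 x i * z x with hAdef
  set B : I2idx d2 → ℝ → ℝ → ℝ := fun p x ξ => Z2vec d2 x ξ p * z ξ with hBdef
  have hA : ∀ i, Continuous (A i) := fun i => (cZ1 i).mul hz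
  have hB : ∀ p, Continuous fun q : ℝ × ℝ => B p q.1 q.2 :=
    fun p => (cZ2 p).mul (hz.comp continuous_snd)
  have hUs : ∀ s t, U s t = U t s := fun s t => by simpa using hUpsd.1.apply t s
  have h1s : ∀ s t, (1 : Matrix (Fin (d1 + 1) ⊕ I2idx d2 ⊕ I2idx d2)
      (Fin (d1 + 1) ⊕ I2idx d2 ⊕ I2idx d2) ℝ) s t
      = (1 : Matrix (Fin (d1 + 1) ⊕ I2idx d2 ⊕ I2idx d2)
      (Fin (d1 + 1) ⊕ I2idx d2 ⊕ I2idx d2) ℝ) t s := by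
    intro s t
    simp only [Matrix.one_apply, eq_comm]
  have bil : ∀ {α β : Type} [Fintype α] [Fintype β] (a : α → ℝ) (b : β → ℝ) (V : α → β → ℝ)
      (u v : ℝ), ∑ i, ∑ j, a i * u * V i j * (b j * v)
        = u * v * ∑ i, ∑ j, a i * V i j * b j := by
    intro α β _ _ a b V u v
    simp only [Finset.mul_sum]
    refine Finset.sum_congr rfl fun p _ => Finset.sum_congr rfl fun q _ => ?_
    ring
  have hKz : ∀ x ξ, auxK U A B x ξ = z x * z ξ * K1 x ξ := by
    intro x ξ
    rw [hK1]
    simp only [auxK, hAdef, hBdef]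
    simp only [bil, intervalIntegral.integral_const_mul]
    ring
  have hMz : ∀ x, ∑ i, ∑ j, A i x * U (Sum.inl i) (Sum.inl j) * A j x = M x * z x * z x := by
    intro x
    rw [hM]
    simp only [hAdef, bil]
    ring
  have cK := aux_K_cont U hA hB
  have cM : Continuous fun x => ∑ i, ∑ j, A i x * U (Sum.inl i) (Sum.inl j) * A j x := by
    fun_prop
  have cT1 : Continuous fun x => ∫ ξ in (0:ℝ)..x, auxK U A B x ξ :=
    aux_cpi cK (by fun_prop) (by fun_prop)
  have cT2 : Continuous fun x => ∫ ξ in x..(1:ℝ), auxK U A B ξ x :=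
    aux_cpi (f := fun x ξ => auxK U A B ξ x) (aux_c2 cK (by fun_prop) (by fun_prop))
      (by fun_prop) (by fun_prop)
  have hL : (∫ x in (0:ℝ)..1,
        (M x * z x + (∫ ξ in (0:ℝ)..x, K1 x ξ * z ξ)
          + ∫ ξ in x..(1:ℝ), K2 x ξ * z ξ) * z x)
      = ∫ η in (0:ℝ)..1, ∑ s, ∑ t, auxW A B η s * U s t * auxW A B η t := by
    rw [← aux_main U hUs hA hB]
    have hp : ∀ x, (M x * z x + (∫ ξ in (0:ℝ)..x, K1 x ξ * z ξ)
          + ∫ ξ in x..(1:ℝ), K2 x ξ * z ξ) * z x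
        = (∑ i, ∑ j, A i x * U (Sum.inl i) (Sum.inl j) * A j x)
          + (∫ ξ in (0:ℝ)..x, auxK U A B x ξ) + ∫ ξ in x..(1:ℝ), auxK U A B ξ x := by
      intro x
      rw [hMz, add_mul, add_mul, ← intervalIntegral.integral_mul_const,
        ← intervalIntegral.integral_mul_const]
      congr 1
      · congr 1
        refine intervalIntegral.integral_congr fun ξ _ => ?_
        simp only [hKz]; ring
      · refine intervalIntegral.integral_congr fun ξ _ => ?_
        simp only [hKz, hK2]; ring
    simp_rw [hp]
    rw [intervalIntegral.integral_add (Continuous.intervalIntegrable (by fun_prop) _ _)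
      (cT2.intervalIntegrable _ _), intervalIntegral.integral_add (cM.intervalIntegrable _ _)
      (cT1.intervalIntegrable _ _), ← aux_tri cK zero_le_one]
    ring
  have hlam0 : 0 ≤ lam := by
    rw [hlam]; exact Real.iSup_nonneg fun i => hUpsd.eigenvalues_nonneg i
  have cW : ∀ s, Continuous fun η => auxW A B η s := aux_W_cont hA hB
  have hstep : ∫ η in (0:ℝ)..1, ∑ s, ∑ t, auxW A B η s * U s t * auxW A B η t
      ≤ lam * ∫ η in (0:ℝ)..1, ∑ s, auxW A B η s * auxW A B η s := by
    rw [← intervalIntegral.integral_const_mul]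
    refine intervalIntegral.integral_mono_on zero_le_one ?_ ?_ ?_
    · exact Continuous.intervalIntegrable (by fun_prop) _ _
    · exact Continuous.intervalIntegrable (by fun_prop) _ _
    · intro η _
      rw [hlam]
      exact aux_ray U hUpsd.1 _
  have hI := aux_main 1 h1s hA hB
  have hI2 : ∀ η, ∑ s, ∑ t, auxW A B η s * (1 : Matrix (Fin (d1 + 1) ⊕ I2idx d2 ⊕ I2idx d2)
      (Fin (d1 + 1) ⊕ I2idx d2 ⊕ I2idx d2) ℝ) s t * auxW A B η t
      = ∑ s, auxW A B η s * auxW A B η s := by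
    intro η
    refine Finset.sum_congr rfl fun s _ => ?_
    simp [Matrix.one_apply]
  simp_rw [hI2] at hI
  rw [hL]
  refine hstep.trans ?_
  rw [← hI, mul_comm (θ1 + θ2) lam, mul_assoc]
  refine mul_le_mul_of_nonneg_left ?_ hlam0
  rw [add_mul]
  refine add_le_add ?_ ?_
  · obtain ⟨C, hC⟩ := (isCompact_Icc (a := (0:ℝ)) (b := 1)).bddAbove_image
      (f := fun x => ∑ i, Z1vec d1 x i * Z1vec d1 x i)
      (Continuous.continuousOn (by fun_prop))
    have hs := (aux_sup (f := fun x => ∑ i, Z1vec d1 x i * Z1vec d1 x i) (C := max C 0)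
      (fun x hx => (hC ⟨x, hx, rfl⟩).trans (le_max_left _ _)) (le_max_right _ _)).1
    rw [← hθ1] at hs
    rw [← intervalIntegral.integral_const_mul]
    refine intervalIntegral.integral_mono_on zero_le_one ?_ ?_ ?_
    · exact Continuous.intervalIntegrable (by fun_prop) _ _
    · exact Continuous.intervalIntegrable (by fun_prop) _ _
    · intro x hx
      have : ∑ i, ∑ j, A i x * (1 : Matrix (Fin (d1 + 1) ⊕ I2idx d2 ⊕ I2idx d2)
          (Fin (d1 + 1) ⊕ I2idx d2 ⊕ I2idx d2) ℝ) (Sum.inl i) (Sum.inl j) * A j x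
          = (∑ i, Z1vec d1 x i * Z1vec d1 x i) * z x ^ 2 := by
        rw [Finset.sum_mul]
        refine Finset.sum_congr rfl fun s _ => ?_
        simp [Matrix.one_apply, hAdef]
        ring
      rw [this]
      exact mul_le_mul_of_nonneg_right (hs x hx) (sq_nonneg _)
  · set G : ℝ → ℝ → ℝ := fun x ξ => (∫ η in (0:ℝ)..ξ, ∑ p, Z2vec d2 η x p * Z2vec d2 η ξ p)
          + ∫ η in x..(1:ℝ), ∑ p, Z2vec d2 η x p * Z2vec d2 η ξ p with hG
    have cZZ : Continuous fun t : ℝ × ℝ × ℝ =>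
        ∑ p, Z2vec d2 t.1 t.2.1 p * Z2vec d2 t.1 t.2.2 p := by
      unfold Z2vec; fun_prop
    have cG : Continuous fun t : ℝ × ℝ => G t.1 t.2 :=
      (aux_k3_cont (g := fun η x ξ => ∑ p, Z2vec d2 η x p * Z2vec d2 η ξ p)
        (a := fun t => 0) (b := fun t => t.2) cZZ (by fun_prop) (by fun_prop)).add
      (aux_k3_cont (g := fun η x ξ => ∑ p, Z2vec d2 η x p * Z2vec d2 η ξ p)
        (a := fun t => t.1) (b := fun t => 1) cZZ (by fun_prop) (by fun_prop))
    have hGθ : ∀ x ∈ Set.Icc (0:ℝ) 1, ∀ ξ ∈ Set.Icc (0:ℝ) 1, |G x ξ| ≤ θ2 := by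
      obtain ⟨C, hC⟩ := ((isCompact_Icc (a := (0:ℝ)) (b := 1)).prod
        (isCompact_Icc (a := (0:ℝ)) (b := 1))).bddAbove_image
        (f := fun t : ℝ × ℝ => |G t.1 t.2|) (Continuous.continuousOn cG.abs)
      have hin : ∀ x ∈ Set.Icc (0:ℝ) 1, _ := fun x hx =>
        aux_sup (f := fun ξ => |G x ξ|) (C := max C 0)
          (fun ξ hξ => (hC ⟨(x, ξ), ⟨hx, hξ⟩, rfl⟩).trans (le_max_left _ _)) (le_max_right _ _)
      have hout := (aux_sup (f := fun x => ⨆ ξ ∈ Set.Icc (0:ℝ) 1, |G x ξ|) (C := max C 0)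
        (fun x hx => (hin x hx).2) (le_max_right _ _)).1
      intro x hx ξ hξ
      rw [hθ2]
      exact ((hin x hx).1 ξ hξ).trans (hout x hx)
    have hK1z : ∀ x ξ, auxK 1 A B x ξ = z x * z ξ * G x ξ := by
      intro x ξ
      simp only [auxK, hAdef, hBdef, bil, intervalIntegral.integral_const_mul, hG]
      simp only [Matrix.one_apply, reduceCtorEq, Sum.inr.injEq, Sum.inl.injEq, if_false, mul_zero,
        zero_mul, Finset.sum_const_zero, intervalIntegral.integral_zero, mul_ite, ite_mul, mul_one,
        Finset.sum_ite_eq, Finset.mem_univ, if_true]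
      ring
    have cS : Continuous fun t : ℝ × ℝ => z t.1 ^ 2 + z t.2 ^ 2 := by fun_prop
    have hsym := aux_sym (f := fun x ξ => z x ^ 2 + z ξ ^ 2) cS (zero_le_one (α := ℝ))
      (fun x y => add_comm _ _)
    have hin : ∀ x, ∫ y in (0:ℝ)..1, (z x ^ 2 + z y ^ 2)
        = z x ^ 2 + ∫ y in (0:ℝ)..1, z y ^ 2 := by
      intro x
      rw [intervalIntegral.integral_add (Continuous.intervalIntegrable (by fun_prop) _ _)
        (Continuous.intervalIntegrable (by fun_prop) _ _)]
      simp
    simp_rw [hin] at hsym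
    rw [intervalIntegral.integral_add (Continuous.intervalIntegrable (by fun_prop) _ _)
        (Continuous.intervalIntegrable (by fun_prop) _ _)] at hsym
    simp only [intervalIntegral.integral_const, sub_zero, one_smul] at hsym
    have hle : 2 * ∫ x in (0:ℝ)..1, ∫ ξ in (0:ℝ)..x, auxK 1 A B x ξ
        ≤ θ2 * ∫ x in (0:ℝ)..1, ∫ ξ in (0:ℝ)..x, (z x ^ 2 + z ξ ^ 2) := by
      have cK1 := aux_K_cont 1 hA hB
      rw [← intervalIntegral.integral_const_mul, ← intervalIntegral.integral_const_mul]
      refine intervalIntegral.integral_mono_on zero_le_one ?_ ?_ ?_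
      · exact ((aux_cpi cK1 (by fun_prop) (by fun_prop)).const_mul 2).intervalIntegrable _ _
      · exact ((aux_cpi (f := fun x ξ => z x ^ 2 + z ξ ^ 2) cS
          (by fun_prop) (by fun_prop)).const_mul θ2).intervalIntegrable _ _
      · intro x hx
        rw [← intervalIntegral.integral_const_mul, ← intervalIntegral.integral_const_mul]
        refine intervalIntegral.integral_mono_on hx.1 ?_ ?_ ?_
        · exact ((cK1.comp (Continuous.prodMk_right x)).const_mul 2).intervalIntegrable _ _
        · exact Continuous.intervalIntegrable (by fun_prop) _ _
        · intro ξ hξ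
          rw [hK1z]
          have hg := hGθ x hx ξ ⟨hξ.1, hξ.2.trans hx.2⟩
          have h1 : 2 * (z x * z ξ * G x ξ) ≤ |2 * (z x * z ξ)| * |G x ξ| := by
            rw [← abs_mul]
            refine le_trans (le_of_eq ?_) (le_abs_self _)
            ring
          have h2 : |2 * (z x * z ξ)| ≤ z x ^ 2 + z ξ ^ 2 := by
            rw [abs_le]
            constructor
            · nlinarith [sq_nonneg (z x + z ξ)]
            · nlinarith [sq_nonneg (z x - z ξ)]
          have h3 : |2 * (z x * z ξ)| * |G x ξ| ≤ (z x ^ 2 + z ξ ^ 2) * θ2 :=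
            mul_le_mul h2 hg (abs_nonneg _) (by positivity)
          linarith
    refine hle.trans (le_of_eq ?_)
    congr 1
    linarith

end
end

section
/- (Classical form of Lemma 1, the dual Linear Operator Inequality.) Let a, b, c be polynomial functions with a(x) ≥ α > 0 on [0,1], let ε1 > 0, and let M, K1, K2 be polynomial functions with K2(x,ξ) = K1(ξ,x) and M(x) ≥ ε1 on [0,1]. Define the operator (Pz)(x) = M(x)z(x) + ∫₀^x K1(x,ξ)z(ξ)dξ + ∫_x^1 K2(x,ξ)z(ξ)dξ, and the functions T0, T1, T2, T3, T4, T5, T6 by: T0(x) = (a''(x) − b'(x))M(x) + b(x)M'(x) + a(x)M''(x) + 2c(x)M(x) − (π²/2)αε1 + 2a(x)·[∂/∂x (K1(x,ξ) − K2(x,ξ))]evaluated at ξ = x; T1(x,ξ) = a(x)∂²K1/∂x²(x,ξ) + b(x)∂K1/∂x(x,ξ) + a(ξ)∂²K1/∂ξ²(x,ξ) + b(ξ)∂K1/∂ξ(x,ξ) + (c(x) + c(ξ))K1(x,ξ); T2(x,ξ) = T1(ξ,x); T3 = (a'(0) − b(0))M(0) + a(0)M'(0) − (π²/2)αε1; T4(x)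 = 2a(0)·∂K2/∂x(0,x) + π²αε1; T5 = (b(1) − a'(1))M(1) + a(1)M'(1); T6 = 2a(1)M(1); and the operator (Tz)(x) = T0(x)z(x) + ∫₀^x T1(x,ξ)z(ξ)dξ + ∫_x^1 T2(x,ξ)z(ξ)dξ. Then for every twice continuously differentiable z : [0,1] → ℝ satisfying M'(0)z(0) + M(0)z'(0) + ∫₀¹ ∂K2/∂x(0,ξ)z(ξ)dξ = 0 (i.e. the function w = Pz satisfies w'(0) = 0), we have 2∫₀¹ [a(x)(Pz)''(x) + b(x)(Pz)'(x) + c(x)(Pz)(x)]·z(x) dx ≤ ∫₀¹ (Tz)(x) z(x) dx + z(0)·(T3·z(0) + ∫₀¹ T4(x)z(x)dx) + z(1)·(T5·z(1) + T6·z'(1)). -/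
open MeasureTheory Real

noncomputable section

/-- `f` is (the restriction of) a polynomial function. -/
def IsPolyFun (f : ℝ → ℝ) : Prop := ∃ p : Polynomial ℝ, ∀ x, f x = p.eval x

/-- `f` is (the restriction of) a polynomial function of two variables. -/
def IsPolyFun2 (f : ℝ → ℝ → ℝ) : Prop :=
  ∃ p : MvPolynomial (Fin 2) ℝ, ∀ x y, f x y = MvPolynomial.eval ![x, y] p

/-- The semi-separable kernel operator
`(Pz)(x) = M(x)z(x) + ∫₀ˣ K1(x,ξ)z(ξ)dξ + ∫ₓ¹ K2(x,ξ)z(ξ)dξ`. -/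
def semisepOp (M : ℝ → ℝ) (K1 K2 : ℝ → ℝ → ℝ) (z : ℝ → ℝ) : ℝ → ℝ :=
  fun x => M x * z x + (∫ ξ in (0:ℝ)..x, K1 x ξ * z ξ)
    + ∫ ξ in x..(1:ℝ), K2 x ξ * z ξ

lemma hda {f g : ℝ → ℝ} {f' g' x : ℝ} (h : HasDerivAt f f' x) (e : ∀ t, g t = f t)
    (e' : g' = f') : HasDerivAt g g' x := by
  obtain rfl : g = f := funext e
  rw [e']; exact h

lemma mv_hasDeriv (p : MvPolynomial (Fin 2) ℝ) (x y : ℝ) :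
    HasDerivAt (fun t => MvPolynomial.eval ![t, y] p)
      (MvPolynomial.eval ![x, y] (MvPolynomial.pderiv 0 p)) x := by
  induction p using MvPolynomial.induction_on with
  | C r => simpa using hasDerivAt_const x r
  | add p q hp hq => exact hda (hp.add hq) (fun t => by simp) (by simp)
  | mul_X p i hp =>
    fin_cases i
    · exact hda (hp.mul (hasDerivAt_id x)) (fun t => by simp) (by simp [MvPolynomial.pderiv_X]; ring)
    · exact hda (hp.mul_const y) (fun t => by simp) (by simp [MvPolynomial.pderiv_X]; ring)

lemma mv_cont2 {X : Type*} [TopologicalSpace X] (p : MvPolynomial (Fin 2) ℝ) {f g : X → ℝ}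
    (hf : Continuous f) (hg : Continuous g) :
    Continuous (fun q : X => MvPolynomial.eval ![f q, g q] p) := by
  apply (MvPolynomial.continuous_eval p).comp
  refine continuous_pi fun i => ?_
  fin_cases i
  · exact hf
  · exact hg

lemma mv_leib (p : MvPolynomial (Fin 2) ℝ) (c x : ℝ) (z : ℝ → ℝ) (hz : Continuous z) :
    HasDerivAt (fun t => ∫ ξ in c..t, MvPolynomial.eval ![t, ξ] p * z ξ)
      (MvPolynomial.eval ![x, x] p * z x
        + ∫ ξ in c..x, MvPolynomial.eval ![x, ξ] (MvPolynomial.pderiv 0 p) * z ξ) x := by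
  have hi : ∀ (p : MvPolynomial (Fin 2) ℝ) (w : ℝ → ℝ) (hw : Continuous w) (t a b : ℝ), IntervalIntegrable
      (fun ξ => MvPolynomial.eval ![t, ξ] p * w ξ) volume a b := fun p w hw t a b =>
    ((mv_cont2 p continuous_const continuous_id).mul hw).intervalIntegrable _ _
  induction p using MvPolynomial.induction_on generalizing z with
  | C r =>
    have h : Continuous fun ξ => r * z ξ := by fun_prop
    simpa using intervalIntegral.integral_hasDerivAt_right (h.intervalIntegrable c x)
      (h.stronglyMeasurableAtFilter _ _) h.continuousAt
  | add p q hp hq =>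
    refine hda ((hp z hz).add (hq z hz)) (fun t => ?_) ?_
    · simp only [Pi.add_apply]
      rw [← intervalIntegral.integral_add (hi p z hz t c t) (hi q z hz t c t)]
      simp [add_mul]
    · have := intervalIntegral.integral_add (hi (MvPolynomial.pderiv 0 p) z hz x c x)
        (hi (MvPolynomial.pderiv 0 q) z hz x c x)
      simp only [map_add, add_mul]
      rw [this]; ring
  | mul_X p i hp =>
    fin_cases i
    · refine hda ((hasDerivAt_id x).mul (hp z hz)) (fun t => ?_) ?_
      · simp only [Pi.mul_apply, id, ← intervalIntegral.integral_const_mul]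
        congr 1; ext ξ; simp; ring
      · have := intervalIntegral.integral_add ((hi (MvPolynomial.pderiv 0 p) z hz x c x).const_mul x)
          (hi p z hz x c x)
        rw [intervalIntegral.integral_const_mul] at this
        simp only [id, one_mul]
        have e : ∀ A B C D : ℝ, A + D * (B + C) = D * B + (D * C + A) := fun A B C D => by ring
        rw [e, ← this]
        congr 1
        · simp; ring
        · congr 1; ext ξ; simp [MvPolynomial.pderiv_X]; ring
    · refine hda (hp (fun ξ => ξ * z ξ) (by fun_prop)) (fun t => ?_) ?_
      · congr 1; ext ξ; simp; ring
      · congr 1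
        · simp; ring
        · congr 1; ext ξ; simp [MvPolynomial.pderiv_X]; ring

lemma tri_swap_s3 (G : ℝ → ℝ → ℝ) (hG : Continuous (fun q : ℝ × ℝ => G q.1 q.2)) :
    (∫ x in (0:ℝ)..1, ∫ ξ in x..1, G x ξ) = ∫ x in (0:ℝ)..1, ∫ ξ in (0:ℝ)..x, G ξ x := by
  have h1 : (∫ x in (0:ℝ)..1, ∫ ξ in x..1, G x ξ) =
      ∫ x in Set.Ioc (0:ℝ) 1, ∫ ξ in Set.Ioc (0:ℝ) 1,
        Set.indicator {q : ℝ × ℝ | q.1 < q.2} (fun q => G q.1 q.2) (x, ξ) := by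
    rw [intervalIntegral.integral_of_le zero_le_one]
    refine setIntegral_congr_fun measurableSet_Ioc fun x hx => ?_
    rw [intervalIntegral.integral_of_le hx.2]
    have : (fun ξ => Set.indicator {q : ℝ × ℝ | q.1 < q.2} (fun q => G q.1 q.2) (x, ξ))
       = Set.indicator (Set.Ioi x) (fun ξ => G x ξ) := by
      ext ξ; simp [Set.indicator]
    rw [this, setIntegral_indicator measurableSet_Ioi]
    congr 2
    ext ξ; simp only [Set.mem_Ioc, Set.mem_inter_iff, Set.mem_Ioi] at *
    constructor
    · rintro ⟨h, h'⟩; exact ⟨⟨by linarith, h'⟩, h⟩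
    · rintro ⟨⟨h, h'⟩, h''⟩; exact ⟨h'', h'⟩
  have h2 : (∫ x in (0:ℝ)..1, ∫ ξ in (0:ℝ)..x, G ξ x) =
      ∫ x in Set.Ioc (0:ℝ) 1, ∫ ξ in Set.Ioc (0:ℝ) 1,
        Set.indicator {q : ℝ × ℝ | q.1 < q.2} (fun q => G q.1 q.2) (ξ, x) := by
    rw [intervalIntegral.integral_of_le zero_le_one]
    refine setIntegral_congr_fun measurableSet_Ioc fun x hx => ?_
    rw [intervalIntegral.integral_of_le hx.1.le, integral_Ioc_eq_integral_Ioo]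
    have : (fun ξ => Set.indicator {q : ℝ × ℝ | q.1 < q.2} (fun q => G q.1 q.2) (ξ, x))
       = Set.indicator (Set.Iio x) (fun ξ => G ξ x) := by
      ext ξ; simp [Set.indicator]
    rw [this, setIntegral_indicator measurableSet_Iio]
    congr 2
    ext ξ; simp only [Set.mem_Ioc, Set.mem_Ioo, Set.mem_inter_iff, Set.mem_Iio] at *
    constructor
    · rintro ⟨h, h'⟩; exact ⟨⟨h, by linarith⟩, h'⟩
    · rintro ⟨⟨h, h'⟩, h''⟩; exact ⟨h, h''⟩
  rw [h1, h2]
  refine integral_integral_swap ?_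
  have hm : MeasurableSet {q : ℝ × ℝ | q.1 < q.2} := measurableSet_lt measurable_fst measurable_snd
  have : Integrable (fun q : ℝ × ℝ => G q.1 q.2)
      ((volume.restrict (Set.Ioc (0:ℝ) 1)).prod (volume.restrict (Set.Ioc (0:ℝ) 1))) := by
    rw [Measure.prod_restrict]
    have : IntegrableOn (fun q : ℝ × ℝ => G q.1 q.2) (Set.Icc (0:ℝ) 1 ×ˢ Set.Icc (0:ℝ) 1)
      (volume.prod volume) := hG.continuousOn.integrableOn_compact (isCompact_Icc.prod isCompact_Icc)
    exact this.mono_set (Set.prod_mono Set.Ioc_subset_Icc_self Set.Ioc_subset_Icc_self)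
  exact this.indicator hm

lemma poincare_aux (u u' : ℝ → ℝ) (hu : ∀ x, HasDerivAt u (u' x) x) (hc : Continuous u')
    (h0 : u 0 = 0) (l : ℝ) (hl0 : 0 < l) (hl : l < π / 2) :
    l ^ 2 * (∫ x in (0:ℝ)..1, u x ^ 2) ≤ ∫ x in (0:ℝ)..1, u' x ^ 2 := by
  have huc : Continuous u := continuous_iff_continuousAt.2 fun x => (hu x).continuousAt
  have hcos : ∀ x ∈ Set.uIcc (0:ℝ) 1, cos (l * (1 - x)) ≠ 0 := by
    intro x hx
    rw [Set.uIcc_of_le zero_le_one] at hx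
    refine (cos_pos_of_mem_Ioo ⟨?_, ?_⟩).ne'
    · nlinarith [hx.1, hx.2, pi_pos]
    · nlinarith [hx.1, hx.2, pi_pos]
  set q : ℝ → ℝ := fun x => l * tan (l * (1 - x)) with hq
  have hqd : ∀ x ∈ Set.uIcc (0:ℝ) 1, HasDerivAt q (-l ^ 2 - q x ^ 2) x := by
    intro x hx
    have h1 : HasDerivAt (fun x : ℝ => l * (1 - x)) (l * (0 - 1)) x :=
      ((hasDerivAt_const x (1:ℝ)).sub (hasDerivAt_id x)).const_mul l
    have := ((hasDerivAt_tan (hcos x hx)).comp x h1).const_mul l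
    refine hda this (fun t => rfl) ?_
    simp only [hq, tan_eq_sin_div_cos]
    have := hcos x hx
    field_simp
    have := sin_sq_add_cos_sq (l * (1 - x))
    linear_combination (-1) * this
  have hqc : ContinuousOn q (Set.uIcc 0 1) := fun x hx => (hqd x hx).continuousAt.continuousWithinAt
  have hft : ∫ x in (0:ℝ)..1, ((-l ^ 2 - q x ^ 2) * u x ^ 2 + q x * (2 * u x * u' x)) = 0 := by
    rw [intervalIntegral.integral_eq_sub_of_hasDerivAt (f := fun x => q x * u x ^ 2)]
    · simp [h0, hq]
    · intro x hx
      exact hda ((hqd x hx).mul ((hu x).pow 2)) (fun t => by simp) (by simp)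
    · apply ContinuousOn.intervalIntegrable
      fun_prop
  have hi1 : IntervalIntegrable (fun x => u' x ^ 2) volume 0 1 :=
    (Continuous.intervalIntegrable (by fun_prop) _ _)
  have hi2 : IntervalIntegrable (fun x => l ^ 2 * u x ^ 2) volume 0 1 :=
    (Continuous.intervalIntegrable (by fun_prop) _ _)
  have hi3 : IntervalIntegrable (fun x => ((-l ^ 2 - q x ^ 2) * u x ^ 2 + q x * (2 * u x * u' x)))
      volume 0 1 := by
    apply ContinuousOn.intervalIntegrable
    fun_prop
  have : 0 ≤ ∫ x in (0:ℝ)..1, (u' x ^ 2 - l ^ 2 * u x ^ 2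
      - ((-l ^ 2 - q x ^ 2) * u x ^ 2 + q x * (2 * u x * u' x))) := by
    apply intervalIntegral.integral_nonneg zero_le_one
    intro x _
    nlinarith [sq_nonneg (u' x - q x * u x)]
  rw [intervalIntegral.integral_sub (hi1.sub hi2) hi3, intervalIntegral.integral_sub hi1 hi2, hft,
    intervalIntegral.integral_const_mul] at this
  linarith

lemma poincare (u u' : ℝ → ℝ) (hu : ∀ x, HasDerivAt u (u' x) x) (hc : Continuous u')
    (h0 : u 0 = 0) :
    (π / 2) ^ 2 * (∫ x in (0:ℝ)..1, u x ^ 2) ≤ ∫ x in (0:ℝ)..1, u' x ^ 2 := by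
  have ht : Filter.Tendsto (fun l : ℝ => l ^ 2 * (∫ x in (0:ℝ)..1, u x ^ 2))
      (nhdsWithin (π / 2) (Set.Iio (π / 2))) (nhds ((π / 2) ^ 2 * (∫ x in (0:ℝ)..1, u x ^ 2))) := by
    have : Continuous (fun l : ℝ => l ^ 2 * (∫ x in (0:ℝ)..1, u x ^ 2)) := by fun_prop
    exact (this.tendsto _).mono_left nhdsWithin_le_nhds
  refine le_of_tendsto ht ?_
  have hp : (0:ℝ) < π / 2 := by positivity
  filter_upwards [Ioo_mem_nhdsLT hp] with l hl
  exact poincare_aux u u' hu hc h0 l hl.1 hl.2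

lemma dual_core (a a1 a2 b b1 c M M1 M2 z z1 z2 W0 W1 W2 : ℝ → ℝ)
    (K1 K1x K1xx K2 K2x K2xx : ℝ → ℝ → ℝ) (e : ℝ)
    (ha : ∀ x, HasDerivAt a (a1 x) x) (ha1 : ∀ x, HasDerivAt a1 (a2 x) x) (ha2 : Continuous a2)
    (hb : ∀ x, HasDerivAt b (b1 x) x) (hb1 : Continuous b1) (hc : Continuous c)
    (hM : ∀ x, HasDerivAt M (M1 x) x) (hM1 : ∀ x, HasDerivAt M1 (M2 x) x) (hM2 : Continuous M2)
    (hz : ∀ x, HasDerivAt z (z1 x) x) (hz1 : ∀ x, HasDerivAt z1 (z2 x) x) (hz2 : Continuous z2)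
    (hK1 : Continuous (fun q : ℝ × ℝ => K1 q.1 q.2))
    (hK1x : Continuous (fun q : ℝ × ℝ => K1x q.1 q.2))
    (hK1xx : Continuous (fun q : ℝ × ℝ => K1xx q.1 q.2))
    (hK2 : Continuous (fun q : ℝ × ℝ => K2 q.1 q.2))
    (hK2x : Continuous (fun q : ℝ × ℝ => K2x q.1 q.2))
    (hK2xx : Continuous (fun q : ℝ × ℝ => K2xx q.1 q.2))
    (hsym : ∀ x ξ, K2 x ξ = K1 ξ x)
    (hW0 : ∀ x, W0 x = M x * z x + (∫ ξ in (0:ℝ)..x, K1 x ξ * z ξ) + ∫ ξ in x..1, K2 x ξ * z ξ)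
    (hW1 : ∀ x, W1 x = M1 x * z x + M x * z1 x
      + (∫ ξ in (0:ℝ)..x, K1x x ξ * z ξ) + ∫ ξ in x..1, K2x x ξ * z ξ)
    (hW2 : ∀ x, W2 x = M2 x * z x + 2 * M1 x * z1 x + M x * z2 x + (K1x x x - K2x x x) * z x
      + (∫ ξ in (0:ℝ)..x, K1xx x ξ * z ξ) + ∫ ξ in x..1, K2xx x ξ * z ξ)
    (hpos : ∀ x ∈ Set.Icc (0:ℝ) 1, e ≤ a x * M x) (he : 0 ≤ e)
    (T0 T4 : ℝ → ℝ) (T1 T2 : ℝ → ℝ → ℝ) (T3 T5 T6 : ℝ)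
    (hT0 : ∀ x : ℝ, T0 x = (a2 x - b1 x) * M x + b x * M1 x
        + a x * M2 x + 2 * c x * M x - π ^ 2 / 2 * e + 2 * a x * (K1x x x - K2x x x))
    (hT1 : ∀ x ξ : ℝ, T1 x ξ = a x * K1xx x ξ + b x * K1x x ξ + a ξ * K2xx ξ x + b ξ * K2x ξ x
        + (c x + c ξ) * K1 x ξ)
    (hT2 : ∀ x ξ : ℝ, T2 x ξ = T1 ξ x)
    (hT3 : T3 = (a1 0 - b 0) * M 0 + a 0 * M1 0 - π ^ 2 / 2 * e)
    (hT4 : ∀ x : ℝ, T4 x = 2 * a 0 * K2x 0 x + π ^ 2 * e)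
    (hT5 : T5 = (b 1 - a1 1) * M 1 + a 1 * M1 1)
    (hT6 : T6 = 2 * a 1 * M 1)
    (hbc : M1 0 * z 0 + M 0 * z1 0 + (∫ ξ in (0:ℝ)..1, K2x 0 ξ * z ξ) = 0) :
      2 * (∫ x in (0:ℝ)..1, (a x * W2 x + b x * W1 x + c x * W0 x) * z x)
        ≤ (∫ x in (0:ℝ)..1,
              (T0 x * z x + (∫ ξ in (0:ℝ)..x, T1 x ξ * z ξ)
                + ∫ ξ in x..(1:ℝ), T2 x ξ * z ξ) * z x)
          + z 0 * (T3 * z 0 + ∫ x in (0:ℝ)..1, T4 x * z x)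
          + z 1 * (T5 * z 1 + T6 * z1 1) := by
  have cd : ∀ {f f' : ℝ → ℝ}, (∀ x, HasDerivAt f (f' x) x) → Continuous f := fun h =>
    continuous_iff_continuousAt.2 fun x => (h x).continuousAt
  have ca := cd ha
  have ca1 := cd ha1
  have cb := cd hb
  have cM := cd hM
  have cM1 := cd hM1
  have cz := cd hz
  have cz1 := cd hz1
  -- kernels
  set F1 : ℝ → ℝ → ℝ := fun x ξ => a x * K1xx x ξ + b x * K1x x ξ + c x * K1 x ξ with hF1
  set F2 : ℝ → ℝ → ℝ := fun x ξ => a x * K2xx x ξ + b x * K2x x ξ + c x * K2 x ξ with hF2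
  have cF1 : Continuous (fun q : ℝ × ℝ => F1 q.1 q.2) := by
    simp only [hF1]; fun_prop
  have cF2 : Continuous (fun q : ℝ × ℝ => F2 q.1 q.2) := by
    simp only [hF2]; fun_prop
  have hT1' : ∀ x ξ, T1 x ξ = F1 x ξ + F2 ξ x := by
    intro x ξ; rw [hT1]; simp only [hF1, hF2, hsym]; ring
  have sl : ∀ {G : ℝ → ℝ → ℝ}, Continuous (fun q : ℝ × ℝ => G q.1 q.2) → ∀ x,
      Continuous (G x) := fun hG x =>
    Continuous.comp (g := fun q : ℝ × ℝ => _) hG (Continuous.prodMk continuous_const continuous_id)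
  have sl' : ∀ {G : ℝ → ℝ → ℝ}, Continuous (fun q : ℝ × ℝ => G q.1 q.2) → ∀ x,
      Continuous (fun ξ => G ξ x) := fun hG x =>
    Continuous.comp (g := fun q : ℝ × ℝ => _) hG (Continuous.prodMk continuous_id continuous_const)
  -- parametric integral facts
  have comb : ∀ (G1 G2 G3 : ℝ → ℝ) (u v w s t : ℝ), Continuous G1 → Continuous G2 →
      Continuous G3 →
      (∫ ξ in s..t, (u * G1 ξ + v * G2 ξ + w * G3 ξ) * z ξ)
        = u * (∫ ξ in s..t, G1 ξ * z ξ) + v * (∫ ξ in s..t, G2 ξ * z ξ)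
          + w * (∫ ξ in s..t, G3 ξ * z ξ) := by
    intro G1 G2 G3 u v w s t h1 h2 h3
    have i1 : IntervalIntegrable (fun ξ => u * (G1 ξ * z ξ)) volume s t :=
      Continuous.intervalIntegrable (by fun_prop) _ _
    have i2 : IntervalIntegrable (fun ξ => v * (G2 ξ * z ξ)) volume s t :=
      Continuous.intervalIntegrable (by fun_prop) _ _
    have i3 : IntervalIntegrable (fun ξ => w * (G3 ξ * z ξ)) volume s t :=
      Continuous.intervalIntegrable (by fun_prop) _ _
    rw [← intervalIntegral.integral_const_mul, ← intervalIntegral.integral_const_mul,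
      ← intervalIntegral.integral_const_mul, ← intervalIntegral.integral_add i1 i2,
      ← intervalIntegral.integral_add (i1.add i2) i3]
    congr 1; ext ξ; ring
  have pc : ∀ {G : ℝ → ℝ → ℝ}, Continuous (fun q : ℝ × ℝ => G q.1 q.2) →
      Continuous (fun x => ∫ ξ in (0:ℝ)..x, G x ξ * z ξ) := by
    intro G hG
    refine intervalIntegral.continuous_parametric_intervalIntegral_of_continuous
      (f := fun x ξ => G x ξ * z ξ) ?_ continuous_id
    exact hG.mul (cz.comp continuous_snd)
  have pc' : ∀ {G : ℝ → ℝ → ℝ}, Continuous (fun q : ℝ × ℝ => G q.1 q.2) →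
      Continuous (fun x => ∫ ξ in x..(1:ℝ), G x ξ * z ξ) := by
    intro G hG
    have : (fun x => ∫ ξ in x..(1:ℝ), G x ξ * z ξ) = fun x => -∫ ξ in (1:ℝ)..x, G x ξ * z ξ := by
      ext x; rw [intervalIntegral.integral_symm]
    rw [this]
    refine (intervalIntegral.continuous_parametric_intervalIntegral_of_continuous
      (f := fun x ξ => G x ξ * z ξ) ?_ continuous_id).neg
    exact hG.mul (cz.comp continuous_snd)
  have swap : ∀ {G : ℝ → ℝ → ℝ}, Continuous (fun q : ℝ × ℝ => G q.1 q.2) →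
      (∫ x in (0:ℝ)..1, (∫ ξ in x..(1:ℝ), G x ξ * z ξ) * z x)
        = ∫ x in (0:ℝ)..1, (∫ ξ in (0:ℝ)..x, G ξ x * z ξ) * z x := by
    intro G hG
    have := tri_swap_s3 (fun x ξ => G x ξ * z ξ * z x)
      ((hG.mul (cz.comp continuous_snd)).mul (cz.comp continuous_fst))
    simp only [← intervalIntegral.integral_mul_const]
    rw [this]
    congr 1; ext x; congr 1; ext ξ; ring
  have hsw : Continuous (fun q : ℝ × ℝ => F2 q.2 q.1) :=
    Continuous.comp (g := fun q : ℝ × ℝ => F2 q.1 q.2) cF2 continuous_swap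
  -- J1, J2
  set A1 : ℝ → ℝ := fun x => ∫ ξ in (0:ℝ)..x, F1 x ξ * z ξ with hA1
  set A2 : ℝ → ℝ := fun x => ∫ ξ in x..(1:ℝ), F2 x ξ * z ξ with hA2
  set B2 : ℝ → ℝ := fun x => ∫ ξ in (0:ℝ)..x, F2 ξ x * z ξ with hB2
  set B1 : ℝ → ℝ := fun x => ∫ ξ in x..(1:ℝ), F1 ξ x * z ξ with hB1
  have cA1 : Continuous A1 := pc cF1
  have cA2 : Continuous A2 := pc' cF2
  have cB2 : Continuous B2 := pc (G := fun x ξ => F2 ξ x) hsw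
  have hsw1 : Continuous (fun q : ℝ × ℝ => F1 q.2 q.1) :=
    Continuous.comp (g := fun q : ℝ × ℝ => F1 q.1 q.2) cF1 continuous_swap
  have cB1 : Continuous B1 := pc' (G := fun x ξ => F1 ξ x) hsw1
  have s2 : (∫ x in (0:ℝ)..1, A2 x * z x) = ∫ x in (0:ℝ)..1, B2 x * z x := swap cF2
  have s1 : (∫ x in (0:ℝ)..1, B1 x * z x) = ∫ x in (0:ℝ)..1, A1 x * z x :=
    swap (G := fun x ξ => F1 ξ x) hsw1
  have addI : ∀ (f g : ℝ → ℝ) (s t : ℝ), Continuous f → Continuous g →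
      (∫ ξ in s..t, (f ξ + g ξ) * z ξ) = (∫ ξ in s..t, f ξ * z ξ) + ∫ ξ in s..t, g ξ * z ξ := by
    intro f g s t hf hg
    rw [← intervalIntegral.integral_add (Continuous.intervalIntegrable (by fun_prop) _ _)
      (Continuous.intervalIntegrable (by fun_prop) _ _)]
    congr 1; ext ξ; ring
  set S : ℝ → ℝ := fun x => (a2 x - b1 x) * M x + b x * M1 x
        + a x * M2 x + 2 * c x * M x + 2 * a x * (K1x x x - K2x x x) with hS
  have cK1d : Continuous fun x => K1x x x :=
    Continuous.comp (g := fun q : ℝ × ℝ => K1x q.1 q.2) hK1x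
      (Continuous.prodMk continuous_id continuous_id)
  have cK2d : Continuous fun x => K2x x x :=
    Continuous.comp (g := fun q : ℝ × ℝ => K2x q.1 q.2) hK2x
      (Continuous.prodMk continuous_id continuous_id)
  have cS : Continuous S := by simp only [hS]; fun_prop
  -- T side
  have hR : (∫ x in (0:ℝ)..1, (T0 x * z x + (∫ ξ in (0:ℝ)..x, T1 x ξ * z ξ)
                + ∫ ξ in x..(1:ℝ), T2 x ξ * z ξ) * z x)
      = (∫ x in (0:ℝ)..1, S x * z x ^ 2) - π ^ 2 / 2 * e * (∫ x in (0:ℝ)..1, z x ^ 2)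
        + 2 * (∫ x in (0:ℝ)..1, A1 x * z x) + 2 * (∫ x in (0:ℝ)..1, A2 x * z x) := by
    have : ∀ x, (T0 x * z x + (∫ ξ in (0:ℝ)..x, T1 x ξ * z ξ)
                + ∫ ξ in x..(1:ℝ), T2 x ξ * z ξ) * z x
        = S x * z x ^ 2 - π ^ 2 / 2 * e * z x ^ 2 + A1 x * z x + B2 x * z x
          + B1 x * z x + A2 x * z x := by
      intro x
      simp only [hT2, hT1']
      rw [addI _ _ _ _ (sl cF1 x) (sl' cF2 x), addI _ _ _ _ (sl' cF1 x) (sl cF2 x), hT0]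
      simp only [hS, hA1, hA2, hB1, hB2]
      ring
    simp only [this]
    rw [intervalIntegral.integral_add, intervalIntegral.integral_add, intervalIntegral.integral_add,
      intervalIntegral.integral_add, intervalIntegral.integral_sub,
      intervalIntegral.integral_const_mul, s1, s2]
    · ring
    all_goals exact Continuous.intervalIntegrable (by fun_prop) _ _
  -- boundary
  set Bd : ℝ → ℝ := fun x => 2 * (a x * z x * (M1 x * z x + M x * z1 x))
    - (a1 x * M x + a x * M1 x) * z x ^ 2 + b x * M x * z x ^ 2 with hBd
  set Bd' : ℝ → ℝ := fun x => 2 * ((a1 x * z x + a x * z1 x) * (M1 x * z x + M x * z1 x)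
      + a x * z x * (M2 x * z x + 2 * M1 x * z1 x + M x * z2 x))
    - ((a2 x * M x + 2 * a1 x * M1 x + a x * M2 x) * z x ^ 2
      + (a1 x * M x + a x * M1 x) * (2 * z x * z1 x))
    + ((b1 x * M x + b x * M1 x) * z x ^ 2 + b x * M x * (2 * z x * z1 x)) with hBd'
  have hBdd : ∀ x, HasDerivAt Bd (Bd' x) x := by
    intro x
    have h1 := (((ha x).mul (hz x)).mul (((hM1 x).mul (hz x)).add ((hM x).mul (hz1 x)))).const_mul 2
    have h2 := (((ha1 x).mul (hM x)).add ((ha x).mul (hM1 x))).mul ((hz x).pow 2)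
    have h3 := ((hb x).mul (hM x)).mul ((hz x).pow 2)
    refine hda ((h1.sub h2).add h3) (fun t => ?_) ?_
    · simp [hBd]
    · simp [hBd']; ring
  have cBd' : Continuous Bd' := by simp only [hBd']; fun_prop
  have hFT : (∫ x in (0:ℝ)..1, Bd' x) = Bd 1 - Bd 0 :=
    intervalIntegral.integral_eq_sub_of_hasDerivAt (fun x _ => hBdd x) (cBd'.intervalIntegrable _ _)
  have hL : 2 * (∫ x in (0:ℝ)..1, (a x * W2 x + b x * W1 x + c x * W0 x) * z x)
      = (∫ x in (0:ℝ)..1, S x * z x ^ 2) - 2 * (∫ x in (0:ℝ)..1, a x * M x * z1 x ^ 2)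
        + (Bd 1 - Bd 0) + 2 * (∫ x in (0:ℝ)..1, A1 x * z x) + 2 * (∫ x in (0:ℝ)..1, A2 x * z x) := by
    rw [← hFT, ← intervalIntegral.integral_const_mul]
    have : ∀ x, 2 * ((a x * W2 x + b x * W1 x + c x * W0 x) * z x)
        = S x * z x ^ 2 - 2 * (a x * M x * z1 x ^ 2) + Bd' x + 2 * (A1 x * z x)
          + 2 * (A2 x * z x) := by
      intro x
      have e1 : A1 x = _ := comb (K1xx x) (K1x x) (K1 x) (a x) (b x) (c x) 0 x
        (sl hK1xx x) (sl hK1x x) (sl hK1 x)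
      have e2 : A2 x = _ := comb (K2xx x) (K2x x) (K2 x) (a x) (b x) (c x) x 1
        (sl hK2xx x) (sl hK2x x) (sl hK2 x)
      rw [e1, e2, hW0, hW1, hW2]
      simp only [hS, hBd']
      ring
    simp only [this]
    rw [intervalIntegral.integral_add, intervalIntegral.integral_add, intervalIntegral.integral_add,
      intervalIntegral.integral_sub, intervalIntegral.integral_const_mul,
      intervalIntegral.integral_const_mul, intervalIntegral.integral_const_mul]
    all_goals exact Continuous.intervalIntegrable (by fun_prop) _ _
  have h4 : (∫ x in (0:ℝ)..1, T4 x * z x) = 2 * a 0 * (∫ ξ in (0:ℝ)..1, K2x 0 ξ * z ξ)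
      + π ^ 2 * e * (∫ x in (0:ℝ)..1, z x) := by
    have ck := sl hK2x 0
    rw [← intervalIntegral.integral_const_mul, ← intervalIntegral.integral_const_mul,
      ← intervalIntegral.integral_add (Continuous.intervalIntegrable (by fun_prop) _ _)
      (Continuous.intervalIntegrable (by fun_prop) _ _)]
    congr 1; ext ξ; rw [hT4]; ring
  -- Poincare
  have hP := poincare (fun x => z x - z 0) z1 (fun x => (hz x).sub_const _) cz1 (by simp)
  have hP1 : (∫ x in (0:ℝ)..1, (z x - z 0) ^ 2) = (∫ x in (0:ℝ)..1, z x ^ 2)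
      - 2 * z 0 * (∫ x in (0:ℝ)..1, z x) + z 0 ^ 2 := by
    have : ∀ x, (z x - z 0) ^ 2 = z x ^ 2 - 2 * z 0 * z x + z 0 ^ 2 := fun x => by ring
    simp only [this]
    rw [intervalIntegral.integral_add, intervalIntegral.integral_sub,
      intervalIntegral.integral_const_mul]
    · simp
    all_goals exact Continuous.intervalIntegrable (by fun_prop) _ _
  have hQ : e * (∫ x in (0:ℝ)..1, z1 x ^ 2) ≤ ∫ x in (0:ℝ)..1, a x * M x * z1 x ^ 2 := by
    rw [← intervalIntegral.integral_const_mul]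
    refine intervalIntegral.integral_mono_on zero_le_one
      (Continuous.intervalIntegrable (by fun_prop) _ _)
      (Continuous.intervalIntegrable (by fun_prop) _ _) fun x hx => ?_
    exact mul_le_mul_of_nonneg_right (hpos x hx) (sq_nonneg _)
  rw [hP1] at hP
  have hQ2 := mul_le_mul_of_nonneg_left hP he
  rw [hL, hR, h4, hT3, hT5, hT6]
  have hk : (∫ ξ in (0:ℝ)..1, K2x 0 ξ * z ξ) = -(M1 0 * z 0 + M 0 * z1 0) := by linarith
  rw [hk]
  simp only [hBd]
  nlinarith [hQ, hQ2]

lemma poly_iter (f : ℝ → ℝ) (p : Polynomial ℝ) (hp : ∀ x, f x = p.eval x) :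
    (∀ x, HasDerivAt f (deriv f x) x) ∧ (∀ x, HasDerivAt (deriv f) (iteratedDeriv 2 f x) x)
      ∧ Continuous (deriv f) ∧ Continuous (iteratedDeriv 2 f) := by
  have h0 : ∀ x, HasDerivAt f (p.derivative.eval x) x := fun x => hda (p.hasDerivAt x) hp rfl
  have h1 : deriv f = fun x => p.derivative.eval x := funext fun x => (h0 x).deriv
  have h2 : iteratedDeriv 2 f = fun x => p.derivative.derivative.eval x := by
    rw [iteratedDeriv_succ, iteratedDeriv_one, h1]
    exact funext fun x => (p.derivative.hasDerivAt x).deriv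
  rw [h2, h1]
  exact ⟨h0, fun x => p.derivative.hasDerivAt x, p.derivative.continuous,
    p.derivative.derivative.continuous⟩

lemma mv_iter (K : ℝ → ℝ → ℝ) (p : MvPolynomial (Fin 2) ℝ)
    (hp : ∀ x y, K x y = MvPolynomial.eval ![x, y] p) (y : ℝ) :
    (∀ x, HasDerivAt (fun t => K t y) (MvPolynomial.eval ![x, y] (MvPolynomial.pderiv 0 p)) x) ∧
    (∀ x, iteratedDeriv 2 (fun t => K t y) x
      = MvPolynomial.eval ![x, y] (MvPolynomial.pderiv 0 (MvPolynomial.pderiv 0 p))) := by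
  have h0 : ∀ x, HasDerivAt (fun t => K t y)
      (MvPolynomial.eval ![x, y] (MvPolynomial.pderiv 0 p)) x :=
    fun x => hda (mv_hasDeriv p x y) (fun t => hp t y) rfl
  refine ⟨h0, fun x => ?_⟩
  have h1 : deriv (fun t => K t y) = fun x => MvPolynomial.eval ![x, y] (MvPolynomial.pderiv 0 p) :=
    funext fun x => (h0 x).deriv
  rw [iteratedDeriv_succ, iteratedDeriv_one, h1]
  exact (mv_hasDeriv _ x y).deriv

lemma mv_leib' (p : MvPolynomial (Fin 2) ℝ) (c x : ℝ) (z : ℝ → ℝ) (hz : Continuous z) :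
    HasDerivAt (fun t => ∫ ξ in t..c, MvPolynomial.eval ![t, ξ] p * z ξ)
      (-(MvPolynomial.eval ![x, x] p * z x)
        + ∫ ξ in x..c, MvPolynomial.eval ![x, ξ] (MvPolynomial.pderiv 0 p) * z ξ) x := by
  refine hda (mv_leib p c x z hz).neg (fun t => ?_) ?_
  · rw [intervalIntegral.integral_symm]; rfl
  · rw [intervalIntegral.integral_symm]; ring

/-- Classical form of Lemma 1 (the dual Linear Operator Inequality). -/
theorem dual_linear_operator_inequality
    (a b c : ℝ → ℝ) (α : ℝ) (hα : 0 < α)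
    (ha : IsPolyFun a) (hb : IsPolyFun b) (hc : IsPolyFun c)
    (haα : ∀ x ∈ Set.Icc (0:ℝ) 1, α ≤ a x)
    (ε1 : ℝ) (hε1 : 0 < ε1)
    (M : ℝ → ℝ) (K1 K2 : ℝ → ℝ → ℝ)
    (hMp : IsPolyFun M) (hK1p : IsPolyFun2 K1) (hK2p : IsPolyFun2 K2)
    (hsym : ∀ x ξ : ℝ, K2 x ξ = K1 ξ x)
    (hMε : ∀ x ∈ Set.Icc (0:ℝ) 1, ε1 ≤ M x)
    (T0 T4 : ℝ → ℝ) (T1 T2 : ℝ → ℝ → ℝ) (T3 T5 T6 : ℝ)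
    (hT0 : ∀ x : ℝ, T0 x =
      (iteratedDeriv 2 a x - deriv b x) * M x + b x * deriv M x
        + a x * iteratedDeriv 2 M x + 2 * c x * M x - π ^ 2 / 2 * α * ε1
        + 2 * a x * deriv (fun t => K1 t x - K2 t x) x)
    (hT1 : ∀ x ξ : ℝ, T1 x ξ =
      a x * iteratedDeriv 2 (fun t => K1 t ξ) x + b x * deriv (fun t => K1 t ξ) x
        + a ξ * iteratedDeriv 2 (fun s => K1 x s) ξ + b ξ * deriv (fun s => K1 x s) ξ
        + (c x + c ξ) * K1 x ξ)
    (hT2 : ∀ x ξ : ℝ, T2 x ξ = T1 ξ x)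
    (hT3 : T3 = (deriv a 0 - b 0) * M 0 + a 0 * deriv M 0 - π ^ 2 / 2 * α * ε1)
    (hT4 : ∀ x : ℝ, T4 x = 2 * a 0 * deriv (fun t => K2 t x) 0 + π ^ 2 * α * ε1)
    (hT5 : T5 = (b 1 - deriv a 1) * M 1 + a 1 * deriv M 1)
    (hT6 : T6 = 2 * a 1 * M 1) :
    ∀ z : ℝ → ℝ, ContDiff ℝ 2 z →
      (deriv M 0 * z 0 + M 0 * deriv z 0
        + (∫ ξ in (0:ℝ)..1, deriv (fun t => K2 t ξ) 0 * z ξ) = 0) →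
      2 * (∫ x in (0:ℝ)..1,
            (a x * iteratedDeriv 2 (semisepOp M K1 K2 z) x
              + b x * deriv (semisepOp M K1 K2 z) x
              + c x * semisepOp M K1 K2 z x) * z x)
        ≤ (∫ x in (0:ℝ)..1,
              (T0 x * z x + (∫ ξ in (0:ℝ)..x, T1 x ξ * z ξ)
                + ∫ ξ in x..(1:ℝ), T2 x ξ * z ξ) * z x)
          + z 0 * (T3 * z 0 + ∫ x in (0:ℝ)..1, T4 x * z x)
          + z 1 * (T5 * z 1 + T6 * deriv z 1) := by
  intro z hz hbc
  obtain ⟨pa, hpa⟩ := ha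
  obtain ⟨pb, hpb⟩ := hb
  obtain ⟨pc, hpc⟩ := hc
  obtain ⟨pM, hpM⟩ := hMp
  obtain ⟨p1, hp1⟩ := hK1p
  obtain ⟨p2, hp2⟩ := hK2p
  obtain ⟨da, da1, -, ca2⟩ := poly_iter a pa hpa
  obtain ⟨db, -, cb1, -⟩ := poly_iter b pb hpb
  obtain ⟨dM, dM1, -, cM2⟩ := poly_iter M pM hpM
  have cc : Continuous c := by
    rw [show c = fun x => pc.eval x from funext hpc]; exact pc.continuous
  have dz : ∀ x, HasDerivAt z (deriv z x) x := fun x =>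
    (hz.differentiable (by norm_num) x).hasDerivAt
  have hz' : ContDiff ℝ 1 (deriv z) := by
    have : ContDiff ℝ (1 + 1) z := by simpa [one_add_one_eq_two] using hz
    exact (contDiff_succ_iff_deriv.1 this).2.2
  have dz1 : ∀ x, HasDerivAt (deriv z) (deriv (deriv z) x) x := fun x =>
    (hz'.differentiable (by norm_num) x).hasDerivAt
  have cz2 : Continuous (deriv (deriv z)) := hz'.continuous_deriv (by norm_num)
  have cz := hz.continuous
  set p1x := MvPolynomial.pderiv 0 p1 with hp1x
  set p1xx := MvPolynomial.pderiv 0 p1x with hp1xx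
  set p2x := MvPolynomial.pderiv 0 p2 with hp2x
  set p2xx := MvPolynomial.pderiv 0 p2x with hp2xx
  have hdiag : ∀ x, MvPolynomial.eval ![x, x] p2 = MvPolynomial.eval ![x, x] p1 := fun x => by
    rw [← hp1, ← hp2, hsym]
  set w := semisepOp M K1 K2 z with hw
  have hW0 : ∀ x, w x = M x * z x + (∫ ξ in (0:ℝ)..x, MvPolynomial.eval ![x, ξ] p1 * z ξ)
      + ∫ ξ in x..1, MvPolynomial.eval ![x, ξ] p2 * z ξ := by
    intro x
    simp only [hw, semisepOp, hp1, hp2]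
  have dW : ∀ x, HasDerivAt w (deriv M x * z x + M x * deriv z x
      + (∫ ξ in (0:ℝ)..x, MvPolynomial.eval ![x, ξ] p1x * z ξ)
      + ∫ ξ in x..1, MvPolynomial.eval ![x, ξ] p2x * z ξ) x := by
    intro x
    refine hda ((((dM x).mul (dz x)).add (mv_leib p1 0 x z cz)).add (mv_leib' p2 1 x z cz))
      (fun t => ?_) ?_
    · rw [hW0]; rfl
    · rw [hdiag]; ring
  have hW1 : deriv w = fun x => (deriv M x * z x + M x * deriv z x
      + (∫ ξ in (0:ℝ)..x, MvPolynomial.eval ![x, ξ] p1x * z ξ)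
      + ∫ ξ in x..1, MvPolynomial.eval ![x, ξ] p2x * z ξ) := funext fun x => (dW x).deriv
  have hW2 : ∀ x, iteratedDeriv 2 w x = iteratedDeriv 2 M x * z x + 2 * deriv M x * deriv z x
      + M x * deriv (deriv z) x
      + (MvPolynomial.eval ![x, x] p1x - MvPolynomial.eval ![x, x] p2x) * z x
      + (∫ ξ in (0:ℝ)..x, MvPolynomial.eval ![x, ξ] p1xx * z ξ)
      + ∫ ξ in x..1, MvPolynomial.eval ![x, ξ] p2xx * z ξ := by
    intro x
    rw [iteratedDeriv_succ, iteratedDeriv_one]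
    refine HasDerivAt.deriv ?_
    refine hda (((((dM1 x).mul (dz x)).add ((dM x).mul (dz1 x))).add
      (mv_leib p1x 0 x z cz)).add (mv_leib' p2x 1 x z cz)) (fun t => ?_) ?_
    · rw [hW1]; rfl
    · ring
  have k1d : ∀ x y, HasDerivAt (fun t => K1 t y) (MvPolynomial.eval ![x, y] p1x) x :=
    fun x y => (mv_iter K1 p1 hp1 y).1 x
  have k2d : ∀ x y, HasDerivAt (fun t => K2 t y) (MvPolynomial.eval ![x, y] p2x) x :=
    fun x y => (mv_iter K2 p2 hp2 y).1 x
  have k1dd : ∀ x y, iteratedDeriv 2 (fun t => K1 t y) x = MvPolynomial.eval ![x, y] p1xx :=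
    fun x y => (mv_iter K1 p1 hp1 y).2 x
  have k2dd : ∀ x y, iteratedDeriv 2 (fun t => K2 t y) x = MvPolynomial.eval ![x, y] p2xx :=
    fun x y => (mv_iter K2 p2 hp2 y).2 x
  have hs : ∀ x, (fun s => K1 x s) = fun s => K2 s x := fun x => funext fun s => (hsym s x).symm
  refine dual_core a (deriv a) (iteratedDeriv 2 a) b (deriv b) c M (deriv M) (iteratedDeriv 2 M)
    z (deriv z) (deriv (deriv z)) w (deriv w) (iteratedDeriv 2 w)
    (fun x y => MvPolynomial.eval ![x, y] p1) (fun x y => MvPolynomial.eval ![x, y] p1x)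
    (fun x y => MvPolynomial.eval ![x, y] p1xx) (fun x y => MvPolynomial.eval ![x, y] p2)
    (fun x y => MvPolynomial.eval ![x, y] p2x) (fun x y => MvPolynomial.eval ![x, y] p2xx)
    (α * ε1) da da1 ca2 db cb1 cc dM dM1 cM2 dz dz1 cz2
    (mv_cont2 _ continuous_fst continuous_snd) (mv_cont2 _ continuous_fst continuous_snd)
    (mv_cont2 _ continuous_fst continuous_snd) (mv_cont2 _ continuous_fst continuous_snd)
    (mv_cont2 _ continuous_fst continuous_snd) (mv_cont2 _ continuous_fst continuous_snd)
    (fun x y => by rw [← hp1, ← hp2, hsym]) hW0 (fun x => congrFun hW1 x) hW2 ?_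
    (mul_pos hα hε1).le T0 T4 T1 T2 T3 T5 T6 ?_ ?_ hT2 ?_ ?_ hT5 hT6 ?_
  · intro x hx
    exact mul_le_mul (haα x hx) (hMε x hx) hε1.le (hα.le.trans (haα x hx))
  · intro x
    have : deriv (fun t => K1 t x - K2 t x) x = _ := ((k1d x x).sub (k2d x x)).deriv
    rw [hT0, this]; ring
  · intro x ξ
    rw [hT1, hs, k1dd, k2dd, (k1d x ξ).deriv, (k2d ξ x).deriv, hp1]
  · rw [hT3]; ring
  · intro x
    rw [hT4, (k2d 0 x).deriv]; ring
  · simpa only [(k2d 0 _).deriv] using hbc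

end
end

section
/- (Classical spatial form of Lemma 3, controller synthesis.) Let a, b, c be polynomial functions with a(x) ≥ α > 0 on [0,1], ε1 > 0, and M, K1, K2 polynomial with K2(x,ξ) = K1(ξ,x) and M(x) ≥ ε1 on [0,1]. With P the operator (Pz)(x) = M(x)z(x) + ∫₀^x K1(x,ξ)z(ξ)dξ + ∫_x^1 K2(x,ξ)z(ξ)dξ and T0,…,T6 and the operator T defined as in the dual Linear Operator Inequality, assume T3 ≤ 0 and T4(x) = 0 for all x ∈ [0,1]. Let O1 : [0,1] → ℝ be continuous, O2 ∈ ℝ, v ∈ ℝ, and let Z1 < 0 be a scalar such that μ := −(T5 + T6·M(1)/Z1) > 0. Then for every twice continuously differentiable ẑ : [0,1] → ℝ satisfying (i) M'(0)ẑ(0) + M(0)ẑ'(0) + ∫₀¹ ∂K2/∂x(0,ξ)ẑ(ξ)dξ = 0 and (ii) ẑ'(1) = (M(1)/Z1)·ẑ(1) − (O2/Z1)·v, we have 2∫₀¹ [a(x)(Pẑ)''(x) + b(x)(Pẑ)'(x) + c(x)(Pẑ)(x) + O1(x)·v]·ẑ(x) dx ≤ ∫₀¹ (Tẑ)(x)ẑ(x)dx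 + 2v·∫₀¹ O1(x)ẑ(x)dx − μ·ẑ(1)² − (T6·O2/Z1)·ẑ(1)·v. -/
open MeasureTheory Real

noncomputable section

lemma aux_wirt_lam (f f' : ℝ → ℝ) (hf : ∀ x, HasDerivAt f (f' x) x) (hc : Continuous f')
    (h0 : f 0 = 0) (l : ℝ) (hl0 : 0 < l) (hl : l < π / 2) :
    l ^ 2 * (∫ x in (0:ℝ)..1, f x ^ 2) ≤ ∫ x in (0:ℝ)..1, f' x ^ 2 := by
  have hfc : Continuous f := continuous_iff_continuousAt.2 fun x => (hf x).continuousAt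
  have hcos : ∀ x ∈ Set.Icc (0:ℝ) 1, Real.cos (l * (1 - x)) ≠ 0 := by
    intro x hx
    apply ne_of_gt
    apply Real.cos_pos_of_mem_Ioo
    constructor
    · have : 0 ≤ l * (1 - x) := mul_nonneg hl0.le (by linarith [hx.2])
      linarith [Real.pi_pos]
    · nlinarith [hx.1, hx.2]
  have htan : ∀ x ∈ Set.Icc (0:ℝ) 1, HasDerivAt (fun x => l * Real.tan (l * (1 - x)))
      (-(l ^ 2) * (1 + Real.tan (l * (1 - x)) ^ 2)) x := by
    intro x hx
    have h1 : HasDerivAt (fun x : ℝ => l * (1 - x)) (l * (-1)) x :=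
      ((hasDerivAt_id x).const_sub 1).const_mul l
    have h2 := ((Real.hasDerivAt_tan (hcos x hx)).comp x h1).const_mul l
    refine h2.congr_deriv ?_
    have h3 : 1 / Real.cos (l * (1 - x)) ^ 2 = 1 + Real.tan (l * (1 - x)) ^ 2 := by
      rw [Real.tan_eq_sin_div_cos]
      have := hcos x hx
      field_simp
      linarith [Real.sin_sq_add_cos_sq (l * (1 - x))]
    rw [h3]; ring
  have htc : ContinuousOn (fun x => Real.tan (l * (1 - x))) (Set.Icc 0 1) := by
    intro x hx
    have h1 : ContinuousAt (fun x : ℝ => l * (1 - x)) x := by fun_prop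
    exact (ContinuousAt.comp (f := fun x : ℝ => l * (1 - x)) (Real.continuousAt_tan.2 (hcos x hx)) h1).continuousWithinAt
  set g : ℝ → ℝ := fun x => Real.tan (l * (1 - x)) with hg
  set D : ℝ → ℝ := fun x => -(l ^ 2) * (1 + g x ^ 2) * f x ^ 2 + l * g x * (2 * f x * f' x) with hD
  have hDc : ContinuousOn D (Set.Icc 0 1) := by
    have := hfc.continuousOn (s := Set.Icc (0:ℝ) 1)
    have := hc.continuousOn (s := Set.Icc (0:ℝ) 1)
    fun_prop
  have u : Set.uIcc (0:ℝ) 1 = Set.Icc 0 1 := Set.uIcc_of_le zero_le_one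
  have hDi : IntervalIntegrable D volume 0 1 := by
    apply ContinuousOn.intervalIntegrable; rwa [u]
  have hF : ∫ x in (0:ℝ)..1, D x = 0 := by
    rw [intervalIntegral.integral_eq_sub_of_hasDerivAt (f := fun x => l * g x * f x ^ 2) (f' := D) _ hDi]
    · simp [h0, hg]
    · intro x hx
      rw [u] at hx
      have h2 : HasDerivAt (fun x => f x ^ 2) (2 * f x * f' x) x := by
        simpa using (hf x).fun_pow 2
      exact ((htan x hx).mul h2)
  have hi1 : IntervalIntegrable (fun x => f' x ^ 2) volume 0 1 :=
    (hc.pow 2).intervalIntegrable _ _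
  have hi2 : IntervalIntegrable (fun x => l ^ 2 * f x ^ 2) volume 0 1 := by
    apply Continuous.intervalIntegrable; fun_prop
  rw [← intervalIntegral.integral_const_mul]
  have : ∫ x in (0:ℝ)..1, (l ^ 2 * f x ^ 2 + D x) ≤ ∫ x in (0:ℝ)..1, f' x ^ 2 := by
    apply intervalIntegral.integral_mono_on zero_le_one (hi2.add hDi) hi1
    intro x hx
    simp only [hD]
    nlinarith [sq_nonneg (f' x - l * g x * f x)]
  rw [intervalIntegral.integral_add hi2 hDi, hF] at this
  linarith

lemma aux_wirt (f f' : ℝ → ℝ) (hf : ∀ x, HasDerivAt f (f' x) x) (hc : Continuous f')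
    (h0 : f 0 = 0) :
    (π / 2) ^ 2 * (∫ x in (0:ℝ)..1, f x ^ 2) ≤ ∫ x in (0:ℝ)..1, f' x ^ 2 := by
  have hp : (0:ℝ) < π / 2 := by positivity
  have h1 : Filter.Tendsto (fun l : ℝ => l ^ 2 * (∫ x in (0:ℝ)..1, f x ^ 2)) (nhdsWithin (π / 2) (Set.Iio (π / 2)))
      (nhds ((π / 2) ^ 2 * (∫ x in (0:ℝ)..1, f x ^ 2))) := by
    apply tendsto_nhdsWithin_of_tendsto_nhds
    exact Continuous.tendsto (by fun_prop) _
  apply le_of_tendsto h1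
  filter_upwards [Ioo_mem_nhdsLT hp] with l hl
  exact aux_wirt_lam f f' hf hc h0 l hl.1 hl.2

lemma aux_prim (f : ℝ → ℝ) (hf : Continuous f) (x : ℝ) :
    HasDerivAt (fun x => ∫ t in (0:ℝ)..x, f t) (f x) x :=
  intervalIntegral.integral_hasDerivAt_right (hf.intervalIntegrable _ _)
    (hf.stronglyMeasurableAtFilter _ _) hf.continuousAt

lemma aux_prim' (f : ℝ → ℝ) (hf : Continuous f) (x : ℝ) :
    HasDerivAt (fun x => ∫ t in x..(1:ℝ), f t) (-f x) x :=
  intervalIntegral.integral_hasDerivAt_left (hf.intervalIntegrable _ _)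
    (hf.stronglyMeasurableAtFilter _ _) hf.continuousAt

lemma aux_cprim (f : ℝ → ℝ) (hf : Continuous f) :
    Continuous (fun x => ∫ t in (0:ℝ)..x, f t) :=
  continuous_iff_continuousAt.2 fun x => (aux_prim f hf x).continuousAt

lemma aux_cprim' (f : ℝ → ℝ) (hf : Continuous f) :
    Continuous (fun x => ∫ t in x..(1:ℝ), f t) :=
  continuous_iff_continuousAt.2 fun x => (aux_prim' f hf x).continuousAt

lemma aux_swap (f g : ℝ → ℝ) (hf : Continuous f) (hg : Continuous g) :
    ∫ x in (0:ℝ)..1, f x * (∫ t in (0:ℝ)..x, g t) = ∫ x in (0:ℝ)..1, g x * ∫ t in x..(1:ℝ), f t := by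
  have c1 := aux_cprim g hg
  have c2 := aux_cprim' f hf
  have h := intervalIntegral.integral_eq_sub_of_hasDerivAt (a := 0) (b := 1)
    (fun x _ => (aux_prim g hg x).mul (aux_prim' f hf x))
    (by apply Continuous.intervalIntegrable; fun_prop)
  simp only [Pi.mul_apply, intervalIntegral.integral_same, mul_zero, zero_mul, sub_zero] at h
  rw [intervalIntegral.integral_add (by apply Continuous.intervalIntegrable; fun_prop) (by apply Continuous.intervalIntegrable; fun_prop)] at h
  have e : ∫ x in (0:ℝ)..1, (∫ t in (0:ℝ)..x, g t) * -f x = - ∫ x in (0:ℝ)..1, f x * (∫ t in (0:ℝ)..x, g t) := by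
    rw [← intervalIntegral.integral_neg]; congr 1; ext x; ring
  linarith

lemma aux_sep (K : ℝ → ℝ → ℝ) (h : IsPolyFun2 K) :
    ∃ (s : Finset (Fin 2 →₀ ℕ)) (p q : (Fin 2 →₀ ℕ) → Polynomial ℝ),
      K = fun x y => ∑ i ∈ s, (p i).eval x * (q i).eval y := by
  obtain ⟨P, hP⟩ := h
  refine ⟨P.support, fun d => Polynomial.C (P.coeff d) * Polynomial.X ^ (d 0),
    fun d => Polynomial.X ^ (d 1), ?_⟩
  ext x y
  rw [hP, MvPolynomial.eval_eq']
  apply Finset.sum_congr rfl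
  intro d _
  simp [Fin.prod_univ_two, mul_assoc]

lemma aux_d1 (p : Polynomial ℝ) (x : ℝ) : HasDerivAt (fun x => p.eval x) (p.derivative.eval x) x :=
  p.hasDerivAt x

lemma aux_it2 (f f1 f2 : ℝ → ℝ) (h1 : ∀ x, HasDerivAt f (f1 x) x) (h2 : ∀ x, HasDerivAt f1 (f2 x) x) :
    deriv f = f1 ∧ iteratedDeriv 2 f = f2 := by
  have e1 : deriv f = f1 := funext fun x => (h1 x).deriv
  refine ⟨e1, ?_⟩
  rw [iteratedDeriv_succ, iteratedDeriv_one, e1]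
  exact funext fun x => (h2 x).deriv

lemma aux_semisep (m : Polynomial ℝ) (s : Finset (Fin 2 →₀ ℕ)) (p q : (Fin 2 →₀ ℕ) → Polynomial ℝ)
    (z z1 z2 : ℝ → ℝ) (hz1 : ∀ x, HasDerivAt z (z1 x) x) (hz2 : ∀ x, HasDerivAt z1 (z2 x) x) :
    let w := semisepOp (fun x => m.eval x) (fun x y => ∑ i ∈ s, (p i).eval x * (q i).eval y)
      (fun x y => ∑ i ∈ s, (p i).eval y * (q i).eval x) z
    let F := fun i x => ∫ t in (0:ℝ)..x, (q i).eval t * z t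
    let G := fun i x => ∫ t in x..(1:ℝ), (p i).eval t * z t
    (w = fun x => m.eval x * z x + ∑ i ∈ s, ((p i).eval x * F i x + (q i).eval x * G i x)) ∧
    (deriv w = fun x => m.derivative.eval x * z x + m.eval x * z1 x +
      ∑ i ∈ s, ((p i).derivative.eval x * F i x + (q i).derivative.eval x * G i x)) ∧
    (iteratedDeriv 2 w = fun x => m.derivative.derivative.eval x * z x
      + 2 * (m.derivative.eval x * z1 x) + m.eval x * z2 x +
      (∑ i ∈ s, ((p i).derivative.derivative.eval x * F i x
        + (q i).derivative.derivative.eval x * G i x)) +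
      (∑ i ∈ s, ((p i).derivative.eval x * (q i).eval x - (p i).eval x * (q i).derivative.eval x)) * z x) := by
  intro w F G
  have hzc : Continuous z := continuous_iff_continuousAt.2 fun x => (hz1 x).continuousAt
  have hF : ∀ i x, HasDerivAt (F i) ((q i).eval x * z x) x := fun i x =>
    aux_prim (fun t => (q i).eval t * z t) (by fun_prop) x
  have hG : ∀ i x, HasDerivAt (G i) (-((p i).eval x * z x)) x := fun i x =>
    aux_prim' (fun t => (p i).eval t * z t) (by fun_prop) x
  have hw : w = fun x => m.eval x * z x + ∑ i ∈ s, ((p i).eval x * F i x + (q i).eval x * G i x) := by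
    ext x
    simp only [w, semisepOp, F, G]
    rw [Finset.sum_add_distrib, add_assoc]
    congr 2
    · simp_rw [Finset.sum_mul, mul_assoc]
      rw [intervalIntegral.integral_finsetSum (fun i _ => by apply Continuous.intervalIntegrable; fun_prop)]
      simp
    · simp_rw [Finset.sum_mul]
      rw [intervalIntegral.integral_finsetSum (fun i _ => by apply Continuous.intervalIntegrable; fun_prop)]
      apply Finset.sum_congr rfl
      intro i _
      rw [← intervalIntegral.integral_const_mul]
      congr 1; ext t; ring
  refine ⟨hw, ?_⟩
  rw [hw]
  apply aux_it2
  · intro x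
    refine (((aux_d1 m x).mul (hz1 x)).add (HasDerivAt.fun_sum fun i _ =>
      ((aux_d1 (p i) x).mul (hF i x)).add ((aux_d1 (q i) x).mul (hG i x)))).congr_deriv ?_
    congr 1
    apply Finset.sum_congr rfl; intro i _; ring
  · intro x
    refine ((((aux_d1 m.derivative x).mul (hz1 x)).add ((aux_d1 m x).mul (hz2 x))).add (HasDerivAt.fun_sum fun i _ =>
      ((aux_d1 (p i).derivative x).mul (hF i x)).add ((aux_d1 (q i).derivative x).mul (hG i x)))).congr_deriv ?_
    rw [Finset.sum_mul, add_assoc (_ + m.eval x * z2 x), ← Finset.sum_add_distrib]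
    have : ∀ A B C D E E' : ℝ, E = E' → (A + B) + (B + C) + E = A + 2 * B + C + E' := by intros; subst_vars; ring
    apply this <;> first | exact 0 | skip
    apply Finset.sum_congr rfl; intro i _; ring

lemma aux_kernel (A B p q : Polynomial ℝ) (z : ℝ → ℝ) (hz : Continuous z) :
    ∫ x in (0:ℝ)..1, (A.eval x * (∫ t in (0:ℝ)..x, q.eval t * z t)
        + B.eval x * (∫ t in x..(1:ℝ), p.eval t * z t)) * z x =
    ∫ x in (0:ℝ)..1, (p.eval x * (∫ t in (0:ℝ)..x, B.eval t * z t)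
        + q.eval x * (∫ t in x..(1:ℝ), A.eval t * z t)) * z x := by
  have cp : ∀ r : Polynomial ℝ, Continuous (fun t => r.eval t * z t) := fun r => by fun_prop
  have c1 := fun r => aux_cprim _ (cp r)
  have c2 := fun r => aux_cprim' _ (cp r)
  have h1 := aux_swap _ _ (cp A) (cp q)
  have h2 := aux_swap _ _ (cp p) (cp B)
  have e1 := c1 q
  have e2 := c1 B
  have e3 := c2 p
  have e4 := c2 A
  have l : ∫ x in (0:ℝ)..1, (A.eval x * (∫ t in (0:ℝ)..x, q.eval t * z t)
        + B.eval x * (∫ t in x..(1:ℝ), p.eval t * z t)) * z x =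
      (∫ x in (0:ℝ)..1, A.eval x * z x * (∫ t in (0:ℝ)..x, q.eval t * z t)) +
      ∫ x in (0:ℝ)..1, B.eval x * z x * (∫ t in x..(1:ℝ), p.eval t * z t) := by
    rw [← intervalIntegral.integral_add (by apply Continuous.intervalIntegrable; fun_prop) (by apply Continuous.intervalIntegrable; fun_prop)]
    congr 1; ext x; ring
  have r : ∫ x in (0:ℝ)..1, (p.eval x * (∫ t in (0:ℝ)..x, B.eval t * z t)
        + q.eval x * (∫ t in x..(1:ℝ), A.eval t * z t)) * z x =
      (∫ x in (0:ℝ)..1, p.eval x * z x * (∫ t in (0:ℝ)..x, B.eval t * z t)) +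
      ∫ x in (0:ℝ)..1, q.eval x * z x * (∫ t in x..(1:ℝ), A.eval t * z t) := by
    rw [← intervalIntegral.integral_add (by apply Continuous.intervalIntegrable; fun_prop) (by apply Continuous.intervalIntegrable; fun_prop)]
    congr 1; ext x; ring
  rw [l, r, h1, h2]; ring

lemma aux_pd (p : Polynomial ℝ) (x : ℝ) : deriv (fun x => p.eval x) x = p.derivative.eval x :=
  (aux_d1 p x).deriv

lemma aux_pd2 (p : Polynomial ℝ) (x : ℝ) :
    iteratedDeriv 2 (fun x => p.eval x) x = p.derivative.derivative.eval x := by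
  rw [(aux_it2 _ _ _ (aux_d1 p) (aux_d1 p.derivative)).2]

lemma aux_sumd {ι : Type} (s : Finset ι) (p : ι → Polynomial ℝ) (r : ι → ℝ) (x : ℝ) :
    deriv (fun t => ∑ i ∈ s, (p i).eval t * r i) x = ∑ i ∈ s, (p i).derivative.eval x * r i ∧
    iteratedDeriv 2 (fun t => ∑ i ∈ s, (p i).eval t * r i) x
      = ∑ i ∈ s, (p i).derivative.derivative.eval x * r i := by
  have := aux_it2 (fun t => ∑ i ∈ s, (p i).eval t * r i)
    (fun t => ∑ i ∈ s, (p i).derivative.eval t * r i)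
    (fun t => ∑ i ∈ s, (p i).derivative.derivative.eval t * r i)
    (fun x => HasDerivAt.fun_sum fun i _ => (aux_d1 (p i) x).mul_const _)
    (fun x => HasDerivAt.fun_sum fun i _ => (aux_d1 (p i).derivative x).mul_const _)
  rw [this.1, this.2]; exact ⟨rfl, rfl⟩

lemma aux_sumd' {ι : Type} (s : Finset ι) (p : ι → Polynomial ℝ) (r : ι → ℝ) (x : ℝ) :
    deriv (fun t => ∑ i ∈ s, r i * (p i).eval t) x = ∑ i ∈ s, r i * (p i).derivative.eval x ∧
    iteratedDeriv 2 (fun t => ∑ i ∈ s, r i * (p i).eval t) x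
      = ∑ i ∈ s, r i * (p i).derivative.derivative.eval x := by
  simpa only [mul_comm] using aux_sumd s p r x

/-- Classical spatial form of Lemma 3 (controller synthesis). -/
theorem controller_synthesis_inequality
    (a b c : ℝ → ℝ) (α : ℝ) (hα : 0 < α)
    (ha : IsPolyFun a) (hb : IsPolyFun b) (hc : IsPolyFun c)
    (haα : ∀ x ∈ Set.Icc (0:ℝ) 1, α ≤ a x)
    (ε1 : ℝ) (hε1 : 0 < ε1)
    (M : ℝ → ℝ) (K1 K2 : ℝ → ℝ → ℝ)
    (hMp : IsPolyFun M) (hK1p : IsPolyFun2 K1) (hK2p : IsPolyFun2 K2)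
    (hsym : ∀ x ξ : ℝ, K2 x ξ = K1 ξ x)
    (hMε : ∀ x ∈ Set.Icc (0:ℝ) 1, ε1 ≤ M x)
    (T0 T4 : ℝ → ℝ) (T1 T2 : ℝ → ℝ → ℝ) (T3 T5 T6 : ℝ)
    (hT0 : ∀ x : ℝ, T0 x =
      (iteratedDeriv 2 a x - deriv b x) * M x + b x * deriv M x
        + a x * iteratedDeriv 2 M x + 2 * c x * M x - π ^ 2 / 2 * α * ε1
        + 2 * a x * deriv (fun t => K1 t x - K2 t x) x)
    (hT1 : ∀ x ξ : ℝ, T1 x ξ =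
      a x * iteratedDeriv 2 (fun t => K1 t ξ) x + b x * deriv (fun t => K1 t ξ) x
        + a ξ * iteratedDeriv 2 (fun s => K1 x s) ξ + b ξ * deriv (fun s => K1 x s) ξ
        + (c x + c ξ) * K1 x ξ)
    (hT2 : ∀ x ξ : ℝ, T2 x ξ = T1 ξ x)
    (hT3def : T3 = (deriv a 0 - b 0) * M 0 + a 0 * deriv M 0 - π ^ 2 / 2 * α * ε1)
    (hT4def : ∀ x : ℝ, T4 x = 2 * a 0 * deriv (fun t => K2 t x) 0 + π ^ 2 * α * ε1)
    (hT5 : T5 = (b 1 - deriv a 1) * M 1 + a 1 * deriv M 1)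
    (hT6 : T6 = 2 * a 1 * M 1)
    (hT3 : T3 ≤ 0) (hT4 : ∀ x ∈ Set.Icc (0:ℝ) 1, T4 x = 0)
    (O1 : ℝ → ℝ) (hO1 : Continuous O1) (O2 v Zc : ℝ) (hZc : Zc < 0)
    (μ : ℝ) (hμdef : μ = -(T5 + T6 * M 1 / Zc)) (hμ : 0 < μ) :
    ∀ z : ℝ → ℝ, ContDiff ℝ 2 z →
      (deriv M 0 * z 0 + M 0 * deriv z 0
        + (∫ ξ in (0:ℝ)..1, deriv (fun t => K2 t ξ) 0 * z ξ) = 0) →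
      deriv z 1 = M 1 / Zc * z 1 - O2 / Zc * v →
      2 * (∫ x in (0:ℝ)..1,
            (a x * iteratedDeriv 2 (semisepOp M K1 K2 z) x
              + b x * deriv (semisepOp M K1 K2 z) x
              + c x * semisepOp M K1 K2 z x
              + O1 x * v) * z x)
        ≤ (∫ x in (0:ℝ)..1,
              (T0 x * z x + (∫ ξ in (0:ℝ)..x, T1 x ξ * z ξ)
                + ∫ ξ in x..(1:ℝ), T2 x ξ * z ξ) * z x)
          + 2 * v * (∫ x in (0:ℝ)..1, O1 x * z x)
          - μ * (z 1) ^ 2 - T6 * O2 / Zc * z 1 * v := by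
  intro z hz hbc0 hbc1
  obtain ⟨pa, ha⟩ := ha
  obtain ⟨pb, hb⟩ := hb
  obtain ⟨pc, hc⟩ := hc
  obtain ⟨m, hm⟩ := hMp
  obtain ⟨s, p, q, hK⟩ := aux_sep K1 hK1p
  obtain rfl : a = fun x => pa.eval x := funext ha
  obtain rfl : b = fun x => pb.eval x := funext hb
  obtain rfl : c = fun x => pc.eval x := funext hc
  obtain rfl : M = fun x => m.eval x := funext hm
  obtain rfl : K2 = fun x y => ∑ i ∈ s, (p i).eval y * (q i).eval x := by
    ext x y; rw [hsym, hK]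
  clear ha hb hc hm hK1p hK2p hsym
  subst hK
  have hz1 : ∀ x, HasDerivAt z (deriv z x) x := fun x =>
    (hz.differentiable (by norm_num) x).hasDerivAt
  have hzd : ContDiff ℝ 1 (deriv z) := by
    have : ContDiff ℝ (1 + 1) z := by simpa [one_add_one_eq_two] using hz
    exact (contDiff_succ_iff_deriv.1 this).2.2
  have hz2 : ∀ x, HasDerivAt (deriv z) (deriv (deriv z) x) x := fun x =>
    (hzd.differentiable (by norm_num) x).hasDerivAt
  have hc0 : Continuous z := hz.continuous
  have hc1 : Continuous (deriv z) := hzd.continuous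
  have hc2 : Continuous (deriv (deriv z)) := hzd.continuous_deriv le_rfl
  generalize deriv z = z1 at *
  generalize deriv z1 = z2 at *
  obtain ⟨hw, hw1, hw2⟩ := aux_semisep m s p q z z1 z2 hz1 hz2
  rw [hw2, hw1, hw]
  clear hw hw1 hw2
  simp only [aux_pd, aux_pd2, (aux_sumd _ _ _ _).1, (aux_sumd _ _ _ _).2, (aux_sumd' _ _ _ _).1,
    (aux_sumd' _ _ _ _).2] at *
  set k : ℝ := π ^ 2 / 2 * α * ε1 with hk
  have hkpos : 0 < k := by positivity
  have hS : ∀ x, deriv (fun t => (∑ i ∈ s, (p i).eval t * (q i).eval x) - ∑ i ∈ s, (p i).eval x * (q i).eval t) x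
      = ∑ i ∈ s, ((p i).derivative.eval x * (q i).eval x - (p i).eval x * (q i).derivative.eval x) := by
    intro x
    rw [Finset.sum_sub_distrib]
    exact ((HasDerivAt.fun_sum fun i _ => (aux_d1 (p i) x).mul_const _).sub
      (HasDerivAt.fun_sum fun i _ => (aux_d1 (q i) x).const_mul _)).deriv
  simp only [hS] at hT0
  clear hS
  set S : ℝ → ℝ := fun x => ∑ i ∈ s, ((p i).derivative.eval x * (q i).eval x - (p i).eval x * (q i).derivative.eval x) with hSdef
  have hSc : Continuous S := by fun_prop
  set A : (Fin 2 →₀ ℕ) → Polynomial ℝ := fun i => pa * (p i).derivative.derivative + pb * (p i).derivative + pc * p i with hA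
  set B : (Fin 2 →₀ ℕ) → Polynomial ℝ := fun i => pa * (q i).derivative.derivative + pb * (q i).derivative + pc * q i with hB
  have cp : ∀ r : Polynomial ℝ, Continuous (fun t => r.eval t * z t) := fun r => by fun_prop
  set L : Polynomial ℝ → ℝ → ℝ := fun r x => ∫ t in (0:ℝ)..x, r.eval t * z t with hL
  set R : Polynomial ℝ → ℝ → ℝ := fun r x => ∫ t in x..(1:ℝ), r.eval t * z t with hR
  have cL : ∀ r, Continuous (L r) := fun r => aux_cprim _ (cp r)
  have cR : ∀ r, Continuous (R r) := fun r => aux_cprim' _ (cp r)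
  have hT1' : ∀ x ξ, T1 x ξ = ∑ i ∈ s, ((A i).eval x * (q i).eval ξ + (p i).eval x * (B i).eval ξ) := by
    intro x ξ
    rw [hT1]
    simp only [Finset.mul_sum, ← Finset.sum_add_distrib, hA, hB, Polynomial.eval_add, Polynomial.eval_mul]
    apply Finset.sum_congr rfl; intro i _; ring
  have hI1 : ∀ x, ∫ ξ in (0:ℝ)..x, T1 x ξ * z ξ = ∑ i ∈ s, ((A i).eval x * L (q i) x + (p i).eval x * L (B i) x) := by
    intro x
    simp_rw [hT1', Finset.sum_mul]
    rw [intervalIntegral.integral_finsetSum (fun i _ => by apply Continuous.intervalIntegrable; fun_prop)]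
    apply Finset.sum_congr rfl; intro i _
    simp only [hL]
    rw [← intervalIntegral.integral_const_mul, ← intervalIntegral.integral_const_mul,
      ← intervalIntegral.integral_add (by apply Continuous.intervalIntegrable; fun_prop) (by apply Continuous.intervalIntegrable; fun_prop)]
    congr 1; ext t; ring
  have hI2 : ∀ x, ∫ ξ in x..(1:ℝ), T2 x ξ * z ξ = ∑ i ∈ s, ((B i).eval x * R (p i) x + (q i).eval x * R (A i) x) := by
    intro x
    simp_rw [hT2, hT1', Finset.sum_mul]
    rw [intervalIntegral.integral_finsetSum (fun i _ => by apply Continuous.intervalIntegrable; fun_prop)]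
    apply Finset.sum_congr rfl; intro i _
    simp only [hR]
    rw [← intervalIntegral.integral_const_mul, ← intervalIntegral.integral_const_mul,
      ← intervalIntegral.integral_add (by apply Continuous.intervalIntegrable; fun_prop) (by apply Continuous.intervalIntegrable; fun_prop)]
    congr 1; ext t; ring
  set N1 : ℝ → ℝ := fun x => ∑ i ∈ s, ((A i).eval x * L (q i) x + (B i).eval x * R (p i) x) * z x with hN1
  set N2 : ℝ → ℝ := fun x => ∑ i ∈ s, ((p i).eval x * L (B i) x + (q i).eval x * R (A i) x) * z x with hN2
  have cN1 : Continuous N1 := by fun_prop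
  have cN2 : Continuous N2 := by fun_prop
  have hN : ∫ x in (0:ℝ)..1, N1 x = ∫ x in (0:ℝ)..1, N2 x := by
    simp only [hN1, hN2]
    rw [intervalIntegral.integral_finsetSum (fun i _ => by apply Continuous.intervalIntegrable; fun_prop),
      intervalIntegral.integral_finsetSum (fun i _ => by apply Continuous.intervalIntegrable; fun_prop)]
    apply Finset.sum_congr rfl; intro i _
    exact aux_kernel (A i) (B i) (p i) (q i) z hc0
  have cT0 : Continuous T0 := by rw [show T0 = _ from funext hT0]; fun_prop
  -- boundary function
  set E : ℝ → ℝ := fun x => 2 * ((pa * m).eval x * (z x * z1 x))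
    + (pa * m.derivative - pa.derivative * m + pb * m).eval x * z x ^ 2 with hE
  set E' : ℝ → ℝ := fun x => 2 * ((pa * m).derivative.eval x * (z x * z1 x)
      + (pa * m).eval x * (z1 x * z1 x + z x * z2 x))
    + ((pa * m.derivative - pa.derivative * m + pb * m).derivative.eval x * z x ^ 2
      + (pa * m.derivative - pa.derivative * m + pb * m).eval x * (2 * z x * z1 x)) with hE'
  have cE' : Continuous E' := by fun_prop
  have hEE : ∀ x, HasDerivAt E (E' x) x := by
    intro x
    have h2 : HasDerivAt (fun x => z x ^ 2) (2 * z x * z1 x) x := by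
      simpa using (hz1 x).fun_pow 2
    exact (((aux_d1 _ x).mul ((hz1 x).mul (hz2 x))).const_mul 2).add ((aux_d1 _ x).mul h2)
  have hEint : ∫ x in (0:ℝ)..1, E' x = E 1 - E 0 :=
    intervalIntegral.integral_eq_sub_of_hasDerivAt (fun x _ => hEE x) (cE'.intervalIntegrable _ _)
  have ii : ∀ f : ℝ → ℝ, Continuous f → IntervalIntegrable f volume 0 1 := fun f hf => hf.intervalIntegrable _ _
  set Q : ℝ → ℝ := fun x => pa.eval x * m.eval x * z1 x ^ 2 with hQ
  have cQ : Continuous Q := by fun_prop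
  have hLHS : 2 * (∫ x in (0:ℝ)..1,
            (pa.eval x * (m.derivative.derivative.eval x * z x
      + 2 * (m.derivative.eval x * z1 x) + m.eval x * z2 x +
      (∑ i ∈ s, ((p i).derivative.derivative.eval x * L (q i) x
        + (q i).derivative.derivative.eval x * R (p i) x)) + S x * z x)
              + pb.eval x * (m.derivative.eval x * z x + m.eval x * z1 x +
      ∑ i ∈ s, ((p i).derivative.eval x * L (q i) x + (q i).derivative.eval x * R (p i) x))
              + pc.eval x * (m.eval x * z x + ∑ i ∈ s, ((p i).eval x * L (q i) x + (q i).eval x * R (p i) x))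
              + O1 x * v) * z x) =
      (∫ x in (0:ℝ)..1, E' x) - 2 * (∫ x in (0:ℝ)..1, Q x) + (∫ x in (0:ℝ)..1, T0 x * z x ^ 2)
        + k * (∫ x in (0:ℝ)..1, z x ^ 2) + 2 * (∫ x in (0:ℝ)..1, N1 x) + 2 * v * (∫ x in (0:ℝ)..1, O1 x * z x) := by
    simp only [← intervalIntegral.integral_const_mul]
    rw [← intervalIntegral.integral_sub (ii _ (by fun_prop)) (ii _ (by fun_prop)),
      ← intervalIntegral.integral_add (ii _ (by fun_prop)) (ii _ (by fun_prop)),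
      ← intervalIntegral.integral_add (ii _ (by fun_prop)) (ii _ (by fun_prop)),
      ← intervalIntegral.integral_add (ii _ (by fun_prop)) (ii _ (by fun_prop)),
      ← intervalIntegral.integral_add (ii _ (by fun_prop)) (ii _ (by fun_prop))]
    congr 1; ext x
    have hN1x : N1 x = (pa.eval x * (∑ i ∈ s, ((p i).derivative.derivative.eval x * L (q i) x
        + (q i).derivative.derivative.eval x * R (p i) x)) + pb.eval x * (∑ i ∈ s, ((p i).derivative.eval x * L (q i) x + (q i).derivative.eval x * R (p i) x)) + pc.eval x * (∑ i ∈ s, ((p i).eval x * L (q i) x + (q i).eval x * R (p i) x))) * z x := by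
      simp only [hN1, Finset.mul_sum, ← Finset.sum_add_distrib, hA, hB, Polynomial.eval_add, Polynomial.eval_mul, ← Finset.sum_mul]
      congr 1
      apply Finset.sum_congr rfl; intro i _; ring
    rw [hN1x, hT0 x]
    simp only [hE', hQ, Polynomial.eval_add, Polynomial.eval_sub, Polynomial.eval_mul, Polynomial.derivative_mul, Polynomial.derivative_add, Polynomial.derivative_sub]
    ring
  have hRHS : (∫ x in (0:ℝ)..1,
              (T0 x * z x + (∫ ξ in (0:ℝ)..x, T1 x ξ * z ξ)
                + ∫ ξ in x..(1:ℝ), T2 x ξ * z ξ) * z x) =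
      (∫ x in (0:ℝ)..1, T0 x * z x ^ 2) + (∫ x in (0:ℝ)..1, N1 x) + (∫ x in (0:ℝ)..1, N2 x) := by
    rw [← intervalIntegral.integral_add (ii _ (by fun_prop)) (ii _ (by fun_prop)),
      ← intervalIntegral.integral_add (ii _ (by fun_prop)) (ii _ (by fun_prop))]
    congr 1; ext x
    rw [hI1, hI2]
    simp only [hN1, hN2, Finset.sum_add_distrib, add_mul, Finset.sum_mul]
    ring
  refine (le_of_eq hLHS).trans ?_
  rw [hRHS, ← hN, hEint]
  -- Wirtinger
  have hW := aux_wirt (fun x => z x - z 0) z1 (fun x => (hz1 x).sub_const _) hc1 (sub_self _)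
  have hWe : ∫ x in (0:ℝ)..1, (z x - z 0) ^ 2 = (∫ x in (0:ℝ)..1, z x ^ 2) - 2 * z 0 * (∫ x in (0:ℝ)..1, z x) + z 0 ^ 2 := by
    have : ∀ x, (z x - z 0) ^ 2 = z x ^ 2 - 2 * z 0 * z x + z 0 ^ 2 := fun x => by ring
    simp only [this]
    rw [intervalIntegral.integral_add (ii _ (by fun_prop)) (ii _ (by fun_prop)),
      intervalIntegral.integral_sub (ii _ (by fun_prop)) (ii _ (by fun_prop)),
      intervalIntegral.integral_const_mul]
    simp
  have hQge : α * ε1 * (∫ x in (0:ℝ)..1, z1 x ^ 2) ≤ ∫ x in (0:ℝ)..1, Q x := by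
    rw [← intervalIntegral.integral_const_mul]
    apply intervalIntegral.integral_mono_on zero_le_one (ii _ (by fun_prop)) (ii _ cQ)
    intro x hx
    have := mul_le_mul (haα x hx) (hMε x hx) hε1.le (hα.le.trans (haα x hx))
    exact mul_le_mul_of_nonneg_right this (sq_nonneg _)
  have hbk : 2 * pa.eval 0 * (∫ ξ in (0:ℝ)..1, (∑ i ∈ s, (p i).eval ξ * (q i).derivative.eval 0) * z ξ)
      = - (2 * k) * ∫ x in (0:ℝ)..1, z x := by
    rw [← intervalIntegral.integral_const_mul, ← intervalIntegral.integral_const_mul]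
    apply intervalIntegral.integral_congr
    intro x hx
    rw [Set.uIcc_of_le zero_le_one] at hx
    have h1 := hT4 x hx
    rw [hT4def] at h1
    have : 2 * pa.eval 0 * (∑ i ∈ s, (p i).eval x * (q i).derivative.eval 0) = - (2 * k) := by
      rw [hk]; linarith
    simp only [← mul_assoc]
    rw [this]
  rw [hWe] at hW
  set I0 := ∫ ξ in (0:ℝ)..1, (∑ i ∈ s, (p i).eval ξ * (q i).derivative.eval 0) * z ξ
  generalize (∫ x in (0:ℝ)..1, z x ^ 2) = Z2 at *
  generalize (∫ x in (0:ℝ)..1, z x) = Zi at *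
  generalize (∫ x in (0:ℝ)..1, z1 x ^ 2) = W2 at *
  generalize (∫ x in (0:ℝ)..1, Q x) = Qi at *
  have hmain : k * (Z2 - 2 * z 0 * Zi + z 0 ^ 2) ≤ 2 * Qi := by
    have := mul_le_mul_of_nonneg_left hW (mul_pos hα hε1).le
    rw [hk]
    linarith
  have hE1 : E 1 = - μ * z 1 ^ 2 - T6 * O2 / Zc * z 1 * v := by
    simp only [hE, Polynomial.eval_add, Polynomial.eval_sub, Polynomial.eval_mul]
    rw [hbc1, hμdef, hT5, hT6]; ring
  have hE0 : E 0 = - (T3 + k) * z 0 ^ 2 + 2 * k * z 0 * Zi := by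
    simp only [hE, Polynomial.eval_add, Polynomial.eval_sub, Polynomial.eval_mul]
    rw [hT3def]
    linear_combination 2 * pa.eval 0 * z 0 * hbc0 - z 0 * hbk
  rw [hE1, hE0]
  nlinarith [mul_nonneg (neg_nonneg.2 hT3) (sq_nonneg (z 0))]

end
end

section
/- (Dual Γ3 identity from the proof of Lemma 1.) Let a : [0,1] → ℝ be continuous, K1, K2 : [0,1]² → ℝ twice continuously differentiable with K1(x,ξ) = K2(ξ,x) for all x, ξ, and z : [0,1] → ℝ continuously differentiable. Then ∫₀¹ z(x)·a(x)·(d²/dx²)[∫₀^x K1(x,ξ)z(ξ)dξ + ∫_x^1 K2(x,ξ)z(ξ)dξ] dx = ∫₀¹ z(x)²·a(x)·[∂/∂x (K1(x,ξ) − K2(x,ξ))]evaluated at ξ = x dx + (1/2)∫₀¹∫₀^x z(x)·[a(x)·∂²K1/∂x²(x,ξ) + a(ξ)·∂²K1/∂ξ²(x,ξ)]·z(ξ) dξ dx + (1/2)∫₀¹∫_x^1 z(x)·[a(x)·∂²K2/∂x²(x,ξ) + a(ξ)·∂²K2/∂ξ²(x,ξ)]·z(ξ) dξ dx. -/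
open MeasureTheory

theorem aux_partial (n : ℕ) (K : ℝ → ℝ → ℝ)
    (hK : ContDiff ℝ (n+1 : ℕ) (fun p : ℝ × ℝ => K p.1 p.2)) :
    (∀ x ξ, HasDerivAt (fun t => K t ξ) (deriv (fun t => K t ξ) x) x) ∧
    ContDiff ℝ n (fun p : ℝ × ℝ => deriv (fun t => K t p.2) p.1) := by
  have h1 : ∀ x ξ, HasDerivAt (fun t => K t ξ)
      (fderiv ℝ (fun p : ℝ × ℝ => K p.1 p.2) (x, ξ) (1, 0)) x := by
    intro x ξ
    have hd : DifferentiableAt ℝ (fun p : ℝ × ℝ => K p.1 p.2) (x, ξ) :=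
      (hK.differentiable (by simp)) _
    have hc : HasDerivAt (fun t : ℝ => (t, ξ)) ((1 : ℝ), (0 : ℝ)) x :=
      (hasDerivAt_id x).prodMk (hasDerivAt_const x ξ)
    exact hd.hasFDerivAt.comp_hasDerivAt x hc
  refine ⟨fun x ξ => (h1 x ξ).differentiableAt.hasDerivAt, ?_⟩
  have : (fun p : ℝ × ℝ => deriv (fun t => K t p.2) p.1)
      = fun p => fderiv ℝ (fun p : ℝ × ℝ => K p.1 p.2) p (1, 0) := by
    funext p
    exact (h1 p.1 p.2).deriv
  rw [this]
  have h2 : ContDiff ℝ n (fderiv ℝ (fun p : ℝ × ℝ => K p.1 p.2)) :=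
    hK.fderiv_right (by push_cast; exact le_rfl)
  exact h2.clm_apply contDiff_const

theorem aux_leib (G G' : ℝ → ℝ → ℝ)
    (hG : Continuous (fun p : ℝ × ℝ => G p.1 p.2))
    (hG' : Continuous (fun p : ℝ × ℝ => G' p.1 p.2))
    (hd : ∀ x ξ, HasDerivAt (fun t => G t ξ) (G' x ξ) x) (c x : ℝ) :
    HasDerivAt (fun t => ∫ ξ in c..t, G t ξ) (G x x + ∫ ξ in c..x, G' x ξ) x := by
  have hGs : ∀ t, Continuous (G t) := fun t =>
    hG.comp (by fun_prop : Continuous fun ξ : ℝ => (t, ξ))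
  have hGs' : ∀ t, Continuous (G' t) := fun t =>
    hG'.comp (by fun_prop : Continuous fun ξ : ℝ => (t, ξ))
  have d1 : ∀ t u, HasDerivAt (fun t => ∫ ξ in c..u, G t ξ) (∫ ξ in c..u, G' t ξ) t := by
    intro t u
    obtain ⟨C, hC⟩ := ((isCompact_Icc (a := t - 1) (b := t + 1)).prod
      (isCompact_uIcc (a := c) (b := u))).exists_bound_of_continuousOn hG'.continuousOn
    refine (intervalIntegral.hasDerivAt_integral_of_dominated_loc_of_deriv_le (F' := G')
      (s := Set.Icc (t-1) (t+1)) (bound := fun _ => C)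
      (Icc_mem_nhds (by linarith) (by linarith)) ?_ ?_ ?_ ?_ ?_ ?_).2
    · exact Filter.Eventually.of_forall fun y => (hGs y).aestronglyMeasurable
    · exact (hGs t).intervalIntegrable _ _
    · exact (hGs' t).aestronglyMeasurable
    · exact Filter.Eventually.of_forall fun ξ hξ y hy =>
        hC (y, ξ) ⟨hy, Set.uIoc_subset_uIcc hξ⟩
    · exact intervalIntegrable_const
    · exact Filter.Eventually.of_forall fun ξ _ y _ => hd y ξ
  have d2 : ∀ t u, HasDerivAt (fun u => ∫ ξ in c..u, G t ξ) (G t u) u := fun t u =>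
    (hGs t).integral_hasStrictDerivAt c u |>.hasDerivAt
  have hI : Continuous (fun p : ℝ × ℝ => ∫ ξ in c..p.2, G' p.1 ξ) :=
    intervalIntegral.continuous_parametric_primitive_of_continuous hG'
  have key := hasStrictFDerivAt_uncurry_coprod (𝕜 := ℝ) (u := (x, x))
    (f := fun t u => ∫ ξ in c..u, G t ξ)
    (f₁ := fun t u => ContinuousLinearMap.toSpanSingleton ℝ (∫ ξ in c..u, G' t ξ))
    (f₂ := fun t u => ContinuousLinearMap.toSpanSingleton ℝ (G t u))
    (Filter.Eventually.of_forall fun v => (d1 v.1 v.2).hasFDerivAt)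
    (Filter.Eventually.of_forall fun v => (d2 v.1 v.2).hasFDerivAt)
    ((ContinuousLinearMap.toSpanSingletonCLE (𝕜 := ℝ) (E := ℝ)).continuous.comp hI).continuousAt
    ((ContinuousLinearMap.toSpanSingletonCLE (𝕜 := ℝ) (E := ℝ)).continuous.comp hG).continuousAt
  have hc : HasDerivAt (fun t : ℝ => (t, t)) ((1 : ℝ), (1 : ℝ)) x :=
    (hasDerivAt_id x).prodMk (hasDerivAt_id x)
  have := HasFDerivAt.comp_hasDerivAt (f := fun t : ℝ => (t, t)) x key.hasFDerivAt hc
  refine HasDerivAt.congr_deriv this ?_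
  simp [Function.HasUncurry.uncurry, add_comm]

theorem aux_swap_s12 (f : ℝ → ℝ → ℝ) (hf : Continuous (fun p : ℝ × ℝ => f p.1 p.2)) :
    (∫ x in (0:ℝ)..1, ∫ ξ in (0:ℝ)..x, f x ξ) = ∫ x in (0:ℝ)..1, ∫ ξ in x..(1:ℝ), f ξ x := by
  have hfs : ∀ t, Continuous (f t) := fun t =>
    hf.comp (by fun_prop : Continuous fun ξ : ℝ => (t, ξ))
  have hfs2 : ∀ t, Continuous (fun x => f x t) := fun t =>
    hf.comp (by fun_prop : Continuous fun ξ : ℝ => (ξ, t))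
  have hsw : Continuous (fun p : ℝ × ℝ => f p.2 p.1) :=
    hf.comp (by fun_prop : Continuous fun p : ℝ × ℝ => (p.2, p.1))
  have hP : ∀ t, HasDerivAt (fun t => ∫ x in (0:ℝ)..t, ∫ ξ in (0:ℝ)..x, f x ξ)
      (∫ ξ in (0:ℝ)..t, f t ξ) t := fun t =>
    ((intervalIntegral.continuous_parametric_intervalIntegral_of_continuous (f := f) (a₀ := 0)
      hf continuous_id).integral_hasStrictDerivAt 0 t).hasDerivAt
  have hQ : ∀ t, HasDerivAt (fun t => ∫ x in (0:ℝ)..t, ∫ ξ in x..t, f ξ x)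
      (∫ ξ in (0:ℝ)..t, f t ξ) t := by
    intro t
    have hc : Continuous (fun p : ℝ × ℝ => ∫ ξ in p.2..p.1, f ξ p.2) := by
      have e : (fun p : ℝ × ℝ => ∫ ξ in p.2..p.1, f ξ p.2) = fun p : ℝ × ℝ =>
          (∫ ξ in (0:ℝ)..p.1, f ξ p.2) - ∫ ξ in (0:ℝ)..p.2, f ξ p.2 := by
        funext p
        rw [intervalIntegral.integral_interval_sub_left] <;>
          exact (hfs2 _).intervalIntegrable _ _
      rw [e]
      have h3 : Continuous (Function.uncurry fun (p : ℝ × ℝ) ξ => f ξ p.2) :=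
        hf.comp (by fun_prop : Continuous fun q : (ℝ × ℝ) × ℝ => (q.2, q.1.2))
      exact (intervalIntegral.continuous_parametric_intervalIntegral_of_continuous h3
        continuous_fst).sub
        (intervalIntegral.continuous_parametric_intervalIntegral_of_continuous h3 continuous_snd)
    have := aux_leib (fun t x => ∫ ξ in x..t, f ξ x) f hc hf
      (fun x ξ => ((hfs2 ξ).integral_hasStrictDerivAt ξ x).hasDerivAt) 0 t
    simpa using this
  have := is_const_of_deriv_eq_zero
    (f := fun t => (∫ x in (0:ℝ)..t, ∫ ξ in (0:ℝ)..x, f x ξ)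
      - ∫ x in (0:ℝ)..t, ∫ ξ in x..t, f ξ x)
    (fun t => ((hP t).sub (hQ t)).differentiableAt)
    (fun t => ((hP t).sub (hQ t)).deriv.trans (sub_self _)) 1 0
  simp at this
  linarith

/-- Dual Γ₃ identity from the proof of Lemma 1. -/
theorem dual_gamma3_identity
    (a : ℝ → ℝ) (ha : Continuous a)
    (K1 K2 : ℝ → ℝ → ℝ)
    (hK1 : ContDiff ℝ 2 (fun p : ℝ × ℝ => K1 p.1 p.2))
    (hK2 : ContDiff ℝ 2 (fun p : ℝ × ℝ => K2 p.1 p.2))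
    (hsym : ∀ x ξ : ℝ, K1 x ξ = K2 ξ x)
    (z : ℝ → ℝ) (hz : ContDiff ℝ 1 z) :
    (∫ x in (0:ℝ)..1, z x * a x *
        iteratedDeriv 2
          (fun t => (∫ ξ in (0:ℝ)..t, K1 t ξ * z ξ)
            + ∫ ξ in t..(1:ℝ), K2 t ξ * z ξ) x)
      = (∫ x in (0:ℝ)..1,
            (z x) ^ 2 * a x * deriv (fun t => K1 t x - K2 t x) x)
        + (1/2) * (∫ x in (0:ℝ)..1, ∫ ξ in (0:ℝ)..x,
            z x * (a x * iteratedDeriv 2 (fun t => K1 t ξ) x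
              + a ξ * iteratedDeriv 2 (fun s => K1 x s) ξ) * z ξ)
        + (1/2) * (∫ x in (0:ℝ)..1, ∫ ξ in x..(1:ℝ),
            z x * (a x * iteratedDeriv 2 (fun t => K2 t ξ) x
              + a ξ * iteratedDeriv 2 (fun s => K2 x s) ξ) * z ξ) := by
  have hzc : Continuous z := hz.continuous
  have main : ∀ K : ℝ → ℝ → ℝ, ContDiff ℝ 2 (fun p : ℝ × ℝ => K p.1 p.2) →
      ∃ A B : ℝ → ℝ → ℝ, Continuous (fun p : ℝ × ℝ => A p.1 p.2) ∧
        Continuous (fun p : ℝ × ℝ => B p.1 p.2) ∧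
        (∀ x ξ, HasDerivAt (fun t => K t ξ) (A x ξ) x) ∧
        (∀ x ξ, HasDerivAt (fun t => A t ξ) (B x ξ) x) ∧
        (∀ x ξ, iteratedDeriv 2 (fun t => K t ξ) x = B x ξ) := by
    intro K hK
    obtain ⟨p1, p2⟩ := aux_partial 1 K (by exact_mod_cast hK)
    obtain ⟨q1, q2⟩ := aux_partial 0 (fun x ξ => deriv (fun t => K t ξ) x) (by simpa using p2)
    refine ⟨_, _, p2.continuous, q2.continuous, p1, q1, ?_⟩
    intro x ξ
    simp only [iteratedDeriv_succ, iteratedDeriv_zero]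
  obtain ⟨A1, B1, cA1, cB1, dK1, dA1, e1⟩ := main K1 hK1
  obtain ⟨A2, B2, cA2, cB2, dK2, dA2, e2⟩ := main K2 hK2
  have e3 : ∀ x ξ, iteratedDeriv 2 (fun s => K1 x s) ξ = B2 ξ x := by
    intro x ξ
    rw [← e2]; simp only [hsym]
  have e4 : ∀ x ξ, iteratedDeriv 2 (fun s => K2 x s) ξ = B1 ξ x := by
    intro x ξ
    rw [← e1]; simp only [hsym]
  have e5 : ∀ x, deriv (fun t => K1 t x - K2 t x) x = A1 x x - A2 x x := fun x =>
    ((dK1 x x).sub (dK2 x x)).deriv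
  have L : ∀ G G' : ℝ → ℝ → ℝ, Continuous (fun p : ℝ × ℝ => G p.1 p.2) →
      Continuous (fun p : ℝ × ℝ => G' p.1 p.2) →
      (∀ x ξ, HasDerivAt (fun t => G t ξ) (G' x ξ) x) → ∀ c x,
      HasDerivAt (fun t => ∫ ξ in c..t, G t ξ * z ξ)
        (G x x * z x + ∫ ξ in c..x, G' x ξ * z ξ) x := by
    intro G G' h1 h2 h3 c x
    exact aux_leib (fun t ξ => G t ξ * z ξ) (fun t ξ => G' t ξ * z ξ)
      (h1.mul (hzc.comp continuous_snd)) (h2.mul (hzc.comp continuous_snd))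
      (fun x ξ => (h3 x ξ).mul_const _) c x
  have f1 : ∀ x, HasDerivAt (fun t => (∫ ξ in (0:ℝ)..t, K1 t ξ * z ξ)
            + ∫ ξ in t..(1:ℝ), K2 t ξ * z ξ)
      ((∫ ξ in (0:ℝ)..x, A1 x ξ * z ξ) + ∫ ξ in x..(1:ℝ), A2 x ξ * z ξ) x := by
    intro x
    have := (L K1 A1 hK1.continuous cA1 dK1 0 x).sub (L K2 A2 hK2.continuous cA2 dK2 1 x)
    simp only [intervalIntegral.integral_symm (1:ℝ), ← sub_eq_add_neg]
    refine HasDerivAt.congr_deriv this ?_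
    rw [hsym x x]; ring
  have f2 : ∀ x, HasDerivAt (fun t => (∫ ξ in (0:ℝ)..t, A1 t ξ * z ξ)
            + ∫ ξ in t..(1:ℝ), A2 t ξ * z ξ)
      ((A1 x x - A2 x x) * z x +
        ((∫ ξ in (0:ℝ)..x, B1 x ξ * z ξ) + ∫ ξ in x..(1:ℝ), B2 x ξ * z ξ)) x := by
    intro x
    have := (L A1 B1 cA1 cB1 dA1 0 x).sub (L A2 B2 cA2 cB2 dA2 1 x)
    simp only [intervalIntegral.integral_symm (1:ℝ), ← sub_eq_add_neg]
    refine HasDerivAt.congr_deriv this ?_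
    ring
  have f3 : ∀ x, iteratedDeriv 2 (fun t => (∫ ξ in (0:ℝ)..t, K1 t ξ * z ξ)
            + ∫ ξ in t..(1:ℝ), K2 t ξ * z ξ) x = ((A1 x x - A2 x x) * z x +
        ((∫ ξ in (0:ℝ)..x, B1 x ξ * z ξ) + ∫ ξ in x..(1:ℝ), B2 x ξ * z ξ)) := by
    intro x
    rw [iteratedDeriv_succ, iteratedDeriv_one, funext fun x => (f1 x).deriv]
    exact (f2 x).deriv
  simp only [f3, e1, e2, e3, e4, e5]
  -- continuity facts
  have cB1' : Continuous (fun p : ℝ × ℝ => B1 p.2 p.1) := cB1.comp continuous_swap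
  have cB2' : Continuous (fun p : ℝ × ℝ => B2 p.2 p.1) := cB2.comp continuous_swap
  have cf : ∀ B : ℝ → ℝ → ℝ, Continuous (fun p : ℝ × ℝ => B p.1 p.2) → ∀ w : ℝ → ℝ,
      Continuous w → Continuous (fun p : ℝ × ℝ => z p.1 * (w p.1 * B p.1 p.2) * z p.2) := by
    intro B hB w hw; fun_prop
  have cg : ∀ B : ℝ → ℝ → ℝ, Continuous (fun p : ℝ × ℝ => B p.1 p.2) → 
      Continuous (fun p : ℝ × ℝ => z p.1 * (a p.2 * B p.2 p.1) * z p.2) := by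
    intro B hB
    have : Continuous (fun p : ℝ × ℝ => B p.2 p.1) := hB.comp continuous_swap
    fun_prop
  have sl : ∀ g : ℝ → ℝ → ℝ, Continuous (fun p : ℝ × ℝ => g p.1 p.2) → ∀ x c d,
      IntervalIntegrable (g x) volume c d := fun g hg x c d =>
    (hg.comp (by fun_prop : Continuous fun ξ : ℝ => (x, ξ))).intervalIntegrable _ _
  have lo : ∀ g : ℝ → ℝ → ℝ, Continuous (fun p : ℝ × ℝ => g p.1 p.2) → ∀ c : ℝ,
      Continuous (fun x => ∫ ξ in c..x, g x ξ) := fun g hg c =>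
    intervalIntegral.continuous_parametric_intervalIntegral_of_continuous hg continuous_id
  have hi : ∀ g : ℝ → ℝ → ℝ, Continuous (fun p : ℝ × ℝ => g p.1 p.2) → ∀ c : ℝ,
      Continuous (fun x => ∫ ξ in x..c, g x ξ) := fun g hg c => by
    simp only [intervalIntegral.integral_symm c]
    exact (lo g hg c).neg
  have c1 := cf B1 cB1 a ha
  have c2 := cf B2 cB2 a ha
  have c3 := cg B1 cB1
  have c4 := cg B2 cB2
  -- split the right hand side
  have r1 : (∫ x in (0:ℝ)..1, ∫ ξ in (0:ℝ)..x, z x * (a x * B1 x ξ + a ξ * B2 ξ x) * z ξ)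
      = (∫ x in (0:ℝ)..1, ∫ ξ in (0:ℝ)..x, z x * (a x * B1 x ξ) * z ξ)
        + ∫ x in (0:ℝ)..1, ∫ ξ in (0:ℝ)..x, z x * (a ξ * B2 ξ x) * z ξ := by
    rw [← intervalIntegral.integral_add ((lo (fun x ξ => z x * (a x * B1 x ξ) * z ξ) c1 0).intervalIntegrable _ _)
      ((lo (fun x ξ => z x * (a ξ * B2 ξ x) * z ξ) c4 0).intervalIntegrable _ _)]
    congr 1; funext x
    rw [← intervalIntegral.integral_add (sl (fun x ξ => z x * (a x * B1 x ξ) * z ξ) c1 x _ _) (sl (fun x ξ => z x * (a ξ * B2 ξ x) * z ξ) c4 x _ _)]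
    congr 1; funext ξ; ring
  have r2 : (∫ x in (0:ℝ)..1, ∫ ξ in x..(1:ℝ), z x * (a x * B2 x ξ + a ξ * B1 ξ x) * z ξ)
      = (∫ x in (0:ℝ)..1, ∫ ξ in x..(1:ℝ), z x * (a x * B2 x ξ) * z ξ)
        + ∫ x in (0:ℝ)..1, ∫ ξ in x..(1:ℝ), z x * (a ξ * B1 ξ x) * z ξ := by
    rw [← intervalIntegral.integral_add ((hi (fun x ξ => z x * (a x * B2 x ξ) * z ξ) c2 1).intervalIntegrable _ _)
      ((hi (fun x ξ => z x * (a ξ * B1 ξ x) * z ξ) c3 1).intervalIntegrable _ _)]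
    congr 1; funext x
    rw [← intervalIntegral.integral_add (sl (fun x ξ => z x * (a x * B2 x ξ) * z ξ) c2 x _ _) (sl (fun x ξ => z x * (a ξ * B1 ξ x) * z ξ) c3 x _ _)]
    congr 1; funext ξ; ring
  have s1 : (∫ x in (0:ℝ)..1, ∫ ξ in (0:ℝ)..x, z x * (a ξ * B2 ξ x) * z ξ)
      = ∫ x in (0:ℝ)..1, ∫ ξ in x..(1:ℝ), z x * (a x * B2 x ξ) * z ξ := by
    rw [aux_swap_s12 (fun x ξ => z x * (a ξ * B2 ξ x) * z ξ) c4]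
    congr 1; funext x; congr 1; funext ξ; ring
  have s2 : (∫ x in (0:ℝ)..1, ∫ ξ in (0:ℝ)..x, z x * (a x * B1 x ξ) * z ξ)
      = ∫ x in (0:ℝ)..1, ∫ ξ in x..(1:ℝ), z x * (a ξ * B1 ξ x) * z ξ := by
    rw [aux_swap_s12 (fun x ξ => z x * (a x * B1 x ξ) * z ξ) c1]
    congr 1; funext x; congr 1; funext ξ; ring
  have cd : Continuous (fun x => (z x) ^ 2 * a x * (A1 x x - A2 x x)) := by
    have h1 : Continuous (fun x => A1 x x) :=
      cA1.comp (by fun_prop : Continuous fun x : ℝ => (x, x))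
    have h2 : Continuous (fun x => A2 x x) :=
      cA2.comp (by fun_prop : Continuous fun x : ℝ => (x, x))
    fun_prop
  have l1 : (∫ x in (0:ℝ)..1, z x * a x * ((A1 x x - A2 x x) * z x +
        ((∫ ξ in (0:ℝ)..x, B1 x ξ * z ξ) + ∫ ξ in x..(1:ℝ), B2 x ξ * z ξ)))
      = (∫ x in (0:ℝ)..1, (z x) ^ 2 * a x * (A1 x x - A2 x x))
        + ((∫ x in (0:ℝ)..1, ∫ ξ in (0:ℝ)..x, z x * (a x * B1 x ξ) * z ξ)
        + ∫ x in (0:ℝ)..1, ∫ ξ in x..(1:ℝ), z x * (a x * B2 x ξ) * z ξ) := by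
    have cs : Continuous (fun x => (∫ ξ in (0:ℝ)..x, z x * (a x * B1 x ξ) * z ξ)
        + ∫ ξ in x..(1:ℝ), z x * (a x * B2 x ξ) * z ξ) :=
      (lo (fun x ξ => z x * (a x * B1 x ξ) * z ξ) c1 0).add
        (hi (fun x ξ => z x * (a x * B2 x ξ) * z ξ) c2 1)
    rw [← intervalIntegral.integral_add
      ((lo (fun x ξ => z x * (a x * B1 x ξ) * z ξ) c1 0).intervalIntegrable _ _)
      ((hi (fun x ξ => z x * (a x * B2 x ξ) * z ξ) c2 1).intervalIntegrable _ _),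
      ← intervalIntegral.integral_add (cd.intervalIntegrable _ _) (cs.intervalIntegrable _ _)]
    congr 1; funext x
    have t : ∀ (B : ℝ → ℝ → ℝ) (c d : ℝ), (∫ ξ in c..d, z x * (a x * B x ξ) * z ξ)
        = z x * a x * ∫ ξ in c..d, B x ξ * z ξ := by
      intro B c d
      rw [← intervalIntegral.integral_const_mul]
      congr 1; funext ξ; ring
    rw [t, t]; ring
  rw [l1, r1, r2, s1, ← s2]
  ring
end

section
/- (Dual Γ4 identity from the proof of Lemma 1.) Let b : [0,1] → ℝ be continuous, K1, K2 : [0,1]² → ℝ continuously differentiable with K1(x,ξ) = K2(ξ,x) for all x, ξ, and z : [0,1] → ℝ continuous. Then ∫₀¹ z(x)·b(x)·(d/dx)[∫₀^x K1(x,ξ)z(ξ)dξ + ∫_x^1 K2(x,ξ)z(ξ)dξ] dx = (1/2)∫₀¹∫₀^x z(x)·[b(x)·∂K1/∂x(x,ξ) + b(ξ)·∂K1/∂ξ(x,ξ)]·z(ξ) dξ dx + (1/2)∫₀¹∫_x^1 z(x)·[b(x)·∂K2/∂x(x,ξ) + b(ξ)·∂K2/∂ξ(x,ξ)]·z(ξ)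 dξ dx. -/
open MeasureTheory

lemma leib_aux (f f' : ℝ → ℝ → ℝ) (hf : Continuous (fun p : ℝ × ℝ => f p.1 p.2))
    (hf' : Continuous (fun p : ℝ × ℝ => f' p.1 p.2))
    (hd : ∀ t s, HasDerivAt (fun t => f t s) (f' t s) t) (a x : ℝ) :
    HasDerivAt (fun t => ∫ s in a..t, f t s) (f x x + ∫ s in a..x, f' x s) x := by
  have hfs : ∀ t, Continuous (f t) := fun t =>
    hf.comp (continuous_const.prodMk continuous_id)
  have hfs' : ∀ t, Continuous (f' t) := fun t =>
    hf'.comp (continuous_const.prodMk continuous_id)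
  have h1 : ∀ v : ℝ × ℝ, HasDerivAt (fun t => ∫ s in a..v.2, f t s)
      (∫ s in a..v.2, f' v.1 s) v.1 := by
    intro v
    obtain ⟨C, hC⟩ := ((isCompact_closedBall v.1 1).prod
      (isCompact_uIcc (a := a) (b := v.2))).exists_bound_of_continuousOn hf'.continuousOn
    refine (intervalIntegral.hasDerivAt_integral_of_dominated_loc_of_deriv_le
      (s := Metric.closedBall v.1 1) (bound := fun _ => C) (F' := f')
      (Metric.closedBall_mem_nhds _ one_pos) ?_ ?_ ?_ ?_ ?_ ?_).2
    · exact Filter.Eventually.of_forall fun t => (hfs t).aestronglyMeasurable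
    · exact (hfs _).intervalIntegrable _ _
    · exact (hfs' _).aestronglyMeasurable
    · exact Filter.Eventually.of_forall fun s hs t ht =>
        hC (t, s) ⟨ht, Set.uIoc_subset_uIcc hs⟩
    · simp
    · exact Filter.Eventually.of_forall fun s _ t _ => hd t s
  have h2 : ∀ v : ℝ × ℝ, HasDerivAt (fun u => ∫ s in a..u, f v.1 s) (f v.1 v.2) v.2 :=
    fun v => (hfs v.1).integral_hasStrictDerivAt a v.2 |>.hasDerivAt
  have c1 : Continuous (fun v : ℝ × ℝ => ∫ s in a..v.2, f' v.1 s) :=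
    intervalIntegral.continuous_parametric_primitive_of_continuous (f := f') hf'
  have key := hasStrictFDerivAt_uncurry_coprod (𝕜 := ℝ) (u := (x, x))
    (f := fun t u => ∫ s in a..u, f t s)
    (f₁ := fun t u => ContinuousLinearMap.toSpanSingleton ℝ (∫ s in a..u, f' t s))
    (f₂ := fun t u => ContinuousLinearMap.toSpanSingleton ℝ (f t u))
    (Filter.Eventually.of_forall fun v => (h1 v).hasFDerivAt)
    (Filter.Eventually.of_forall fun v => (h2 v).hasFDerivAt)
    (((ContinuousLinearMap.toSpanSingletonCLE (𝕜 := ℝ) (E := ℝ)).continuous.comp c1).continuousAt)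
    (((ContinuousLinearMap.toSpanSingletonCLE (𝕜 := ℝ) (E := ℝ)).continuous.comp hf).continuousAt)
  have k2 := HasFDerivAt.comp_hasDerivAt (f := fun t : ℝ => (t, t)) x key.hasFDerivAt ((hasDerivAt_id x).prodMk (hasDerivAt_id x))
  convert! k2 using 1
  simp [Function.HasUncurry.uncurry, add_comm]

lemma swap_aux (f : ℝ → ℝ → ℝ) (hf : Continuous (fun p : ℝ × ℝ => f p.1 p.2)) (y : ℝ) :
    (∫ x in (0:ℝ)..y, ∫ ξ in (0:ℝ)..x, f x ξ) = ∫ ξ in (0:ℝ)..y, ∫ x in ξ..y, f x ξ := by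
  have hsw : Continuous (fun p : ℝ × ℝ => f p.2 p.1) := hf.comp continuous_swap
  have hs1 : ∀ ξ, Continuous (fun x => f x ξ) := fun ξ =>
    hf.comp (continuous_id.prodMk continuous_const)
  have hA : Continuous (fun x : ℝ => ∫ ξ in (0:ℝ)..x, f x ξ) :=
    (intervalIntegral.continuous_parametric_primitive_of_continuous (f := f) (a₀ := 0)
      (μ := volume) hf).comp (continuous_id.prodMk continuous_id)
  have hB : Continuous (fun p : ℝ × ℝ => ∫ x in (0:ℝ)..p.2, f x p.1) :=
    intervalIntegral.continuous_parametric_primitive_of_continuous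
      (f := fun ξ x => f x ξ) (a₀ := 0) (μ := volume) hsw
  have hF : Continuous (fun p : ℝ × ℝ => ∫ x in p.2..p.1, f x p.2) := by
    have : (fun p : ℝ × ℝ => ∫ x in p.2..p.1, f x p.2) = fun p : ℝ × ℝ =>
        (∫ x in (0:ℝ)..p.1, f x p.2) - ∫ x in (0:ℝ)..p.2, f x p.2 := by
      funext p
      rw [intervalIntegral.integral_interval_sub_left] <;>
        exact (hs1 _).intervalIntegrable _ _
    rw [this]
    exact (hB.comp continuous_swap).sub (hB.comp (continuous_snd.prodMk continuous_snd))
  have hL : ∀ y, HasDerivAt (fun y => ∫ x in (0:ℝ)..y, ∫ ξ in (0:ℝ)..x, f x ξ)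
      (∫ ξ in (0:ℝ)..y, f y ξ) y := fun y => (hA.integral_hasStrictDerivAt 0 y).hasDerivAt
  have hR : ∀ y, HasDerivAt (fun y => ∫ ξ in (0:ℝ)..y, ∫ x in ξ..y, f x ξ)
      (∫ ξ in (0:ℝ)..y, f y ξ) y := fun y => by
    have := leib_aux (fun y ξ => ∫ x in ξ..y, f x ξ) f hF hf
      (fun t s => ((hs1 s).integral_hasStrictDerivAt s t).hasDerivAt) 0 y
    simpa using this
  have hc := is_const_of_deriv_eq_zero (f := fun y => (∫ x in (0:ℝ)..y, ∫ ξ in (0:ℝ)..x, f x ξ)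
      - ∫ ξ in (0:ℝ)..y, ∫ x in ξ..y, f x ξ)
      (fun y => ((hL y).sub (hR y)).differentiableAt)
      (fun y => ((hL y).sub (hR y)).deriv.trans (sub_self _)) y 0
  simpa [sub_eq_zero] using hc

/-- Dual Γ₄ identity from the proof of Lemma 1. -/
theorem dual_gamma4_identity
    (b : ℝ → ℝ) (hb : Continuous b)
    (K1 K2 : ℝ → ℝ → ℝ)
    (hK1 : ContDiff ℝ 1 (fun p : ℝ × ℝ => K1 p.1 p.2))
    (hK2 : ContDiff ℝ 1 (fun p : ℝ × ℝ => K2 p.1 p.2))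
    (hsym : ∀ x ξ : ℝ, K1 x ξ = K2 ξ x)
    (z : ℝ → ℝ) (hz : Continuous z) :
    (∫ x in (0:ℝ)..1, z x * b x *
        deriv
          (fun t => (∫ ξ in (0:ℝ)..t, K1 t ξ * z ξ)
            + ∫ ξ in t..(1:ℝ), K2 t ξ * z ξ) x)
      = (1/2) * (∫ x in (0:ℝ)..1, ∫ ξ in (0:ℝ)..x,
            z x * (b x * deriv (fun t => K1 t ξ) x
              + b ξ * deriv (fun s => K1 x s) ξ) * z ξ)
        + (1/2) * (∫ x in (0:ℝ)..1, ∫ ξ in x..(1:ℝ),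
            z x * (b x * deriv (fun t => K2 t ξ) x
              + b ξ * deriv (fun s => K2 x s) ξ) * z ξ) := by
  obtain rfl : K2 = fun x ξ => K1 ξ x := by
    funext x ξ
    exact (hsym ξ x).symm
  clear hsym hK2
  have hdiff : Differentiable ℝ (fun p : ℝ × ℝ => K1 p.1 p.2) := hK1.differentiable (by simp)
  have hcf := hK1.continuous_fderiv (by simp)
  have hK := hK1.continuous
  have hP : ∀ t s, HasDerivAt (fun t => K1 t s)
      (fderiv ℝ (fun p : ℝ × ℝ => K1 p.1 p.2) (t, s) (1, 0)) t := fun t s =>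
    HasFDerivAt.comp_hasDerivAt (f := fun t : ℝ => (t, s)) t (hdiff (t, s)).hasFDerivAt ((hasDerivAt_id t).prodMk (hasDerivAt_const t s))
  have hQ : ∀ t s, HasDerivAt (fun s => K1 t s)
      (fderiv ℝ (fun p : ℝ × ℝ => K1 p.1 p.2) (t, s) (0, 1)) s := fun t s =>
    HasFDerivAt.comp_hasDerivAt (f := fun s : ℝ => (t, s)) s (hdiff (t, s)).hasFDerivAt ((hasDerivAt_const s t).prodMk (hasDerivAt_id s))
  have hPc : Continuous (fun p : ℝ × ℝ =>
      fderiv ℝ (fun p : ℝ × ℝ => K1 p.1 p.2) (p.1, p.2) (1, 0)) := hcf.clm_apply continuous_const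
  have hQc : Continuous (fun p : ℝ × ℝ =>
      fderiv ℝ (fun p : ℝ × ℝ => K1 p.1 p.2) (p.1, p.2) (0, 1)) := hcf.clm_apply continuous_const
  generalize hPdef : (fun t s : ℝ => fderiv ℝ (fun p : ℝ × ℝ => K1 p.1 p.2) (t, s) (1, 0)) = P
  generalize hQdef : (fun t s : ℝ => fderiv ℝ (fun p : ℝ × ℝ => K1 p.1 p.2) (t, s) (0, 1)) = Q
  replace hP : ∀ t s, HasDerivAt (fun t => K1 t s) (P t s) t := by subst hPdef; exact hP
  replace hQ : ∀ t s, HasDerivAt (fun s => K1 t s) (Q t s) s := by subst hQdef; exact hQ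
  replace hPc : Continuous (fun p : ℝ × ℝ => P p.1 p.2) := by subst hPdef; exact hPc
  replace hQc : Continuous (fun p : ℝ × ℝ => Q p.1 p.2) := by subst hQdef; exact hQc
  clear hPdef hQdef
  have hQs : Continuous (fun p : ℝ × ℝ => Q p.2 p.1) := hQc.comp continuous_swap
  have hKs : Continuous (fun p : ℝ × ℝ => K1 p.2 p.1) := hK.comp continuous_swap
  have hz2 : Continuous (fun p : ℝ × ℝ => z p.2) := hz.comp continuous_snd
  have hz1 : Continuous (fun p : ℝ × ℝ => z p.1) := hz.comp continuous_fst
  have hb2 : Continuous (fun p : ℝ × ℝ => b p.2) := hb.comp continuous_snd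
  have hb1 : Continuous (fun p : ℝ × ℝ => b p.1) := hb.comp continuous_fst
  have hderiv : ∀ x, deriv (fun t => (∫ ξ in (0:ℝ)..t, K1 t ξ * z ξ)
      + ∫ ξ in t..(1:ℝ), K1 ξ t * z ξ) x
      = (∫ ξ in (0:ℝ)..x, P x ξ * z ξ) + ∫ ξ in x..(1:ℝ), Q ξ x * z ξ := by
    intro x
    have e1 := leib_aux (fun t ξ => K1 t ξ * z ξ) (fun t ξ => P t ξ * z ξ)
      (hK.mul hz2) (hPc.mul hz2) (fun t s => (hP t s).mul_const _) 0 x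
    have e2 := leib_aux (fun t ξ => K1 ξ t * z ξ) (fun t ξ => Q ξ t * z ξ)
      (hKs.mul hz2) (hQs.mul hz2) (fun t s => (hQ s t).mul_const _) 1 x
    have e3 := (e1.sub e2).deriv
    have : (fun t => (∫ ξ in (0:ℝ)..t, K1 t ξ * z ξ) + ∫ ξ in t..(1:ℝ), K1 ξ t * z ξ)
        = (fun t => ∫ ξ in (0:ℝ)..t, K1 t ξ * z ξ) - fun t => ∫ ξ in (1:ℝ)..t, K1 ξ t * z ξ := by
      funext t
      rw [Pi.sub_apply, intervalIntegral.integral_symm t 1, sub_neg_eq_add]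
    rw [this, e3, intervalIntegral.integral_symm x 1]
    ring
  simp only [hderiv, fun t s => (hP t s).deriv, fun t s => (hQ t s).deriv]
  -- the two continuous kernels
  have hf1 : Continuous (fun p : ℝ × ℝ => z p.1 * b p.1 * (P p.1 p.2 * z p.2)) :=
    (hz1.mul hb1).mul (hPc.mul hz2)
  have hf2 : Continuous (fun p : ℝ × ℝ => z p.2 * b p.2 * (Q p.1 p.2 * z p.1)) :=
    (hz2.mul hb2).mul (hQc.mul hz1)
  have hf3 : Continuous (fun p : ℝ × ℝ =>
      z p.2 * (b p.2 * Q p.1 p.2 + b p.1 * P p.1 p.2) * z p.1) :=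
    (hz2.mul ((hb2.mul hQc).add (hb1.mul hPc))).mul hz1
  have s2 := swap_aux (fun x ξ => z ξ * b ξ * (Q x ξ * z x)) hf2 1
  have s3 := swap_aux (fun x ξ => z ξ * (b ξ * Q x ξ + b x * P x ξ) * z x) hf3 1
  have tri : ∀ f : ℝ → ℝ → ℝ, Continuous (fun p : ℝ × ℝ => f p.1 p.2) →
      Continuous (fun x : ℝ => ∫ ξ in (0:ℝ)..x, f x ξ) := fun f hf =>
    (intervalIntegral.continuous_parametric_primitive_of_continuous (f := f) (a₀ := 0)
      (μ := volume) hf).comp (continuous_id.prodMk continuous_id)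
  have tri1 : Continuous (fun x : ℝ => ∫ ξ in x..(1:ℝ), z x * b x * (Q ξ x * z ξ)) := by
    have : Continuous (fun x : ℝ => ∫ ξ in (1:ℝ)..x, z x * b x * (Q ξ x * z ξ)) :=
      (intervalIntegral.continuous_parametric_primitive_of_continuous
        (f := fun x ξ => z x * b x * (Q ξ x * z ξ)) (a₀ := 1)
        (μ := volume) ((hz1.mul hb1).mul (hQs.mul hz2))).comp (continuous_id.prodMk continuous_id)
    simp only [fun x : ℝ => intervalIntegral.integral_symm (f := fun ξ => z x * b x * (Q ξ x * z ξ)) (μ := volume) 1 x]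
    exact this.neg
  have t1 := tri (fun x ξ => z x * b x * (P x ξ * z ξ)) hf1
  have t2 := tri (fun x ξ => z ξ * b ξ * (Q x ξ * z x)) hf2
  simp only [mul_add (z _ * b _), ← intervalIntegral.integral_const_mul (z _ * b _)]
  rw [intervalIntegral.integral_add (t1.intervalIntegrable _ _) (tri1.intervalIntegrable _ _),
    ← s2, ← s3, ← intervalIntegral.integral_add (t1.intervalIntegrable _ _)
      (t2.intervalIntegrable _ _)]
  have e : ∀ x, (∫ ξ in (0:ℝ)..x, z x * b x * (P x ξ * z ξ))
      + (∫ ξ in (0:ℝ)..x, z ξ * b ξ * (Q x ξ * z x))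
      = ∫ ξ in (0:ℝ)..x, z x * (b x * P x ξ + b ξ * Q x ξ) * z ξ := by
    intro x
    rw [← intervalIntegral.integral_add]
    · congr 1; funext ξ; ring
    · exact (hf1.comp (continuous_const.prodMk continuous_id)).intervalIntegrable _ _
    · exact (hf2.comp (continuous_const.prodMk continuous_id)).intervalIntegrable _ _
  have e' : ∀ x ξ, z ξ * (b ξ * Q x ξ + b x * P x ξ) * z x
      = z x * (b x * P x ξ + b ξ * Q x ξ) * z ξ := fun x ξ => by ring
  simp only [e, e']
  ring
end

section
/- (Primal Γ1 estimate from the proof of Lemma 2.) Let a, N : [0,1] → ℝ be twice continuously differentiable with a(x)N(x) ≥ αε1 on [0,1] for some α, ε1 > 0, and let w : [0,1] → ℝ be twice continuously differentiable with w'(0) = 0. Then ∫₀¹ w''(x)·a(x)·N(x)·w(x) dx ≤ (1/2)∫₀¹ w(x)²·[ (a·N)''(x) − (π²/2)αε1 ] dx + (π²/2)αε1·w(0)·∫₀¹ w(x) dx − (1/2)(a'(1)N(1) + a(1)N'(1))·w(1)² + (1/2)(a'(0)N(0) + a(0)N'(0) − (π²/2)αε1)·w(0)² + w'(1)·a(1)·N(1)·w(1).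 -/
open MeasureTheory Real

lemma wirt_aux (v v' : ℝ → ℝ) (hv : ∀ x, HasDerivAt v (v' x) x) (hc : Continuous v')
    (h0 : v 0 = 0) (k : ℝ) (hk0 : 0 < k) (hk : k < π / 2) :
    k ^ 2 * (∫ x in (0:ℝ)..1, (v x) ^ 2) ≤ ∫ x in (0:ℝ)..1, (v' x) ^ 2 := by
  have hvc : Continuous v := continuous_iff_continuousAt.2 fun x => (hv x).continuousAt
  have hcos : ∀ x ∈ Set.uIcc (0:ℝ) 1, cos (k * (1 - x)) ≠ 0 := by
    intro x hx
    rw [Set.uIcc_of_le zero_le_one] at hx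
    apply ne_of_gt
    apply cos_pos_of_mem_Ioo
    constructor
    · nlinarith [hx.1, hx.2, pi_pos]
    · nlinarith [hx.1, hx.2, pi_pos]
  have htc : ContinuousOn (fun x => tan (k * (1 - x))) (Set.uIcc (0:ℝ) 1) := by
    have : (fun x => tan (k * (1 - x))) = fun x => sin (k * (1 - x)) / cos (k * (1 - x)) := by
      funext x; exact tan_eq_sin_div_cos _
    rw [this]
    exact ContinuousOn.div (by fun_prop) (by fun_prop) hcos
  let D : ℝ → ℝ := fun x => -k ^ 2 * (1 + tan (k * (1 - x)) ^ 2) * v x ^ 2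
      + k * tan (k * (1 - x)) * (2 * v x * v' x)
  have hD : ∀ x ∈ Set.uIcc (0:ℝ) 1,
      HasDerivAt (fun x => k * tan (k * (1 - x)) * v x ^ 2) (D x) x := by
    intro x hx
    have h1 : HasDerivAt (fun x : ℝ => k * (1 - x)) (-k) x := by
      simpa using ((hasDerivAt_id x).const_sub 1).const_mul k
    have h2 := (hasDerivAt_tan (hcos x hx)).comp x h1
    have h3 := (h2.const_mul k).mul ((hv x).pow 2)
    refine h3.congr_deriv ?_
    have h4 : 1 / cos (k * (1 - x)) ^ 2 = 1 + tan (k * (1 - x)) ^ 2 := by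
      rw [tan_eq_sin_div_cos]
      have := hcos x hx
      field_simp
      linarith [sin_sq_add_cos_sq (k * (1 - x))]
    rw [h4]
    simp only [D, Function.comp, Pi.pow_apply]
    push_cast
    ring
  have hDc : ContinuousOn D (Set.uIcc (0:ℝ) 1) := by
    have := hvc.continuousOn (s := Set.uIcc (0:ℝ) 1)
    have := hc.continuousOn (s := Set.uIcc (0:ℝ) 1)
    simp only [D]
    fun_prop
  have hint := intervalIntegral.integral_eq_sub_of_hasDerivAt hD hDc.intervalIntegrable
  simp [h0] at hint
  have i1 : IntervalIntegrable (fun x => k ^ 2 * v x ^ 2) volume 0 1 :=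
    Continuous.intervalIntegrable (by fun_prop) _ _
  have i2 : IntervalIntegrable (fun x => v' x ^ 2) volume 0 1 :=
    Continuous.intervalIntegrable (by fun_prop) _ _
  have key : ∫ x in (0:ℝ)..1, (k ^ 2 * v x ^ 2 + D x) ≤ ∫ x in (0:ℝ)..1, v' x ^ 2 := by
    apply intervalIntegral.integral_mono_on zero_le_one (i1.add hDc.intervalIntegrable) i2
    intro x _
    simp only [D]
    nlinarith [sq_nonneg (v' x - k * tan (k * (1 - x)) * v x)]
  rw [intervalIntegral.integral_add i1 hDc.intervalIntegrable, hint,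
    intervalIntegral.integral_const_mul] at key
  linarith

lemma wirt (v v' : ℝ → ℝ) (hv : ∀ x, HasDerivAt v (v' x) x) (hc : Continuous v')
    (h0 : v 0 = 0) :
    (π / 2) ^ 2 * (∫ x in (0:ℝ)..1, (v x) ^ 2) ≤ ∫ x in (0:ℝ)..1, (v' x) ^ 2 := by
  have ht : Filter.Tendsto (fun k : ℝ => k ^ 2 * (∫ x in (0:ℝ)..1, (v x) ^ 2))
      (nhdsWithin (π / 2) (Set.Iio (π / 2)))
      (nhds ((π / 2) ^ 2 * (∫ x in (0:ℝ)..1, (v x) ^ 2))) :=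
    (Continuous.tendsto (by fun_prop) _).mono_left nhdsWithin_le_nhds
  refine le_of_tendsto ht ?_
  filter_upwards [Ioo_mem_nhdsLT (show (0:ℝ) < π / 2 by positivity)] with k hk
  exact wirt_aux v v' hv hc h0 k hk.1 hk.2

lemma c2_facts (f : ℝ → ℝ) (hf : ContDiff ℝ 2 f) :
    (∀ x, HasDerivAt f (deriv f x) x) ∧ (∀ x, HasDerivAt (deriv f) (iteratedDeriv 2 f x) x)
    ∧ Continuous f ∧ Continuous (deriv f) ∧ Continuous (iteratedDeriv 2 f) := by
  have h1 : ContDiff ℝ 1 (deriv f) := by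
    have : ContDiff ℝ (1 + 1) f := by simpa [one_add_one_eq_two] using hf
    exact (contDiff_succ_iff_deriv.1 this).2.2
  refine ⟨fun x => (hf.differentiable (by norm_num) x).hasDerivAt, fun x => ?_,
    hf.continuous, h1.continuous, hf.continuous_iteratedDeriv 2 le_rfl⟩
  rw [iteratedDeriv_succ, iteratedDeriv_one]
  exact (h1.differentiable (by norm_num) x).hasDerivAt

/-- Primal Γ₁ estimate from the proof of Lemma 2. -/
theorem primal_gamma1_estimate
    (a N : ℝ → ℝ) (ha : ContDiff ℝ 2 a) (hN : ContDiff ℝ 2 N)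
    (α ε1 : ℝ) (hα : 0 < α) (hε1 : 0 < ε1)
    (haN : ∀ x ∈ Set.Icc (0:ℝ) 1, α * ε1 ≤ a x * N x)
    (w : ℝ → ℝ) (hw : ContDiff ℝ 2 w) (hw0 : deriv w 0 = 0) :
    (∫ x in (0:ℝ)..1, iteratedDeriv 2 w x * a x * N x * w x)
      ≤ (1/2) * (∫ x in (0:ℝ)..1,
            (w x) ^ 2 * (iteratedDeriv 2 (fun t => a t * N t) x
              - π ^ 2 / 2 * α * ε1))
        + π ^ 2 / 2 * α * ε1 * w 0 * (∫ x in (0:ℝ)..1, w x)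
        - (1/2) * (deriv a 1 * N 1 + a 1 * deriv N 1) * (w 1) ^ 2
        + (1/2) * (deriv a 0 * N 0 + a 0 * deriv N 0 - π ^ 2 / 2 * α * ε1)
            * (w 0) ^ 2
        + deriv w 1 * a 1 * N 1 * w 1 := by
  have hp : ContDiff ℝ 2 (fun t => a t * N t) := ha.mul hN
  have hdp : ∀ x, deriv (fun t => a t * N t) x = deriv a x * N x + a x * deriv N x := fun x =>
    (((c2_facts a ha).1 x).mul ((c2_facts N hN).1 x)).deriv
  rw [← hdp, ← hdp]
  have e1 : ∀ x, iteratedDeriv 2 w x * a x * N x * w x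
      = iteratedDeriv 2 w x * (a x * N x) * w x := fun x => by ring
  have e2 : deriv w 1 * a 1 * N 1 * w 1 = deriv w 1 * (a 1 * N 1) * w 1 := by ring
  simp only [e1]
  rw [e2]
  obtain ⟨p, hpe⟩ : ∃ p : ℝ → ℝ, p = fun t => a t * N t := ⟨_, rfl⟩
  have hpx : ∀ x, a x * N x = p x := fun x => by rw [hpe]
  rw [← hpe] at hp ⊢
  simp only [hpx] at haN ⊢
  obtain ⟨p1, p2, p3, p4, p5⟩ := c2_facts p hp
  obtain ⟨w1, w2, w3, w4, w5⟩ := c2_facts w hw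
  have W := wirt (fun x => w x - w 0) (deriv w) (fun x => (w1 x).sub_const _) w4 (by simp)
  have hG : ∀ x ∈ Set.uIcc (0:ℝ) 1,
      HasDerivAt (fun x => deriv w x * p x * w x - (1/2) * (deriv p x * w x ^ 2))
      (iteratedDeriv 2 w x * p x * w x + p x * deriv w x ^ 2
        - (1/2) * (w x ^ 2 * iteratedDeriv 2 p x)) x := by
    intro x _
    have h := (((w2 x).mul (p1 x)).mul (w1 x)).sub
      (((p2 x).mul ((w1 x).pow 2)).const_mul (1/2))
    refine h.congr_deriv ?_
    simp only [Pi.pow_apply, Pi.mul_apply]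
    push_cast
    ring
  have ii : ∀ f : ℝ → ℝ, Continuous f → IntervalIntegrable f volume 0 1 :=
    fun f hf => hf.intervalIntegrable _ _
  have I := intervalIntegral.integral_eq_sub_of_hasDerivAt hG (ii _ (by fun_prop))
  rw [intervalIntegral.integral_sub (ii _ (by fun_prop)) (ii _ (by fun_prop)),
    intervalIntegral.integral_add (ii _ (by fun_prop)) (ii _ (by fun_prop)),
    intervalIntegral.integral_const_mul] at I
  have M : ∫ x in (0:ℝ)..1, (α * ε1) * deriv w x ^ 2 ≤ ∫ x in (0:ℝ)..1, p x * deriv w x ^ 2 := by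
    apply intervalIntegral.integral_mono_on zero_le_one (ii _ (by fun_prop)) (ii _ (by fun_prop))
    intro x hx
    exact mul_le_mul_of_nonneg_right (haN x hx) (sq_nonneg _)
  rw [intervalIntegral.integral_const_mul] at M
  have S : ∫ x in (0:ℝ)..1, (w x - w 0) ^ 2
      = (∫ x in (0:ℝ)..1, w x ^ 2) - 2 * w 0 * (∫ x in (0:ℝ)..1, w x) + w 0 ^ 2 := by
    have : ∀ x, (w x - w 0) ^ 2 = w x ^ 2 - 2 * w 0 * w x + w 0 ^ 2 := fun x => by ring
    simp only [this]
    rw [intervalIntegral.integral_add (ii _ (by fun_prop)) (ii _ (by fun_prop)),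
      intervalIntegral.integral_sub (ii _ (by fun_prop)) (ii _ (by fun_prop)),
      intervalIntegral.integral_const_mul]
    simp
  have T : ∫ x in (0:ℝ)..1, w x ^ 2 * (iteratedDeriv 2 p x - π ^ 2 / 2 * α * ε1)
      = (∫ x in (0:ℝ)..1, w x ^ 2 * iteratedDeriv 2 p x)
        - π ^ 2 / 2 * α * ε1 * ∫ x in (0:ℝ)..1, w x ^ 2 := by
    rw [← intervalIntegral.integral_const_mul,
      ← intervalIntegral.integral_sub (ii _ (by fun_prop)) (ii _ (by fun_prop))]
    congr 1; funext x; ring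
  rw [S] at W
  rw [T]
  have W' := mul_le_mul_of_nonneg_left W (mul_pos hα hε1).le
  rw [hw0] at I
  linarith
end
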